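/- Fix d > 0 and for every integer k ≥ 1 let Ω_k = {(x₁, x') ∈ ℝ × ℝ^{N−1} : k·|x'| < d/2 − |x₁|} be the double circular cone of height d and equatorial radius d/(2k). Then each Ω_k is an open bounded convex set with diam(Ω_k) = d, the sets Ω_k converge in Hausdorff distance to the segment {(x₁,0) : |x₁| ≤ d/2} of length d, and lim_{k→∞} μ_p(Ω_k) = λ_p(B), where B is any open ball of radius d/2 in ℝ^N. In particular the inequality μ_p(Ω) < λ_p(B)(diam(B)/diam(Ω))^p for convex sets is sharp and equality is never attained. -/

import Mathlib

open MeasureTheory Metric Set Real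

noncomputable section

/-- The Rayleigh quotient `(∫_Ω |∇v|^p) / (∫_Ω |v|^q)^(p/q)`, where the gradient is
understood as the (a.e. defined) Fréchet derivative. -/
def rayleighQuot {N : ℕ} (p q : ℝ) (Ω : Set (EuclideanSpace ℝ (Fin N)))
    (v : EuclideanSpace ℝ (Fin N) → ℝ) : ℝ :=
  (∫ x in Ω, ‖fderiv ℝ v x‖ ^ p) / (∫ x in Ω, |v x| ^ q) ^ (p / q)

/-- The first (generalized) Dirichlet eigenvalue `λ_{p,q}(Ω)`: infimum of the Rayleigh
quotient over nontrivial smooth functions compactly supported in `Ω`. -/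
def lambdaPQ {N : ℕ} (p q : ℝ) (Ω : Set (EuclideanSpace ℝ (Fin N))) : ℝ :=
  sInf { R : ℝ | ∃ v : EuclideanSpace ℝ (Fin N) → ℝ,
    ContDiff ℝ (⊤ : ℕ∞) v ∧ HasCompactSupport v ∧ tsupport v ⊆ Ω ∧
    (∃ x ∈ Ω, v x ≠ 0) ∧ R = rayleighQuot p q Ω v }

/-- The first nontrivial (generalized) Neumann eigenvalue `μ_{p,q}(Ω)`: infimum of the
Rayleigh quotient over nontrivial Lipschitz functions on the closure of `Ω` satisfying
the constraint `∫_Ω |v|^(q-2) v = 0`. -/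
def muPQ {N : ℕ} (p q : ℝ) (Ω : Set (EuclideanSpace ℝ (Fin N))) : ℝ :=
  sInf { R : ℝ | ∃ v : EuclideanSpace ℝ (Fin N) → ℝ, ∃ K : NNReal,
    LipschitzOnWith K v (closure Ω) ∧ (∃ x ∈ Ω, v x ≠ 0) ∧
    (∫ x in Ω, |v x| ^ (q - 2) * v x) = 0 ∧ R = rayleighQuot p q Ω v }

/-- `q` is below the critical Sobolev exponent `p* = Np/(N-p)` (with `p* = ∞` if `p ≥ N`). -/
def ltCritical (N : ℕ) (p q : ℝ) : Prop := p < N → q < N * p / (N - p)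

end

/-! Upper bound. Let `x₀`, `x₁` in the closure of the convex set `Ω` be at distance `d = diam Ω`,
and let `U` be an almost optimal decreasing radial Dirichlet profile of a ball of radius `d / 2`.
Compose `U` with the distance to `x₀`, shrunk by a factor `κ < 1` but raised to the coordinate
along `x₁ - x₀` wherever that is larger, so that the result vanishes beyond the hyperplane
half-way to `x₁`; do the same from `x₁`. Since `Ω` is star-shaped about `x₀` and `U` decreases,
the one-dimensional inequality for `U` survives the truncation of each ray by `Ω`. The gradient
gains the factor `κ` on the cone of directions where the distance is not raised, so the Rayleigh
quotient falls strictly below the Dirichlet eigenvalue of the ball. The two functions are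
disjointly supported, hence a suitable linear combination is admissible in the Neumann problem.

Lower bound on the double cone `κ |x'| < R - |x₁|` of `ℝⁿ⁺¹`. On each half, let `r` be the axial
distance to the apex and `z` the transversal part relative to the radius `r / κ`. The volume
becomes a multiple of `rⁿ dr dz`, whose radial part is that of `ℝⁿ⁺¹`, so the Dirichlet eigenvalue
of the ball of radius `R` controls `w(r, z) - w(R, z)`, while a Poincaré inequality on the discs,
of radius at most `R / κ`, controls `w(r, z) - w(r, z₀)`. Together they bound `w(r, z) - w(R, z₀)`
at the cost of a factor which tends to `1` as `κ → ∞`. The equatorial value `w(R, z₀)` is common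
to both halves, and the Neumann condition on `w` says that subtracting a constant does not
decrease `∫ |w|ᵖ`. -/

section NeumannDirichletComparison

open Filter Topology ENNReal NNReal

section Calculus

variable {E : Type*} [NormedAddCommGroup E] [NormedSpace ℝ E]

lemma norm_fderiv_comp_le_of_lip {U : ℝ → ℝ} {η : E → ℝ} {x : E} {L : ℝ} (hL : 0 ≤ L)
    (hU : DifferentiableAt ℝ U (η x)) (hη : ∀ᶠ y in 𝓝 x, |η y - η x| ≤ L * ‖y - x‖) :
    ‖fderiv ℝ (fun y => U (η y)) x‖ ≤ |deriv U (η x)| * L := by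
  have η_tendsto : Tendsto η (𝓝 x) (𝓝 (η x)) := by
    rw [tendsto_iff_norm_sub_tendsto_zero]
    refine squeeze_zero' (.of_forall fun _ => norm_nonneg _) hη ?_
    exact Continuous.tendsto' (by fun_prop) _ _ (by simp)
  have le_add (ε : ℝ) (hε : 0 < ε) :
      ‖fderiv ℝ (fun y => U (η y)) x‖ ≤ (|deriv U (η x)| + ε) * L := by
    refine norm_fderiv_le_of_lip' ℝ (by positivity) ?_
    filter_upwards [η_tendsto.eventually (hU.hasDerivAt.isLittleO.def hε), hη] with y hUy hηy
    simp only [smul_eq_mul, Real.norm_eq_abs] at hUy ⊢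
    calc |U (η y) - U (η x)|
        = |(U (η y) - U (η x) - (η y - η x) * deriv U (η x)) + (η y - η x) * deriv U (η x)| := by
          rw [sub_add_cancel]
      _ ≤ ε * |η y - η x| + |η y - η x| * |deriv U (η x)| :=
          (abs_add_le _ _).trans (add_le_add hUy (abs_mul _ _).le)
      _ = (|deriv U (η x)| + ε) * |η y - η x| := by ring
      _ ≤ (|deriv U (η x)| + ε) * (L * ‖y - x‖) := by gcongr
      _ = _ := by ring
  have tendsto_bound : Tendsto (fun ε => (|deriv U (η x)| + ε) * L) (𝓝[>] 0)
      (𝓝 (|deriv U (η x)| * L)) := by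
    exact tendsto_nhdsWithin_of_tendsto_nhds (Continuous.tendsto' (by fun_prop) _ _ (by simp))
  exact ge_of_tendsto tendsto_bound (eventually_nhdsWithin_of_forall le_add)

end Calculus

section Mollification

open scoped Convolution

variable {E : Type*} [NormedAddCommGroup E] [InnerProductSpace ℝ E] [FiniteDimensional ℝ E]

/-- A bump function supported in the ball of radius `1 / (n + 1)`, used as a mollifier. -/
noncomputable def mollifier (E : Type*) [NormedAddCommGroup E] (n : ℕ) :
    ContDiffBump (0 : E) where
  rIn := 1 / (n + 1 : ℝ) / 2
  rOut := 1 / (n + 1 : ℝ)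
  rIn_pos := by positivity
  rIn_lt_rOut := half_lt_self (by positivity)

variable [MeasurableSpace E] [BorelSpace E]

/-- The convolution of `v` with the normalized bump function of radius `1 / (n + 1)`. -/
noncomputable def mollify (v : E → ℝ) (n : ℕ) : E → ℝ :=
  (mollifier E n).normed volume ⋆[ContinuousLinearMap.lsmul ℝ ℝ, volume] v

lemma contDiff_mollify {v : E → ℝ} (hv : LocallyIntegrable v) (n : ℕ) :
    ContDiff ℝ (⊤ : ℕ∞) (mollify v n) :=
  (mollifier E n).hasCompactSupport_normed.contDiff_convolution_left _
    (mollifier E n).contDiff_normed hv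

lemma integrable_mollifier_mul {v : E → ℝ} (hv : Continuous v) (n : ℕ) (x : E) :
    Integrable fun t => (mollifier E n).normed volume t * v (x - t) :=
  ((mollifier E n).continuous_normed.mul (by fun_prop)).integrable_of_hasCompactSupport
    (mollifier E n).hasCompactSupport_normed.mul_right

lemma mollify_eq_zero {v : E → ℝ} {n : ℕ} {x : E}
    (hx : ∀ y ∈ ball x (1 / (n + 1 : ℝ)), v y = 0) : mollify v n x = 0 := by
  have hvx : v x = 0 := hx x (mem_ball_self (by positivity))
  refine ((mollifier E n).normed_convolution_eq_right fun y hy => ?_).trans hvx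
  rw [hvx, hx y hy]

lemma tsupport_mollify_subset (v : E → ℝ) (n : ℕ) :
    tsupport (mollify v n) ⊆ cthickening (1 / (n + 1 : ℝ)) (tsupport v) := by
  refine closure_minimal (fun x hx => ?_) isClosed_cthickening
  by_contra hfar
  refine hx (mollify_eq_zero fun y hy => image_eq_zero_of_notMem_tsupport fun hyv => hfar ?_)
  exact mem_cthickening_of_dist_le x y _ _ hyv (mem_ball'.1 hy).le

variable {v : E → ℝ} {K : ℝ≥0}

lemma abs_mollifier_mul_sub_le (hv : LipschitzWith K v) (n : ℕ) (t y z : E) :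
    |(mollifier E n).normed volume t * v (y - t) - (mollifier E n).normed volume t * v (z - t)|
      ≤ (mollifier E n).normed volume t * (K * dist y z) := by
  have hφ := (mollifier E n).nonneg_normed (μ := volume) t
  rw [← mul_sub, abs_mul, abs_of_nonneg hφ, ← Real.dist_eq, ← dist_sub_right y z t]
  exact mul_le_mul_of_nonneg_left (hv.dist_le_mul _ _) hφ

lemma lipschitzWith_mollify (hv : LipschitzWith K v) (n : ℕ) : LipschitzWith K (mollify v n) := by
  refine .of_dist_le_mul fun y z => ?_
  have hint := integrable_mollifier_mul hv.continuous n
  calc dist (mollify v n y) (mollify v n z)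
      = |∫ t, ((mollifier E n).normed volume t * v (y - t) -
          (mollifier E n).normed volume t * v (z - t))| := by
        rw [integral_sub (hint y) (hint z)]; rfl
    _ ≤ ∫ t, |(mollifier E n).normed volume t * v (y - t) -
          (mollifier E n).normed volume t * v (z - t)| := abs_integral_le_integral_abs
    _ ≤ ∫ t, (mollifier E n).normed volume t * (K * dist y z) :=
        integral_mono ((hint y).sub (hint z)).abs ((mollifier E n).integrable_normed.mul_const _)
          fun t => abs_mollifier_mul_sub_le hv n t y z
    _ = K * dist y z := by rw [integral_mul_const, (mollifier E n).integral_normed, one_mul]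

lemma dist_mollify_le (hv : LipschitzWith K v) (n : ℕ) (x : E) :
    dist (mollify v n x) (v x) ≤ K * (1 / (n + 1 : ℝ)) := by
  refine (mollifier E n).dist_normed_convolution_le hv.continuous.aestronglyMeasurable
    fun y hy => (hv.dist_le_mul y x).trans ?_
  gcongr
  exact (mem_ball.1 hy).le

lemma tendsto_mollify (hv : LipschitzWith K v) (x : E) :
    Tendsto (fun n => mollify v n x) atTop (𝓝 (v x)) := by
  refine tendsto_iff_dist_tendsto_zero.2 (squeeze_zero (fun _ => dist_nonneg)
    (fun n => dist_mollify_le hv n x) ?_)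
  simpa using tendsto_one_div_add_atTop_nhds_zero_nat.const_mul (K : ℝ)

lemma hasFDerivAt_mollify (hv : LipschitzWith K v) (n : ℕ) (x : E) :
    HasFDerivAt (mollify v n) (((mollifier E n).normed volume
      ⋆[ContinuousLinearMap.lsmul ℝ ℝ, volume] fderiv ℝ v) x) x := by
  have hdiff : ∀ᵐ t : E, DifferentiableAt ℝ v (x - t) :=
    (Measure.measurePreserving_sub_left volume x).quasiMeasurePreserving.ae hv.ae_differentiableAt
  refine (hasFDerivAt_integral_of_dominated_loc_of_lip (s := univ)
    (F := fun x t => (mollifier E n).normed volume t * v (x - t))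
    (F' := fun t => (mollifier E n).normed volume t • fderiv ℝ v (x - t))
    (bound := fun t => (mollifier E n).normed volume t * K) univ_mem
    (.of_forall fun y => (integrable_mollifier_mul hv.continuous n y).aestronglyMeasurable)
    (integrable_mollifier_mul hv.continuous n x) ?_ (.of_forall fun t => ?_)
    ((mollifier E n).integrable_normed.mul_const _) ?_).2
  · exact (mollifier E n).continuous_normed.aestronglyMeasurable.smul
      ((measurable_fderiv ℝ v).comp (by fun_prop)).aestronglyMeasurable
  · refine .of_dist_le_mul fun y _ z _ => (abs_mollifier_mul_sub_le hv n t y z).trans_eq ?_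
    have hφ := (mollifier E n).nonneg_normed (μ := volume) t
    rw [Real.coe_nnabs, abs_of_nonneg (by positivity), mul_assoc]
  · filter_upwards [hdiff] with t ht
    exact (ht.hasFDerivAt.comp x ((hasFDerivAt_id x).sub_const t)).const_mul _

lemma ae_tendsto_fderiv_mollify (hv : LipschitzWith K v) :
    ∀ᵐ x, Tendsto (fun n => fderiv ℝ (mollify v n) x) atTop (𝓝 (fderiv ℝ v x)) := by
  have hloc : LocallyIntegrable (fderiv ℝ v) :=
    (locallyIntegrable_const (K : ℝ)).mono (measurable_fderiv ℝ v).aestronglyMeasurable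
      (.of_forall fun x => by simpa using norm_fderiv_le_of_lipschitz ℝ hv)
  have hrad : ∀ᶠ n in atTop, (mollifier E n).rOut ≤ 2 * (mollifier E n).rIn :=
    .of_forall fun n => (mul_div_cancel₀ _ two_ne_zero).ge
  filter_upwards [ContDiffBump.ae_convolution_tendsto_right_of_locallyIntegrable (l := atTop)
    (φ := mollifier E) tendsto_one_div_add_atTop_nhds_zero_nat hrad hloc] with x hx
  simpa only [(hasFDerivAt_mollify hv _ x).fderiv] using hx

end Mollification

section PowerIntegrals

variable {α F : Type*} [MeasurableSpace α] {μ : Measure α} [NormedAddCommGroup F] {p C : ℝ}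

lemma enorm_rpow_eq_ofReal (a : F) (hp : 0 ≤ p) : ‖a‖ₑ ^ p = ENNReal.ofReal (‖a‖ ^ p) := by
  rw [← ofReal_norm, ENNReal.ofReal_rpow_of_nonneg (norm_nonneg _) hp]

lemma integral_norm_rpow_eq_toReal {g : α → F} (hp : 0 ≤ p) (hg : AEStronglyMeasurable g μ) :
    ∫ x, ‖g x‖ ^ p ∂μ = (∫⁻ x, ‖g x‖ₑ ^ p ∂μ).toReal := by
  rw [integral_eq_lintegral_of_nonneg_ae (.of_forall fun x => by positivity)
    (hg.norm.aemeasurable.pow_const p).aestronglyMeasurable]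
  simp_rw [enorm_rpow_eq_ofReal _ hp]

lemma enorm_rpow_le_of_norm_le {a : F} (hp : 0 ≤ p) (ha : ‖a‖ ≤ C) :
    ‖a‖ₑ ^ p ≤ ENNReal.ofReal C ^ p := by
  rw [← ofReal_norm]
  gcongr

lemma lintegral_const_rpow_ne_top (hp : 0 ≤ p) (hμ : μ univ ≠ ⊤) :
    ∫⁻ _, ENNReal.ofReal C ^ p ∂μ ≠ ⊤ := by
  rw [lintegral_const]
  exact ENNReal.mul_ne_top (ENNReal.rpow_ne_top_of_nonneg hp ENNReal.ofReal_ne_top) hμ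

lemma lintegral_enorm_rpow_ne_top {g : α → F} (hp : 0 ≤ p) (hμ : μ univ ≠ ⊤)
    (hC : ∀ᵐ x ∂μ, ‖g x‖ ≤ C) : ∫⁻ x, ‖g x‖ₑ ^ p ∂μ ≠ ⊤ :=
  ne_top_of_le_ne_top (lintegral_const_rpow_ne_top hp hμ)
    (lintegral_mono_ae (hC.mono fun _ => enorm_rpow_le_of_norm_le hp))

lemma tendsto_lintegral_enorm_rpow {g : ℕ → α → F} {g' : α → F} (hp : 0 ≤ p) (hμ : μ univ ≠ ⊤)
    (hg : ∀ n, AEStronglyMeasurable (g n) μ) (hC : ∀ n, ∀ᵐ x ∂μ, ‖g n x‖ ≤ C)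
    (hlim : ∀ᵐ x ∂μ, Tendsto (fun n => g n x) atTop (𝓝 (g' x))) :
    Tendsto (fun n => ∫⁻ x, ‖g n x‖ₑ ^ p ∂μ) atTop (𝓝 (∫⁻ x, ‖g' x‖ₑ ^ p ∂μ)) :=
  tendsto_lintegral_of_dominated_convergence' _ (fun n => (hg n).enorm.pow_const p)
    (fun n => (hC n).mono fun _ => enorm_rpow_le_of_norm_le hp)
    (lintegral_const_rpow_ne_top hp hμ)
    (hlim.mono fun _ hx => (ENNReal.continuous_rpow_const.tendsto _).comp hx.enorm)

lemma setLIntegral_enorm_rpow_eq_lintegral {g : α → F} {s : Set α} (hp : 0 < p)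
    (hg : Function.support g ⊆ s) : ∫⁻ x in s, ‖g x‖ₑ ^ p ∂μ = ∫⁻ x, ‖g x‖ₑ ^ p ∂μ :=
  setLIntegral_eq_of_support_subset fun x hx => hg fun h0 => hx (by simp [h0, hp])

lemma lintegral_enorm_rpow_ne_top_of_hasCompactSupport [TopologicalSpace α]
    [IsFiniteMeasureOnCompacts μ] {g : α → F} (hp : 0 < p) (hg : Continuous g)
    (hcs : HasCompactSupport g) : ∫⁻ x, ‖g x‖ₑ ^ p ∂μ ≠ ⊤ := by
  obtain ⟨C, hC⟩ := hcs.exists_bound_of_continuous hg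
  rw [← setLIntegral_enorm_rpow_eq_lintegral hp (subset_tsupport g)]
  exact lintegral_enorm_rpow_ne_top hp.le
    (by simpa using hcs.isCompact.measure_ne_top) (.of_forall hC)

end PowerIntegrals

section RadialMeasure

/-- The measure `rⁿ dr` on the positive half-line, seen as a measure on `ℝ`: it is the radial part
of the Lebesgue measure of `ℝ^(n+1)` in polar coordinates, and describes the volume of cones. -/
noncomputable def radialMeasure (n : ℕ) : Measure ℝ :=
  (volume.restrict (Ioi 0)).withDensity fun r => ENNReal.ofReal (r ^ n)

instance (n : ℕ) : SFinite (radialMeasure n) :=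
  inferInstanceAs (SFinite (Measure.withDensity _ _))

variable {n : ℕ}

lemma lintegral_radialMeasure (G : ℝ → ℝ≥0∞) :
    ∫⁻ r, G r ∂radialMeasure n = ∫⁻ r in Ioi 0, ENNReal.ofReal (r ^ n) * G r := by
  rw [radialMeasure, lintegral_withDensity_eq_lintegral_mul_non_measurable _ (by fun_prop)
    (.of_forall fun _ => ENNReal.ofReal_lt_top)]
  rfl

lemma ae_radialMeasure_pos : ∀ᵐ r ∂radialMeasure n, 0 < r :=
  (withDensity_absolutelyContinuous _ _).ae_le (ae_restrict_mem measurableSet_Ioi)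

lemma radialMeasure_Iio_ne_top (n : ℕ) (ρ : ℝ) : radialMeasure n (Iio ρ) ≠ ⊤ := by
  rw [radialMeasure, withDensity_apply _ measurableSet_Iio, Measure.restrict_restrict
    measurableSet_Iio, Iio_inter_Ioi]
  refine (IntegrableOn.setLIntegral_lt_top ?_).ne
  exact ((continuous_pow n).integrableOn_Icc).mono_set Ioo_subset_Icc_self

lemma lintegral_radialMeasure_eq_mul_comp_mul (G : ℝ → ℝ≥0∞) {b : ℝ} (hb : 0 < b) :
    ∫⁻ r, G r ∂radialMeasure n
      = ENNReal.ofReal (b ^ (n + 1)) * ∫⁻ r, G (b * r) ∂radialMeasure n := by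
  have hemb : MeasurableEmbedding (b * · : ℝ → ℝ) :=
    (Homeomorph.mulLeft₀ b hb.ne').measurableEmbedding
  set g : ℝ → ℝ≥0∞ := (Ioi 0).indicator fun r => ENNReal.ofReal (r ^ n) * G r with hg
  have hcomp : (fun r => g (b * r)) = (Ioi 0).indicator fun r =>
      ENNReal.ofReal (b ^ n) * (ENNReal.ofReal (r ^ n) * G (b * r)) := by
    ext r
    simp only [hg, indicator, mem_Ioi, mul_pos_iff_of_pos_left hb, mul_pow,
      ENNReal.ofReal_mul (pow_pos hb n).le, mul_assoc]
  calc ∫⁻ r, G r ∂radialMeasure n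
      = ∫⁻ r, g r := by rw [lintegral_radialMeasure, lintegral_indicator measurableSet_Ioi]
    _ = ENNReal.ofReal b * ∫⁻ r, g (b * r) := by
        conv_lhs => rw [← Real.smul_map_volume_mul_left hb.ne', abs_of_pos hb]
        rw [lintegral_smul_measure, hemb.lintegral_map, smul_eq_mul]
    _ = ENNReal.ofReal b * (ENNReal.ofReal (b ^ n) * ∫⁻ r, G (b * r) ∂radialMeasure n) := by
        rw [hcomp, lintegral_indicator measurableSet_Ioi,
          lintegral_const_mul' _ _ ENNReal.ofReal_ne_top, lintegral_radialMeasure]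
    _ = _ := by rw [← mul_assoc, ← ENNReal.ofReal_mul hb.le, pow_succ']

lemma setLIntegral_Iio_radialMeasure_eq_mul_comp_mul (G : ℝ → ℝ≥0∞) {b : ℝ} (hb : 0 < b) (ρ : ℝ) :
    ∫⁻ r in Iio (b * ρ), G r ∂radialMeasure n
      = ENNReal.ofReal (b ^ (n + 1)) * ∫⁻ r in Iio ρ, G (b * r) ∂radialMeasure n := by
  rw [← lintegral_indicator measurableSet_Iio, ← lintegral_indicator measurableSet_Iio,
    lintegral_radialMeasure_eq_mul_comp_mul _ hb]
  simp only [indicator, mem_Iio, mul_lt_mul_iff_right₀ hb]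

end RadialMeasure

section PolarCoordinates

variable {E : Type*} [NormedAddCommGroup E] [NormedSpace ℝ E] [FiniteDimensional ℝ E]
  [MeasurableSpace E] [BorelSpace E] [Nontrivial E] (μ : Measure E) [μ.IsAddHaarMeasure]

lemma lintegral_eq_lintegral_toSphere_radialMeasure {F : E → ℝ≥0∞} (hF : Measurable F) (c : E) :
    ∫⁻ x, F x ∂μ = ∫⁻ θ, ∫⁻ r, F (c + r • (θ : E)) ∂radialMeasure (Module.finrank ℝ E - 1)
      ∂μ.toSphere := by
  have polar : ∫⁻ x, F (c + x) ∂μ = ∫⁻ q, F (c + (q.2 : ℝ) • (q.1 : E))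
      ∂(μ.toSphere.prod (Measure.volumeIoiPow (Module.finrank ℝ E - 1))) := by
    have hcompl : μ.restrict {0}ᶜ = μ := restrict_compl_singleton 0
    rw [← μ.measurePreserving_homeomorphUnitSphereProd.lintegral_comp_emb
      (Homeomorph.measurableEmbedding _), ← hcompl,
      ← lintegral_subtype_comap (measurableSet_singleton _).compl, hcompl]
    refine lintegral_congr fun x => ?_
    have hx : ‖(x : E)‖ ≠ 0 := norm_ne_zero_iff.2 x.2
    simp [homeomorphUnitSphereProd, smul_smul, hx]
  have hF_prod : Measurable fun q : sphere (0 : E) 1 × Ioi (0 : ℝ) =>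
      F (c + (q.2 : ℝ) • (q.1 : E)) := hF.comp (by fun_prop)
  rw [← lintegral_add_left_eq_self F c, polar, lintegral_prod _ hF_prod.aemeasurable]
  refine lintegral_congr fun θ => ?_
  rw [lintegral_radialMeasure, Measure.volumeIoiPow,
    lintegral_withDensity_eq_lintegral_mul_non_measurable _ (by fun_prop)
      (.of_forall fun _ => ENNReal.ofReal_lt_top)]
  exact lintegral_subtype_comap measurableSet_Ioi
    fun r : ℝ => ENNReal.ofReal (r ^ _) * F (c + r • (θ : E))

lemma lintegral_comp_dist {G : ℝ → ℝ≥0∞} (hG : Measurable G) (c : E) :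
    ∫⁻ x, G (dist x c) ∂μ
      = μ.toSphere univ * ∫⁻ r, G r ∂radialMeasure (Module.finrank ℝ E - 1) := by
  have on_ray (θ : sphere (0 : E) 1) : ∫⁻ r, G (dist (c + r • (θ : E)) c)
      ∂radialMeasure (Module.finrank ℝ E - 1) = ∫⁻ r, G r
      ∂radialMeasure (Module.finrank ℝ E - 1) := by
    refine lintegral_congr_ae (ae_radialMeasure_pos.mono fun r hr => ?_)
    have hθ : ‖(θ : E)‖ = 1 := by simp
    simp only [dist_self_add_left, norm_smul, hθ, mul_one, Real.norm_of_nonneg hr.le]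
  have hG_dist : Measurable fun x => G (dist x c) := hG.comp (by fun_prop)
  rw [lintegral_eq_lintegral_toSphere_radialMeasure μ hG_dist c]
  simp_rw [on_ray, lintegral_const, mul_comm]

lemma toSphere_univ_ne_zero : μ.toSphere univ ≠ 0 := by
  simp [Measure.toSphere_apply_univ, (measure_ball_pos μ (0 : E) one_pos).ne',
    Module.finrank_pos.ne']

end PolarCoordinates

section MollifiedEnergy

variable {E α : Type*} [NormedAddCommGroup E] [InnerProductSpace ℝ E] [FiniteDimensional ℝ E]
  [MeasurableSpace E] [BorelSpace E] [MeasurableSpace α] {v : E → ℝ} {K : ℝ≥0} {p : ℝ}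

lemma tendsto_setLIntegral_enorm_fderiv_mollify (hp : 0 ≤ p) (hv : LipschitzWith K v) {Ω : Set E}
    (hΩ : volume Ω ≠ ⊤) :
    Tendsto (fun n => ∫⁻ x in Ω, ‖fderiv ℝ (mollify v n) x‖ₑ ^ p) atTop
      (𝓝 (∫⁻ x in Ω, ‖fderiv ℝ v x‖ₑ ^ p)) :=
  tendsto_lintegral_enorm_rpow hp (by simpa)
    (fun n => (measurable_fderiv ℝ (mollify v n)).aestronglyMeasurable)
    (fun n => .of_forall fun x => norm_fderiv_le_of_lipschitz ℝ (lipschitzWith_mollify hv n))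
    (ae_restrict_of_ae (ae_tendsto_fderiv_mollify hv))

lemma tendsto_lintegral_enorm_mollify_sub_mollify {μ : Measure α} (hp : 0 ≤ p)
    (hv : LipschitzWith K v) (hμ : μ univ ≠ ⊤) {f g : α → E} (hf : Measurable f)
    (hg : Measurable g) {D : ℝ} (hD : ∀ᵐ a ∂μ, dist (f a) (g a) ≤ D) :
    Tendsto (fun n => ∫⁻ a, ‖mollify v n (f a) - mollify v n (g a)‖ₑ ^ p ∂μ) atTop
      (𝓝 (∫⁻ a, ‖v (f a) - v (g a)‖ₑ ^ p ∂μ)) := by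
  have hcont (n : ℕ) : Continuous (mollify v n) := (lipschitzWith_mollify hv n).continuous
  refine tendsto_lintegral_enorm_rpow (C := K * D) hp hμ (fun n => ?_) (fun n => ?_)
    (.of_forall fun a => (tendsto_mollify hv _).sub (tendsto_mollify hv _))
  · exact (((hcont n).measurable.comp hf).sub
      ((hcont n).measurable.comp hg)).aestronglyMeasurable
  · filter_upwards [hD] with a ha
    rw [← dist_eq_norm]
    exact ((lipschitzWith_mollify hv n).dist_le_mul _ _).trans (by gcongr)

end MollifiedEnergy

section DirichletEigenvalue

variable {N : ℕ} {p q R : ℝ} {Ω : Set (EuclideanSpace ℝ (Fin N))}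
  {v : EuclideanSpace ℝ (Fin N) → ℝ}

lemma rayleighQuot_nonneg (p q : ℝ) (Ω : Set (EuclideanSpace ℝ (Fin N)))
    (v : EuclideanSpace ℝ (Fin N) → ℝ) : 0 ≤ rayleighQuot p q Ω v :=
  div_nonneg (integral_nonneg fun _ => by positivity)
    (Real.rpow_nonneg (integral_nonneg fun _ => by positivity) _)

lemma rayleighQuot_self (hp : 0 < p) :
    rayleighQuot p p Ω v = (∫ x in Ω, ‖fderiv ℝ v x‖ ^ p) / ∫ x in Ω, |v x| ^ p := by
  rw [rayleighQuot, div_self hp.ne', Real.rpow_one]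

lemma rayleighQuot_self_eq_toReal (hp : 0 < p) (hv : AEStronglyMeasurable v (volume.restrict Ω)) :
    rayleighQuot p p Ω v =
      (∫⁻ x in Ω, ‖fderiv ℝ v x‖ₑ ^ p).toReal / (∫⁻ x in Ω, ‖v x‖ₑ ^ p).toReal := by
  rw [rayleighQuot_self hp, ← integral_norm_rpow_eq_toReal hp.le hv,
    integral_norm_rpow_eq_toReal hp.le (measurable_fderiv ℝ v).aestronglyMeasurable]
  simp only [Real.norm_eq_abs]

lemma lambdaPQ_nonneg (p q : ℝ) (Ω : Set (EuclideanSpace ℝ (Fin N))) : 0 ≤ lambdaPQ p q Ω :=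
  Real.sInf_nonneg <| by
    rintro _ ⟨v, -, -, -, -, rfl⟩
    exact rayleighQuot_nonneg p q Ω v

lemma lambdaPQ_le_rayleighQuot (hv : ContDiff ℝ (⊤ : ℕ∞) v) (hcs : HasCompactSupport v)
    (hΩ : tsupport v ⊆ Ω) (hne : ∃ x ∈ Ω, v x ≠ 0) : lambdaPQ p q Ω ≤ rayleighQuot p q Ω v := by
  refine csInf_le ⟨0, ?_⟩ ⟨v, hv, hcs, hΩ, hne, rfl⟩
  rintro _ ⟨v, -, -, -, -, rfl⟩
  exact rayleighQuot_nonneg p q Ω v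

lemma le_lambdaPQ {a : ℝ} (hΩ : IsOpen Ω) (hne : Ω.Nonempty)
    (h : ∀ v : EuclideanSpace ℝ (Fin N) → ℝ, ContDiff ℝ (⊤ : ℕ∞) v → HasCompactSupport v →
      tsupport v ⊆ Ω → (∃ x ∈ Ω, v x ≠ 0) → a ≤ rayleighQuot p q Ω v) : a ≤ lambdaPQ p q Ω := by
  refine le_csInf ?_ ?_
  · obtain ⟨x, hx⟩ := hne
    obtain ⟨f, hfs, hfc, hf, -, hfx⟩ :=
      exists_contDiff_tsupport_subset (n := (⊤ : ℕ∞)) (hΩ.mem_nhds hx)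
    exact ⟨_, f, hf, hfc, hfs, ⟨x, hx, by simp [hfx]⟩, rfl⟩
  · rintro _ ⟨v, hv, hcs, hvΩ, hv0, rfl⟩
    exact h v hv hcs hvΩ hv0

lemma rayleighQuot_comp_affine (hp : 0 < p) (a : EuclideanSpace ℝ (Fin N)) {b : ℝ} (hb : 0 < b) :
    rayleighQuot p p ((fun x => a + b • x) ⁻¹' Ω) (fun x => v (a + b • x))
      = b ^ p * rayleighQuot p p Ω v := by
  have hemb : MeasurableEmbedding fun x : EuclideanSpace ℝ (Fin N) => a + b • x :=
    ((Homeomorph.smulOfNeZero b hb.ne').trans (Homeomorph.addLeft a)).measurableEmbedding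
  have hmap : Measure.map (fun x => a + b • x) (volume : Measure (EuclideanSpace ℝ (Fin N)))
      = ENNReal.ofReal |(b ^ N)⁻¹| • volume := by
    have hcomp : (fun x => a + b • x) = (a + ·) ∘ (b • ·) := rfl
    rw [hcomp, ← Measure.map_map (by fun_prop) (by fun_prop),
      Measure.map_addHaar_smul _ hb.ne', Measure.map_smul, map_add_left_eq_self,
      finrank_euclideanSpace_fin]
  have change (f : EuclideanSpace ℝ (Fin N) → ℝ) :
      ∫ x in (fun x => a + b • x) ⁻¹' Ω, f (a + b • x) = (b ^ N)⁻¹ * ∫ x in Ω, f x := by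
    rw [← hemb.setIntegral_map, hmap, Measure.restrict_smul, integral_smul_measure,
      ENNReal.toReal_ofReal (abs_nonneg _), abs_of_pos (by positivity), smul_eq_mul]
  have hgrad (x : EuclideanSpace ℝ (Fin N)) : ‖fderiv ℝ (fun x => v (a + b • x)) x‖ ^ p
      = b ^ p * ‖fderiv ℝ v (a + b • x)‖ ^ p := by
    rw [fderiv_comp_smul (f := fun y => v (a + y)), fderiv_comp_add_left, norm_smul,
      Real.norm_of_nonneg hb.le, Real.mul_rpow hb.le (norm_nonneg _)]
  simp_rw [rayleighQuot_self hp, hgrad]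
  rw [integral_const_mul, change (fun x => ‖fderiv ℝ v x‖ ^ p), change (fun x => |v x| ^ p)]
  field_simp

lemma lambdaPQ_ball_le_rpow_mul (hp : 0 < p) (hR : 0 < R) (c c' : EuclideanSpace ℝ (Fin N))
    {b : ℝ} (hb : 0 < b) :
    lambdaPQ p p (ball c R) ≤ b ^ p * lambdaPQ p p (ball c' (b * R)) := by
  have hbp : 0 < b ^ p := Real.rpow_pos_of_pos hb p
  rw [← div_le_iff₀' hbp]
  refine le_lambdaPQ isOpen_ball (nonempty_ball.2 (by positivity)) fun v hv hcs hs hne => ?_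
  let e := (Homeomorph.smulOfNeZero b hb.ne').trans (Homeomorph.addLeft (c' - b • c))
  have e_sub (x) : e x - c' = b • (x - c) := by
    change c' - b • c + b • x - c' = _
    rw [smul_sub]
    abel
  have mem_ball_iff (x) : e x ∈ ball c' (b * R) ↔ x ∈ ball c R := by
    rw [mem_ball_iff_norm, mem_ball_iff_norm, e_sub, norm_smul, Real.norm_of_nonneg hb.le,
      mul_lt_mul_iff_right₀ hb]
  have hball : e ⁻¹' ball c' (b * R) = ball c R := ext mem_ball_iff
  obtain ⟨x, hx, hvx⟩ := hne
  rw [div_le_iff₀' hbp, ← rayleighQuot_comp_affine hp (c' - b • c) hb]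
  change _ ≤ rayleighQuot p p (e ⁻¹' ball c' (b * R)) (v ∘ e)
  rw [hball]
  refine lambdaPQ_le_rayleighQuot (hv.comp (contDiff_const.add (contDiff_id.const_smul b)))
    (hcs.comp_homeomorph e) ?_ ⟨e.symm x, (mem_ball_iff _).1 (by simpa), by simpa⟩
  rw [← hball, tsupport_comp_eq_preimage]
  exact preimage_mono hs

lemma lambdaPQ_ball_scaling (hp : 0 < p) (hR : 0 < R) (c c' : EuclideanSpace ℝ (Fin N))
    {b : ℝ} (hb : 0 < b) :
    lambdaPQ p p (ball c R) = b ^ p * lambdaPQ p p (ball c' (b * R)) := by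
  refine (lambdaPQ_ball_le_rpow_mul hp hR c c' hb).antisymm ?_
  have := lambdaPQ_ball_le_rpow_mul hp (mul_pos hb hR) c' c (inv_pos.2 hb)
  rwa [inv_mul_cancel_left₀ hb.ne', Real.inv_rpow hb.le, le_inv_mul_iff₀ (by positivity)] at this

lemma ofReal_lambdaPQ_mul_le_of_contDiff (hp : 0 < p) (hv : ContDiff ℝ (⊤ : ℕ∞) v)
    (hcs : HasCompactSupport v) (hΩ : tsupport v ⊆ Ω) :
    ENNReal.ofReal (lambdaPQ p p Ω) * ∫⁻ x, ‖v x‖ₑ ^ p ≤ ∫⁻ x, ‖fderiv ℝ v x‖ₑ ^ p := by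
  have hX := lintegral_enorm_rpow_ne_top_of_hasCompactSupport (μ := volume) hp
    (hv.continuous_fderiv (by simp)) (hcs.fderiv (𝕜 := ℝ))
  have hY := lintegral_enorm_rpow_ne_top_of_hasCompactSupport (μ := volume) hp hv.continuous hcs
  rcases eq_or_ne (∫⁻ x, ‖v x‖ₑ ^ p) 0 with hY0 | hY0
  · simp [hY0]
  obtain ⟨x, hx⟩ : ∃ x, v x ≠ 0 := by
    by_contra! hv0
    exact hY0 (by simp [hv0, hp])
  have hle := lambdaPQ_le_rayleighQuot (p := p) (q := p) hv hcs hΩ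
    ⟨x, hΩ (subset_tsupport v hx), hx⟩
  rw [rayleighQuot_self_eq_toReal hp hv.continuous.aestronglyMeasurable,
    setLIntegral_enorm_rpow_eq_lintegral hp ((support_fderiv_subset ℝ).trans hΩ),
    setLIntegral_enorm_rpow_eq_lintegral hp ((subset_tsupport v).trans hΩ),
    le_div_iff₀ (ENNReal.toReal_pos hY0 hY)] at hle
  rw [← ENNReal.ofReal_toReal hX, ← ENNReal.ofReal_toReal hY,
    ← ENNReal.ofReal_mul (lambdaPQ_nonneg _ _ _)]
  exact ENNReal.ofReal_le_ofReal hle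

lemma ofReal_lambdaPQ_mul_le_of_lipschitz (hp : 0 < p) (hΩ : IsOpen Ω) {K : ℝ≥0}
    (hv : LipschitzWith K v) (hcs : HasCompactSupport v) (hvΩ : tsupport v ⊆ Ω) :
    ENNReal.ofReal (lambdaPQ p p Ω) * ∫⁻ x, ‖v x‖ₑ ^ p ≤ ∫⁻ x, ‖fderiv ℝ v x‖ₑ ^ p := by
  obtain ⟨δ, hδ, hδΩ⟩ := hcs.isCompact.exists_cthickening_subset_open hΩ hvΩ
  have radius_tendsto : Tendsto (fun n : ℕ => 1 / (n + 1 : ℝ)) atTop (𝓝 0) :=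
    tendsto_one_div_add_atTop_nhds_zero_nat
  have radius_le_one (n : ℕ) : 1 / (n + 1 : ℝ) ≤ 1 :=
    div_le_one_of_le₀ (by linarith [n.cast_nonneg (α := ℝ)]) (by positivity)
  set S := cthickening 1 (tsupport v)
  have hS : IsCompact S := hcs.isCompact.cthickening
  have hsupp (n : ℕ) : tsupport (mollify v n) ⊆ S :=
    (tsupport_mollify_subset v n).trans (cthickening_mono (radius_le_one n) _)
  have hsuppv : tsupport v ⊆ S := self_subset_cthickening _
  have hSvol : volume.restrict S univ ≠ ⊤ := by simpa using hS.measure_ne_top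
  have hsmooth (n : ℕ) := contDiff_mollify hv.continuous.locallyIntegrable n
  obtain ⟨C, hC⟩ := hcs.exists_bound_of_continuous hv.continuous
  have hbound (n : ℕ) (x) : ‖mollify v n x‖ ≤ K + C := by
    refine (norm_le_norm_sub_add _ (v x)).trans (add_le_add ?_ (hC x))
    rw [← dist_eq_norm]
    exact (dist_mollify_le hv n x).trans (mul_le_of_le_one_right K.2 (radius_le_one n))
  have tendsto_fun := tendsto_lintegral_enorm_rpow (μ := volume.restrict S) hp.le hSvol
    (fun n => (hsmooth n).continuous.aestronglyMeasurable) (fun n => .of_forall (hbound n))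
    (.of_forall (tendsto_mollify hv))
  have tendsto_grad := tendsto_setLIntegral_enorm_fderiv_mollify hp.le hv hS.measure_ne_top
  rw [← setLIntegral_enorm_rpow_eq_lintegral hp ((subset_tsupport v).trans hsuppv),
    ← setLIntegral_enorm_rpow_eq_lintegral hp ((support_fderiv_subset ℝ).trans hsuppv)]
  refine le_of_tendsto_of_tendsto (ENNReal.Tendsto.const_mul tendsto_fun
    (.inr ENNReal.ofReal_ne_top)) tendsto_grad ?_
  filter_upwards [radius_tendsto.eventually_le_const hδ] with n hn
  rw [setLIntegral_enorm_rpow_eq_lintegral hp ((subset_tsupport _).trans (hsupp n)),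
    setLIntegral_enorm_rpow_eq_lintegral hp ((support_fderiv_subset ℝ).trans (hsupp n))]
  exact ofReal_lambdaPQ_mul_le_of_contDiff hp (hsmooth n)
    (hS.of_isClosed_subset (isClosed_tsupport _) (hsupp n))
    ((tsupport_mollify_subset v n).trans ((cthickening_mono hn _).trans hδΩ))

lemma ofReal_lambdaPQ_ball_mul_le (hp : 0 < p) (hR : 0 < R) {c : EuclideanSpace ℝ (Fin N)}
    {K : ℝ≥0} (hv : LipschitzWith K v) (hvR : ∀ x, R ≤ dist x c → v x = 0) :
    ENNReal.ofReal (lambdaPQ p p (ball c R)) * ∫⁻ x, ‖v x‖ₑ ^ p ≤ ∫⁻ x, ‖fderiv ℝ v x‖ₑ ^ p := by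
  have hts : tsupport v ⊆ closedBall c R :=
    closure_minimal (fun x hx => (lt_of_not_ge fun h => hx (hvR x h)).le) isClosed_closedBall
  have hcs : HasCompactSupport v :=
    (isCompact_closedBall c R).of_isClosed_subset (isClosed_tsupport v) hts
  have dilated (b : ℝ) (hb : 1 < b) : ENNReal.ofReal ((b ^ p)⁻¹ * lambdaPQ p p (ball c R)) *
      ∫⁻ x, ‖v x‖ₑ ^ p ≤ ∫⁻ x, ‖fderiv ℝ v x‖ₑ ^ p := by
    have hb0 : 0 < b := one_pos.trans hb
    rw [lambdaPQ_ball_scaling hp hR c c hb0, inv_mul_cancel_left₀ (by positivity)]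
    exact ofReal_lambdaPQ_mul_le_of_lipschitz hp isOpen_ball hv hcs
      (hts.trans (closedBall_subset_ball (lt_mul_of_one_lt_left hR hb)))
  have tendsto_one : Tendsto (fun b : ℝ => ENNReal.ofReal ((b ^ p)⁻¹ * lambdaPQ p p (ball c R)))
      (𝓝[>] 1) (𝓝 (ENNReal.ofReal (lambdaPQ p p (ball c R)))) := by
    refine ENNReal.tendsto_ofReal (tendsto_nhdsWithin_of_tendsto_nhds ?_)
    have hpow : ContinuousAt (fun b : ℝ => b ^ p) 1 := by fun_prop (disch := norm_num)
    simpa using ((hpow.inv₀ (by simp)).mul_const (lambdaPQ p p (ball c R))).tendsto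
  rcases (lambdaPQ_nonneg p p (ball c R)).eq_or_lt with h0 | hpos
  · simp [← h0]
  exact le_of_tendsto (ENNReal.Tendsto.mul_const tendsto_one (.inl (by simpa)))
    (eventually_nhdsWithin_of_forall dilated)

end DirichletEigenvalue

section RadialProfiles

variable {N n : ℕ} {p R ρ Λ : ℝ} {f : ℝ → ℝ}

lemma enorm_sub_rpow_le_lintegral_deriv (hp : 1 < p) (hf : ContDiff ℝ 1 f) {a b : ℝ}
    (hab : a ≤ b) :
    ‖f b - f a‖ₑ ^ p
      ≤ ENNReal.ofReal ((b - a) ^ (p - 1)) * ∫⁻ t in Ioc a b, ‖deriv f t‖ₑ ^ p := by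
  have hp0 : 0 < p := one_pos.trans hp
  have hf' : Continuous (deriv f) := hf.continuous_deriv le_rfl
  have ftc : f b - f a = ∫ t in Ioc a b, deriv f t := by
    rw [← intervalIntegral.integral_of_le hab, intervalIntegral.integral_deriv_eq_sub
      (fun x _ => hf.differentiable one_ne_zero x) (hf'.intervalIntegrable _ _)]
  have holder := eLpNorm'_le_eLpNorm'_mul_rpow_measure_univ one_pos hp.le
    (hf'.aestronglyMeasurable (μ := volume.restrict (Ioc a b)))
  rw [eLpNorm'_eq_lintegral_enorm, eLpNorm'_eq_lintegral_enorm] at holder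
  simp only [ENNReal.rpow_one, div_one, Measure.restrict_apply_univ, Real.volume_Ioc] at holder
  calc ‖f b - f a‖ₑ ^ p
    _ ≤ ((∫⁻ t in Ioc a b, ‖deriv f t‖ₑ ^ p) ^ (1 / p)
          * ENNReal.ofReal (b - a) ^ (1 - 1 / p)) ^ p := by
        rw [ftc]
        gcongr
        exact (enorm_integral_le_lintegral_enorm _).trans holder
    _ = _ := by
        rw [ENNReal.mul_rpow_of_nonneg _ _ hp0.le, ← ENNReal.rpow_mul, ← ENNReal.rpow_mul,
          one_div_mul_cancel hp0.ne', ENNReal.rpow_one, sub_mul, one_div_mul_cancel hp0.ne',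
          one_mul, ENNReal.ofReal_rpow_of_nonneg (sub_nonneg.2 hab) (sub_nonneg.2 hp.le), mul_comm]

lemma ofReal_pow_mul_enorm_rpow_le (hp : 1 < p) (hf : ContDiff ℝ 1 f) (hfR : f R = 0) {r : ℝ}
    (hr : 0 < r) (hrR : r ≤ R) :
    ENNReal.ofReal (r ^ n) * ‖f r‖ₑ ^ p
      ≤ ENNReal.ofReal (R ^ (p - 1)) * ∫⁻ t, ‖deriv f t‖ₑ ^ p ∂radialMeasure n := by
  have holder := enorm_sub_rpow_le_lintegral_deriv hp hf hrR
  rw [hfR, zero_sub, enorm_neg] at holder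
  rw [lintegral_radialMeasure]
  calc ENNReal.ofReal (r ^ n) * ‖f r‖ₑ ^ p
    _ ≤ ENNReal.ofReal (r ^ n) *
          (ENNReal.ofReal ((R - r) ^ (p - 1)) * ∫⁻ t in Ioc r R, ‖deriv f t‖ₑ ^ p) := by gcongr
    _ = ENNReal.ofReal ((R - r) ^ (p - 1)) *
          ∫⁻ t in Ioc r R, ENNReal.ofReal (r ^ n) * ‖deriv f t‖ₑ ^ p := by
        rw [lintegral_const_mul' _ _ ENNReal.ofReal_ne_top, mul_left_comm]
    _ ≤ ENNReal.ofReal (R ^ (p - 1)) *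
          ∫⁻ t in Ioc r R, ENNReal.ofReal (t ^ n) * ‖deriv f t‖ₑ ^ p := by
        gcongr ?_ * ?_
        · have hRr : 0 ≤ R - r := sub_nonneg.2 hrR
          have hp1 : 0 ≤ p - 1 := sub_nonneg.2 hp.le
          gcongr
          linarith
        · refine setLIntegral_mono' measurableSet_Ioc fun t ht => ?_
          gcongr
          exact ht.1.le
    _ ≤ _ := by
        gcongr
        exact fun t ht => hr.trans ht.1

lemma setLIntegral_enorm_rpow_radialMeasure_le (hp : 1 < p) (hR : 0 < R) (hf : ContDiff ℝ 1 f)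
    (hfR : f R = 0) :
    ∫⁻ r in Iio R, ‖f r‖ₑ ^ p ∂radialMeasure n
      ≤ ENNReal.ofReal (R ^ p) * ∫⁻ r, ‖deriv f r‖ₑ ^ p ∂radialMeasure n := by
  rw [← lintegral_indicator measurableSet_Iio, lintegral_radialMeasure]
  calc ∫⁻ r in Ioi 0, ENNReal.ofReal (r ^ n) * (Iio R).indicator (fun r => ‖f r‖ₑ ^ p) r
    _ = ∫⁻ r in Ioo 0 R, ENNReal.ofReal (r ^ n) * ‖f r‖ₑ ^ p := by
        simp_rw [← Ioi_inter_Iio, inter_comm (Ioi (0 : ℝ)),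
          ← setLIntegral_indicator measurableSet_Iio, indicator_mul_right]
    _ ≤ ∫⁻ _ in Ioo 0 R,
          ENNReal.ofReal (R ^ (p - 1)) * ∫⁻ t, ‖deriv f t‖ₑ ^ p ∂radialMeasure n :=
        setLIntegral_mono' measurableSet_Ioo fun r hr =>
          ofReal_pow_mul_enorm_rpow_le hp hf hfR hr.1 hr.2.le
    _ = _ := by
        rw [setLIntegral_const, Real.volume_Ioo, sub_zero, mul_right_comm,
          ← ENNReal.ofReal_mul (by positivity), ← Real.rpow_add_one hR.ne', sub_add_cancel]

lemma exists_lipschitzWith_comp_projIcc (hf : ContDiff ℝ 1 f) (hρR : ρ ≤ R) :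
    ∃ K, LipschitzWith K fun t => f (projIcc ρ R hρR t) := by
  obtain ⟨K, hK⟩ := hf.contDiffOn.exists_lipschitzOnWith one_ne_zero (convex_Icc ρ R) isCompact_Icc
  refine ⟨K * (1 * 1), lipschitzOnWith_univ.1 (hK.comp ?_ fun t _ => (projIcc ρ R hρR t).2)⟩
  exact ((LipschitzWith.subtype_val _).comp (.projIcc hρR)).lipschitzOnWith

lemma ae_enorm_fderiv_comp_projIcc_dist_le [NeZero N] (hp : 0 < p) (hf : ContDiff ℝ 1 f)
    (hρR : ρ ≤ R) (c : EuclideanSpace ℝ (Fin N)) :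
    ∀ᵐ x, ‖fderiv ℝ (fun x => f (projIcc ρ R hρR (dist x c))) x‖ₑ ^ p
      ≤ (Ioo ρ R).indicator (fun r => ‖deriv f r‖ₑ ^ p) (dist x c) := by
  have off_sphere (r : ℝ) : ∀ᵐ x : EuclideanSpace ℝ (Fin N), dist x c ≠ r := by
    simpa [ae_iff] using! Measure.addHaar_sphere volume c r
  have hdist : Continuous fun x : EuclideanSpace ℝ (Fin N) => dist x c := by fun_prop
  have hlip : LipschitzWith 1 fun x : EuclideanSpace ℝ (Fin N) =>
      (projIcc ρ R hρR (dist x c) : ℝ) :=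
    ((LipschitzWith.subtype_val _).comp ((LipschitzWith.projIcc hρR).comp (.dist_left c))).weaken
      (by simp)
  filter_upwards [off_sphere ρ, off_sphere R] with x hxρ hxR
  by_cases hx : dist x c ∈ Ioo ρ R
  · rw [indicator_of_mem hx]
    have hgrad := norm_fderiv_comp_le_of_lip (η := fun x => (projIcc ρ R hρR (dist x c) : ℝ))
      zero_le_one (hf.differentiable one_ne_zero _)
      (.of_forall fun y => by
        simpa [dist_eq_norm, Real.dist_eq] using hlip.dist_le_mul y x)
    rw [projIcc_of_mem hρR (Ioo_subset_Icc_self hx), mul_one, ← Real.norm_eq_abs,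
      ← enorm_le_iff_norm_le] at hgrad
    gcongr
  · have hconst : ∀ᶠ y in 𝓝 x, projIcc ρ R hρR (dist y c) = projIcc ρ R hρR (dist x c) := by
      rcases hxρ.lt_or_gt with hlt | hgt
      · filter_upwards [hdist.continuousAt.eventually_lt_const hlt] with y hy
        rw [projIcc_of_le_left hρR hy.le, projIcc_of_le_left hρR hlt.le]
      · have hRx : R < dist x c := (not_lt.1 fun h => hx ⟨hgt, h⟩).lt_of_ne' hxR
        filter_upwards [hdist.continuousAt.eventually_const_lt hRx] with y hy
        rw [projIcc_of_right_le hρR hy.le, projIcc_of_right_le hρR hRx.le]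
    have hzero : fderiv ℝ (fun x => f (projIcc ρ R hρR (dist x c))) x = 0 := by
      rw [EventuallyEq.fderiv_eq (hconst.mono fun y hy => by rw [hy])]
      simp
    rw [hzero, ← ofReal_norm, norm_zero, ENNReal.ofReal_zero, ENNReal.zero_rpow_of_pos hp]
    exact zero_le

lemma ofReal_lambdaPQ_ball_mul_setLIntegral_radialMeasure_le [NeZero N] (hp : 0 < p) (hR : 0 < R)
    (c : EuclideanSpace ℝ (Fin N)) (hf : ContDiff ℝ 1 f) (hfR : f R = 0) (hρR : ρ ≤ R) :
    ENNReal.ofReal (lambdaPQ p p (ball c R)) *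
        ∫⁻ r in Iio R, ‖f (max ρ r)‖ₑ ^ p ∂radialMeasure (N - 1)
      ≤ ∫⁻ r in Ioo ρ R, ‖deriv f r‖ₑ ^ p ∂radialMeasure (N - 1) := by
  obtain ⟨K, hK⟩ := exists_lipschitzWith_comp_projIcc hf hρR
  have hf' : Continuous (deriv f) := hf.continuous_deriv le_rfl
  have hcomp : LipschitzWith (K * 1) fun x => f (projIcc ρ R hρR (dist x c)) :=
    hK.comp (.dist_left c)
  have dirichlet := (ofReal_lambdaPQ_ball_mul_le (c := c) hp hR hcomp fun x hx => by
    rw [projIcc_of_right_le hρR hx, hfR]).trans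
    (lintegral_mono_ae (ae_enorm_fderiv_comp_projIcc_dist_le hp hf hρR c))
  rw [lintegral_comp_dist volume (G := fun r => ‖f (projIcc ρ R hρR r)‖ₑ ^ p)
      (hK.continuous.measurable.enorm.pow_const p),
    lintegral_comp_dist volume ((hf'.measurable.enorm.pow_const p).indicator measurableSet_Ioo),
    mul_left_comm, ENNReal.mul_le_mul_iff_right (toSphere_univ_ne_zero _) (measure_ne_top _ _),
    lintegral_indicator measurableSet_Ioo, finrank_euclideanSpace_fin] at dirichlet
  refine le_trans ?_ dirichlet
  gcongr ENNReal.ofReal _ * ?_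
  refine (setLIntegral_mono' measurableSet_Iio fun r hr => ?_).trans (setLIntegral_le_lintegral _ _)
  rw [coe_projIcc, min_eq_right hr.le]

lemma exists_lintegral_fderiv_lt (hp : 0 < p) (hR : 0 < R)
    (c : EuclideanSpace ℝ (Fin N)) (hΛ : lambdaPQ p p (ball c R) < Λ) :
    ∃ v : EuclideanSpace ℝ (Fin N) → ℝ, ContDiff ℝ (⊤ : ℕ∞) v ∧ HasCompactSupport v ∧
      tsupport v ⊆ ball c R ∧
      ∫⁻ x, ‖fderiv ℝ v x‖ₑ ^ p < ENNReal.ofReal Λ * ∫⁻ x, ‖v x‖ₑ ^ p := by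
  by_contra! hge
  refine hΛ.not_ge (le_lambdaPQ isOpen_ball (nonempty_ball.2 hR) fun v hv hcs hsub hne => ?_)
  have hΛ0 : 0 ≤ Λ := (lambdaPQ_nonneg p p (ball c R)).trans hΛ.le
  have mass_ne_top := lintegral_enorm_rpow_ne_top_of_hasCompactSupport (μ := volume) hp
    hv.continuous hcs
  have energy_ne_top := lintegral_enorm_rpow_ne_top_of_hasCompactSupport (μ := volume) hp
    (hv.continuous_fderiv (by simp)) (hcs.fderiv (𝕜 := ℝ))
  have mass_ne_zero : ∫⁻ x, ‖v x‖ₑ ^ p ≠ 0 := by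
    have hcont : Continuous fun x => ‖v x‖ₑ ^ p :=
      ENNReal.continuous_rpow_const.comp hv.continuous.enorm
    obtain ⟨x, -, hx⟩ := hne
    refine (lintegral_eq_zero_iff hcont.measurable).not.2 fun h0 => hx ?_
    simpa [hp, hp.not_gt] using congrFun (hcont.ae_eq_iff_eq volume continuous_zero |>.1 h0) x
  rw [rayleighQuot_self_eq_toReal hp hv.continuous.aestronglyMeasurable,
    setLIntegral_enorm_rpow_eq_lintegral hp ((support_fderiv_subset ℝ).trans hsub),
    setLIntegral_enorm_rpow_eq_lintegral hp ((subset_tsupport v).trans hsub),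
    le_div_iff₀ (ENNReal.toReal_pos mass_ne_zero mass_ne_top), ← ENNReal.toReal_ofReal hΛ0,
    ← ENNReal.toReal_mul]
  exact ENNReal.toReal_mono energy_ne_top (hge v hv hcs hsub)

lemma exists_lintegral_deriv_radialMeasure_lt [NeZero N] (hp : 0 < p) (hR : 0 < R)
    (c : EuclideanSpace ℝ (Fin N)) (hΛ : lambdaPQ p p (ball c R) < Λ) :
    ∃ f : ℝ → ℝ, ContDiff ℝ 1 f ∧ (∃ R₀ < R, ∀ r, R₀ ≤ r → f r = 0) ∧
      ∫⁻ r, ‖deriv f r‖ₑ ^ p ∂radialMeasure (N - 1)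
        < ENNReal.ofReal Λ * ∫⁻ r, ‖f r‖ₑ ^ p ∂radialMeasure (N - 1) := by
  obtain ⟨v, hv, -, hsub, hlt⟩ := exists_lintegral_fderiv_lt hp hR c hΛ
  obtain ⟨ρ, hρR, hvρ⟩ := exists_lt_subset_ball (isClosed_tsupport v) hsub
  have hv' : Continuous (fderiv ℝ v) := hv.continuous_fderiv (by simp)
  rw [lintegral_eq_lintegral_toSphere_radialMeasure _ (hv'.measurable.enorm.pow_const p) c,
    lintegral_eq_lintegral_toSphere_radialMeasure _
      (hv.continuous.measurable.enorm.pow_const p) c,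
    ← lintegral_const_mul' _ _ ENNReal.ofReal_ne_top, finrank_euclideanSpace_fin] at hlt
  obtain ⟨θ, hθ⟩ : ∃ θ : sphere (0 : EuclideanSpace ℝ (Fin N)) 1,
      ∫⁻ r, ‖fderiv ℝ v (c + r • θ.1)‖ₑ ^ p ∂radialMeasure (N - 1)
        < ENNReal.ofReal Λ * ∫⁻ r, ‖v (c + r • θ.1)‖ₑ ^ p ∂radialMeasure (N - 1) := by
    by_contra! hge
    exact hlt.not_ge (lintegral_mono hge)
  have norm_θ : ‖θ.1‖ = 1 := norm_eq_of_mem_sphere θ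
  have deriv_ray (r : ℝ) : deriv (fun r : ℝ => v (c + r • θ.1)) r
      = fderiv ℝ v (c + r • θ.1) θ.1 := by
    have hray : HasDerivAt (fun r : ℝ => c + r • θ.1) θ.1 r := by
      simpa using ((hasDerivAt_id r).smul_const θ.1).const_add c
    exact ((hv.differentiable (by simp) _).hasFDerivAt.comp_hasDerivAt r hray).deriv
  refine ⟨fun r => v (c + r • θ.1), (hv.of_le (mod_cast le_top)).comp (by fun_prop),
    ⟨max 0 ρ, max_lt hR hρR, fun r hr => ?_⟩, lt_of_le_of_lt ?_ hθ⟩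
  · refine image_eq_zero_of_notMem_tsupport fun hmem => ?_
    have hlt := hvρ hmem
    rw [mem_ball, dist_self_add_left, norm_smul, norm_θ, mul_one] at hlt
    exact absurd hlt (((le_max_right _ _).trans hr).trans (Real.le_norm_self r)).not_gt
  · refine lintegral_mono fun r => ?_
    gcongr
    rw [deriv_ray, enorm_le_iff_norm_le]
    simpa [norm_θ] using (fderiv ℝ v (c + r • θ.1)).le_opNorm θ.1

end RadialProfiles

section DecreasingProfiles

variable {N n : ℕ} {p R ρ Λ : ℝ} {f : ℝ → ℝ}

/-- The integral of `‖U‖ ^ p` against `r ^ n dr` on `(0, ∞)`: up to the area of the unit sphere,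
the integral of `|U (|x|)| ^ p` over `ℝ^(n+1)`. -/
noncomputable def radialMass (n : ℕ) (p : ℝ) (U : ℝ → ℝ) : ℝ≥0∞ :=
  ∫⁻ r, ‖U r‖ₑ ^ p ∂radialMeasure n

/-- A decreasing function `U ≥ 0` of the radius, vanishing near `R` and beyond, whose radial
Rayleigh quotient in dimension `n + 1` is at most `Λ`. Such profiles with `Λ` close to
`λ_p` of a ball of radius `R` play the role of its first eigenfunction. -/
structure IsRadialProfile (n : ℕ) (p R Λ : ℝ) (U : ℝ → ℝ) : Prop where
  contDiff : ContDiff ℝ 1 U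
  antitone : Antitone U
  exists_radius : ∃ R₀ < R, ∀ r, R₀ ≤ r → U r = 0
  radialMass_ne_zero : radialMass n p U ≠ 0
  radialMass_deriv_le : radialMass n p (deriv U) ≤ ENNReal.ofReal Λ * radialMass n p U

lemma exists_antitone_abs_le_abs_deriv_eq (hf : ContDiff ℝ 1 f) {R₀ : ℝ}
    (hR₀ : ∀ r, R₀ ≤ r → f r = 0) :
    ∃ U : ℝ → ℝ, ContDiff ℝ 1 U ∧ Antitone U ∧ (∀ r, R₀ ≤ r → U r = 0) ∧
      (∀ r, |f r| ≤ |U r|) ∧ ∀ r, |deriv U r| = |deriv f r| := by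
  have hf' : Continuous (deriv f) := hf.continuous_deriv le_rfl
  set U : ℝ → ℝ := fun r => ∫ t in r..R₀, |deriv f t|
  have hasDeriv (r : ℝ) : HasDerivAt U (-|deriv f r|) r :=
    intervalIntegral.integral_hasDerivAt_left (hf'.abs.intervalIntegrable _ _)
      (hf'.abs.stronglyMeasurableAtFilter _ _) hf'.abs.continuousAt
  have deriv_eq : deriv U = fun r => -|deriv f r| := funext fun r => (hasDeriv r).deriv
  have deriv_zero (r : ℝ) (hr : R₀ < r) : deriv f r = 0 := by
    have : f =ᶠ[𝓝 r] fun _ => 0 := (lt_mem_nhds hr).mono fun s hs => hR₀ s hs.le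
    rw [this.deriv_eq, deriv_const]
  refine ⟨U, ?_, ?_, fun r hr => ?_, fun r => ?_, fun r => by rw [deriv_eq, abs_neg, abs_abs]⟩
  · exact contDiff_one_iff_deriv.2
      ⟨fun r => (hasDeriv r).differentiableAt, deriv_eq ▸ hf'.abs.neg⟩
  · exact antitone_of_deriv_nonpos (fun r => (hasDeriv r).differentiableAt) fun r => by
      rw [deriv_eq]
      exact neg_nonpos.2 (abs_nonneg _)
  · refine intervalIntegral.integral_zero_ae (.of_forall fun t ht => ?_)
    rw [uIoc_of_ge hr] at ht
    rw [deriv_zero t ht.1, abs_zero]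
  · rcases le_total R₀ r with hr | hr
    · rw [hR₀ r hr, abs_zero]
      exact abs_nonneg _
    · have ftc := intervalIntegral.integral_deriv_eq_sub
        (fun x _ => hf.differentiable one_ne_zero x) (hf'.intervalIntegrable r R₀)
      rw [hR₀ R₀ le_rfl, zero_sub] at ftc
      rw [← abs_neg, ← ftc]
      exact (intervalIntegral.abs_integral_le_integral_abs hr).trans (le_abs_self _)

lemma exists_isRadialProfile [NeZero N] (hp : 0 < p) (hR : 0 < R) (c : EuclideanSpace ℝ (Fin N))
    (hΛ : lambdaPQ p p (ball c R) < Λ) : ∃ U, IsRadialProfile (N - 1) p R Λ U := by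
  obtain ⟨f, hf, ⟨R₀, hR₀, hf0⟩, hlt⟩ := exists_lintegral_deriv_radialMeasure_lt hp hR c hΛ
  obtain ⟨U, hU, anti, hU0, hfU, hU'⟩ := exists_antitone_abs_le_abs_deriv_eq hf hf0
  have mass_le : ∫⁻ r, ‖f r‖ₑ ^ p ∂radialMeasure (N - 1) ≤ radialMass (N - 1) p U := by
    refine lintegral_mono fun r => ?_
    gcongr
    exact enorm_le_iff_norm_le.2 (hfU r)
  have energy_eq : radialMass (N - 1) p (deriv U)
      = ∫⁻ r, ‖deriv f r‖ₑ ^ p ∂radialMeasure (N - 1) := by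
    simp only [radialMass, enorm_rpow_eq_ofReal _ hp.le, Real.norm_eq_abs, hU']
  refine ⟨U, hU, anti, ⟨R₀, hR₀, hU0⟩, fun h0 => ?_, ?_⟩
  · simp [nonpos_iff_eq_zero.1 (h0 ▸ mass_le)] at hlt
  · rw [energy_eq]
    exact hlt.le.trans (by gcongr)

namespace IsRadialProfile

variable {U : ℝ → ℝ}

lemma nonneg (hU : IsRadialProfile n p R Λ U) (r : ℝ) : 0 ≤ U r := by
  obtain ⟨R₀, -, hR₀⟩ := hU.exists_radius
  rw [← hR₀ (max r R₀) (le_max_right _ _)]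
  exact hU.antitone (le_max_left _ _)

lemma eq_zero (hU : IsRadialProfile n p R Λ U) {r : ℝ} (hr : R ≤ r) : U r = 0 := by
  obtain ⟨R₀, hR₀, hU0⟩ := hU.exists_radius
  exact hU0 r (hR₀.le.trans hr)

lemma enorm_le (hU : IsRadialProfile n p R Λ U) {r s : ℝ} (hrs : r ≤ s) : ‖U s‖ₑ ≤ ‖U r‖ₑ := by
  rw [enorm_le_iff_norm_le, Real.norm_of_nonneg (hU.nonneg s), Real.norm_of_nonneg (hU.nonneg r)]
  exact hU.antitone hrs

lemma radialMass_eq_setLIntegral (hU : IsRadialProfile n p R Λ U) (hp : 0 < p) :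
    radialMass n p U = ∫⁻ r in Iio R, ‖U r‖ₑ ^ p ∂radialMeasure n :=
  (setLIntegral_enorm_rpow_eq_lintegral hp fun _ hr =>
    lt_of_not_ge fun h => hr (hU.eq_zero h)).symm

lemma radialMass_ne_top (hU : IsRadialProfile n p R Λ U) (hp : 0 < p) :
    radialMass n p U ≠ ⊤ := by
  rw [hU.radialMass_eq_setLIntegral hp]
  refine lintegral_enorm_rpow_ne_top (C := U 0) hp.le
    (by simpa using radialMeasure_Iio_ne_top n R) ?_
  filter_upwards [ae_restrict_of_ae ae_radialMeasure_pos] with r hr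
  rw [Real.norm_of_nonneg (hU.nonneg r)]
  exact hU.antitone hr.le

lemma radialMass_deriv_ne_top (hU : IsRadialProfile n p R Λ U) (hp : 0 < p) :
    radialMass n p (deriv U) ≠ ⊤ :=
  ne_top_of_le_ne_top (ENNReal.mul_ne_top ENNReal.ofReal_ne_top (hU.radialMass_ne_top hp))
    hU.radialMass_deriv_le

lemma one_le_rpow_mul (hU : IsRadialProfile n p R Λ U) (hp : 1 < p) (hR : 0 < R) :
    1 ≤ R ^ p * Λ := by
  have hp0 : 0 < p := one_pos.trans hp
  have poincare : radialMass n p U * 1 ≤ radialMass n p U * ENNReal.ofReal (R ^ p * Λ) :=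
    calc radialMass n p U * 1
      _ ≤ ENNReal.ofReal (R ^ p) * radialMass n p (deriv U) := by
          rw [mul_one, hU.radialMass_eq_setLIntegral hp0]
          exact setLIntegral_enorm_rpow_radialMeasure_le hp hR hU.contDiff (hU.eq_zero le_rfl)
      _ ≤ ENNReal.ofReal (R ^ p) * (ENNReal.ofReal Λ * radialMass n p U) := by
          gcongr
          exact hU.radialMass_deriv_le
      _ = radialMass n p U * ENNReal.ofReal (R ^ p * Λ) := by
          rw [ENNReal.ofReal_mul (by positivity)]
          ring
  rwa [ENNReal.mul_le_mul_iff_right hU.radialMass_ne_zero (hU.radialMass_ne_top hp0),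
    ENNReal.one_le_ofReal] at poincare

lemma ofReal_div_pow_mul_radialMass_le (hU : IsRadialProfile n p R Λ U) (hp : 0 < p) (hR : 0 < R)
    {b : ℝ} (hρ : 0 < ρ) (hb : b * ρ ≤ R) :
    ENNReal.ofReal ((ρ / R) ^ (n + 1)) * radialMass n p U
      ≤ ∫⁻ r in Iio ρ, ‖U (b * r)‖ₑ ^ p ∂radialMeasure n := by
  have hscale := setLIntegral_Iio_radialMeasure_eq_mul_comp_mul (n := n) (fun r => ‖U r‖ₑ ^ p)
    (div_pos hR hρ) ρ
  rw [div_mul_cancel₀ _ hρ.ne', ← hU.radialMass_eq_setLIntegral hp] at hscale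
  rw [hscale, ← mul_assoc, ← ENNReal.ofReal_mul (by positivity), ← mul_pow,
    div_mul_div_cancel₀ hR.ne', div_self hρ.ne', one_pow, ENNReal.ofReal_one, one_mul]
  refine lintegral_mono_ae ((ae_restrict_of_ae ae_radialMeasure_pos).mono fun r hr => ?_)
  gcongr
  refine hU.enorm_le ?_
  gcongr
  rwa [le_div_iff₀ hρ]

end IsRadialProfile

lemma lambdaPQ_ball_pos [NeZero N] (hp : 1 < p) (hR : 0 < R) (c : EuclideanSpace ℝ (Fin N)) :
    0 < lambdaPQ p p (ball c R) := by
  have hRp : 0 < R ^ p := Real.rpow_pos_of_pos hR p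
  refine (inv_pos.2 hRp).trans_le (le_of_forall_gt_imp_ge_of_dense fun Λ hΛ => ?_)
  obtain ⟨U, hU⟩ := exists_isRadialProfile (one_pos.trans hp) hR c hΛ
  exact (inv_le_iff_one_le_mul₀' hRp).2 (hU.one_le_rpow_mul hp hR)

namespace IsRadialProfile

variable [NeZero N] {c : EuclideanSpace ℝ (Fin N)} {U : ℝ → ℝ} {ε : ℝ}

lemma setLIntegral_deriv_le (hU : IsRadialProfile (N - 1) p R (lambdaPQ p p (ball c R) + ε) U)
    (hp : 0 < p) (hR : 0 < R) (hε : 0 ≤ ε) (ρ : ℝ) :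
    ∫⁻ r in Iio ρ, ‖deriv U r‖ₑ ^ p ∂radialMeasure (N - 1)
      ≤ ENNReal.ofReal (lambdaPQ p p (ball c R)) *
          ∫⁻ r in Iio ρ, ‖U r‖ₑ ^ p ∂radialMeasure (N - 1)
        + ENNReal.ofReal ε * radialMass (N - 1) p U := by
  set l := ENNReal.ofReal (lambdaPQ p p (ball c R))
  set inner := ∫⁻ r in Iio ρ, ‖U r‖ₑ ^ p ∂radialMeasure (N - 1)
  set E := ∫⁻ r in Ici ρ, ‖deriv U r‖ₑ ^ p ∂radialMeasure (N - 1) with hE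
  have total : radialMass (N - 1) p (deriv U)
      ≤ l * radialMass (N - 1) p U + ENNReal.ofReal ε * radialMass (N - 1) p U := by
    rw [← add_mul, ← ENNReal.ofReal_add (lambdaPQ_nonneg p p _) hε]
    exact hU.radialMass_deriv_le
  have mass_split : radialMass (N - 1) p U
      ≤ inner + ∫⁻ r in Iio R, ‖U (max ρ r)‖ₑ ^ p ∂radialMeasure (N - 1) := by
    rw [hU.radialMass_eq_setLIntegral hp, ← lintegral_inter_add_sdiff _ _ measurableSet_Iio]
    refine add_le_add (lintegral_mono_set inter_subset_right) ?_
    refine (setLIntegral_mono' (measurableSet_Iio.diff measurableSet_Iio) fun r hr => ?_).trans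
      (lintegral_mono_set sdiff_subset)
    rw [max_eq_right (not_lt.1 hr.2)]
  have outer : l * ∫⁻ r in Iio R, ‖U (max ρ r)‖ₑ ^ p ∂radialMeasure (N - 1) ≤ E := by
    rcases le_total ρ R with hρ | hρ
    · refine (ofReal_lambdaPQ_ball_mul_setLIntegral_radialMeasure_le hp hR c hU.contDiff
        (hU.eq_zero le_rfl) hρ).trans (lintegral_mono_set fun r hr => hr.1.le)
    · simp [fun r : ℝ => hU.eq_zero (hρ.trans (le_max_left ρ r)), hp]
  have hE_top : E ≠ ⊤ :=
    ne_top_of_le_ne_top (hU.radialMass_deriv_ne_top hp) (setLIntegral_le_lintegral _ _)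
  refine (ENNReal.add_le_add_iff_right hE_top).1 ?_
  calc ∫⁻ r in Iio ρ, ‖deriv U r‖ₑ ^ p ∂radialMeasure (N - 1) + E
    _ = radialMass (N - 1) p (deriv U) := by
        rw [hE, ← compl_Iio, lintegral_add_compl _ measurableSet_Iio, radialMass]
    _ ≤ l * (inner + ∫⁻ r in Iio R, ‖U (max ρ r)‖ₑ ^ p ∂radialMeasure (N - 1))
          + ENNReal.ofReal ε * radialMass (N - 1) p U := total.trans (by gcongr)
    _ ≤ (l * inner + E) + ENNReal.ofReal ε * radialMass (N - 1) p U := by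
        rw [mul_add]
        gcongr
    _ = l * inner + ENNReal.ofReal ε * radialMass (N - 1) p U + E := add_right_comm ..

lemma setLIntegral_deriv_comp_mul_le
    (hU : IsRadialProfile (N - 1) p R (lambdaPQ p p (ball c R) + ε) U)
    (hp : 0 < p) (hR : 0 < R) (hε : 0 ≤ ε) {b : ℝ} (hb : 0 < b) (ρ : ℝ) :
    ∫⁻ r in Iio ρ, ‖deriv U (b * r)‖ₑ ^ p ∂radialMeasure (N - 1)
      ≤ ENNReal.ofReal (lambdaPQ p p (ball c R)) *
          ∫⁻ r in Iio ρ, ‖U (b * r)‖ₑ ^ p ∂radialMeasure (N - 1)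
        + ENNReal.ofReal (ε / b ^ N) * radialMass (N - 1) p U := by
  have truncated := hU.setLIntegral_deriv_le hp hR hε (b * ρ)
  have hbN : 0 < b ^ N := pow_pos hb N
  rw [setLIntegral_Iio_radialMeasure_eq_mul_comp_mul (fun r => ‖deriv U r‖ₑ ^ p) hb,
    setLIntegral_Iio_radialMeasure_eq_mul_comp_mul (fun r => ‖U r‖ₑ ^ p) hb,
    Nat.sub_add_cancel NeZero.one_le] at truncated
  refine (ENNReal.mul_le_mul_iff_right (a := ENNReal.ofReal (b ^ N)) (by simpa) (by simp)).1 ?_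
  refine truncated.trans_eq ?_
  rw [mul_add, mul_left_comm, ← mul_assoc (ENNReal.ofReal (b ^ N)) (ENNReal.ofReal (ε / b ^ N)),
    ← ENNReal.ofReal_mul hbN.le, mul_div_cancel₀ _ hbN.ne']

end IsRadialProfile

end DecreasingProfiles

section RaySlices

variable {E : Type*} [NormedAddCommGroup E] [NormedSpace ℝ E] {A : Set E} {x₀ : E}

/-- `A` meets every ray from `x₀` in the segment of length `ρ θ`, without its endpoints. -/
def HasRadialFunction (A : Set E) (x₀ : E) (ρ : sphere (0 : E) 1 → ℝ) : Prop :=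
  ∀ (θ : sphere (0 : E) 1) (r : ℝ), 0 < r → (x₀ + r • (θ : E) ∈ A ↔ r < ρ θ)

lemma exists_add_smul_mem_iff_lt (hA : Convex ℝ A) (ho : IsOpen A)
    (hb : Bornology.IsBounded A) (hx₀ : x₀ ∈ closure A) {v : E} (hv : v ≠ 0) :
    ∃ ρ : ℝ, ∀ r : ℝ, 0 < r → (x₀ + r • v ∈ A ↔ r < ρ) := by
  set I : Set ℝ := {r | 0 < r ∧ x₀ + r • v ∈ A}
  have I_bdd : BddAbove I := by
    obtain ⟨C, hC⟩ := hb.subset_closedBall x₀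
    refine ⟨C / ‖v‖, fun r hr => (le_div_iff₀ (norm_pos_iff.2 hv)).2 ?_⟩
    simpa [norm_smul, abs_of_pos hr.1] using hC hr.2
  have I_lower {r s : ℝ} (hr : r ∈ I) (hs : 0 < s) (hsr : s < r) : x₀ + s • v ∈ A := by
    have segment_subset := hA.openSegment_closure_interior_subset_interior hx₀
      (ho.interior_eq.symm ▸ hr.2)
    rw [ho.interior_eq] at segment_subset
    refine segment_subset ⟨1 - s / r, s / r, sub_pos.2 ((div_lt_one hr.1).2 hsr),
      div_pos hs hr.1, sub_add_cancel _ _, ?_⟩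
    rw [smul_add, smul_smul, div_mul_cancel₀ _ hr.1.ne', ← add_assoc, ← add_smul,
      sub_add_cancel, one_smul]
  refine ⟨sSup I, fun r hr => ⟨fun hrA => ?_, fun hlt => ?_⟩⟩
  · have near : ∀ᶠ s in 𝓝[>] r, x₀ + s • v ∈ A :=
      ((by fun_prop : Continuous fun s : ℝ => x₀ + s • v).continuousAt.eventually_mem
        (ho.mem_nhds hrA)).filter_mono nhdsWithin_le_nhds
    obtain ⟨s, hsA, hrs⟩ := (near.and self_mem_nhdsWithin).exists
    exact lt_of_lt_of_le hrs (le_csSup I_bdd ⟨hr.trans hrs, hsA⟩)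
  · have I_nonempty : I.Nonempty := by
      by_contra h
      rw [not_nonempty_iff_eq_empty.1 h, Real.sSup_empty] at hlt
      exact hlt.not_gt hr
    obtain ⟨s, hs, hrs⟩ := exists_lt_of_lt_csSup I_nonempty hlt
    exact I_lower hs hr hrs

lemma exists_hasRadialFunction (hA : Convex ℝ A) (ho : IsOpen A) (hb : Bornology.IsBounded A)
    (hx₀ : x₀ ∈ closure A) : ∃ ρ, HasRadialFunction A x₀ ρ := by
  choose ρ hρ using fun θ : sphere (0 : E) 1 =>
    exists_add_smul_mem_iff_lt hA ho hb hx₀ (ne_zero_of_mem_unit_sphere θ)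
  exact ⟨ρ, hρ⟩

lemma HasRadialFunction.inter_cone {ρ : sphere (0 : E) 1 → ℝ} (hA : HasRadialFunction A x₀ ρ)
    {K : Set E} (hK : ∀ (v : E) (r : ℝ), 0 < r → (x₀ + r • v ∈ K ↔ x₀ + v ∈ K)) :
    ∃ ρ', HasRadialFunction (A ∩ K) x₀ ρ' := by
  classical
  refine ⟨fun θ => if x₀ + (θ : E) ∈ K then ρ θ else 0, fun θ r hr => ?_⟩
  rw [mem_inter_iff, hA θ r hr, hK θ r hr]
  by_cases h : x₀ + (θ : E) ∈ K
  · simp [h]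
  · simp [h, hr.le]

variable [FiniteDimensional ℝ E] [MeasurableSpace E] [BorelSpace E] [Nontrivial E]

lemma HasRadialFunction.setLIntegral_eq {ρ : sphere (0 : E) 1 → ℝ} (hA : HasRadialFunction A x₀ ρ)
    (hAm : MeasurableSet A) (μ : Measure E) [μ.IsAddHaarMeasure] {F : E → ℝ≥0∞}
    (hF : Measurable F) :
    ∫⁻ x in A, F x ∂μ = ∫⁻ θ, ∫⁻ r in Iio (ρ θ), F (x₀ + r • (θ : E))
      ∂radialMeasure (Module.finrank ℝ E - 1) ∂μ.toSphere := by
  rw [← lintegral_indicator hAm,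
    lintegral_eq_lintegral_toSphere_radialMeasure μ (hF.indicator hAm) x₀]
  refine lintegral_congr fun θ => ?_
  rw [← lintegral_indicator measurableSet_Iio]
  refine lintegral_congr_ae (ae_radialMeasure_pos.mono fun r hr => ?_)
  simp only [indicator, mem_Iio, hA θ r hr]

end RaySlices

section CappedRadius

variable {E : Type*} [NormedAddCommGroup E] {κ : ℝ} {x₀ e : E} {Ω : Set E}

lemma abs_mul_norm_sub_sub_mul_norm_sub_le (hκ : 0 ≤ κ) (x y : E) :
    |κ * ‖x - x₀‖ - κ * ‖y - x₀‖| ≤ κ * ‖x - y‖ := by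
  rw [← mul_sub, abs_mul, abs_of_nonneg hκ]
  gcongr
  simpa using abs_norm_sub_norm_le (x - x₀) (y - x₀)

variable [InnerProductSpace ℝ E]

/-- The distance to `x₀` measured by the bodies `{‖x - x₀‖ ≤ s / κ, ⟪x - x₀, e⟫ ≤ s}`, that is by
balls around `x₀` whose cap in direction `e` has been cut off. -/
noncomputable def cappedRadius (κ : ℝ) (x₀ e x : E) : ℝ :=
  max (κ * ‖x - x₀‖) (inner ℝ (x - x₀) e)

/-- The open cone of directions from `x₀` in which the bodies of `cappedRadius` are not cut. -/
def uncutCone (κ : ℝ) (x₀ e : E) : Set E := {x | inner ℝ (x - x₀) e < κ * ‖x - x₀‖}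

lemma isOpen_uncutCone : IsOpen (uncutCone κ x₀ e) :=
  isOpen_lt (by fun_prop) (by fun_prop)

lemma add_smul_mem_uncutCone_iff (v : E) (r : ℝ) (hr : 0 < r) :
    x₀ + r • v ∈ uncutCone κ x₀ e ↔ x₀ + v ∈ uncutCone κ x₀ e := by
  simp only [uncutCone, mem_ofPred_eq, add_sub_cancel_left, real_inner_smul_left, norm_smul,
    Real.norm_of_nonneg hr.le, mul_left_comm κ r, mul_lt_mul_iff_right₀ hr]

lemma cappedRadius_eq_of_mem {x : E} (hx : x ∈ uncutCone κ x₀ e) :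
    cappedRadius κ x₀ e x = κ * ‖x - x₀‖ :=
  max_eq_left (le_of_lt hx)

lemma mul_norm_le_cappedRadius (x : E) : κ * ‖x - x₀‖ ≤ cappedRadius κ x₀ e x :=
  le_max_left _ _

lemma inner_le_cappedRadius (x : E) : inner ℝ (x - x₀) e ≤ cappedRadius κ x₀ e x :=
  le_max_right _ _

lemma cappedRadius_nonneg (hκ : 0 ≤ κ) (x : E) : 0 ≤ cappedRadius κ x₀ e x :=
  (by positivity : 0 ≤ κ * ‖x - x₀‖).trans (mul_norm_le_cappedRadius x)

lemma cappedRadius_le_norm (hκ1 : κ ≤ 1) (he : ‖e‖ = 1) (x : E) :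
    cappedRadius κ x₀ e x ≤ ‖x - x₀‖ :=
  max_le (mul_le_of_le_one_left (norm_nonneg _) hκ1)
    ((real_inner_le_norm _ _).trans_eq (by rw [he, mul_one]))

lemma cappedRadius_add_smul (v : E) {r : ℝ} (hr : 0 ≤ r) :
    cappedRadius κ x₀ e (x₀ + r • v) = cappedRadius κ x₀ e (x₀ + v) * r := by
  simp only [cappedRadius, add_sub_cancel_left, norm_smul, Real.norm_of_nonneg hr,
    real_inner_smul_left, max_mul_of_nonneg _ _ hr, mul_comm r, mul_assoc]

lemma lipschitzWith_cappedRadius (hκ : 0 ≤ κ) (hκ1 : κ ≤ 1) (he : ‖e‖ = 1) :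
    LipschitzWith 1 (cappedRadius κ x₀ e) := by
  refine .of_dist_le_mul fun x y => ?_
  rw [NNReal.coe_one, one_mul, Real.dist_eq, dist_eq_norm]
  refine (abs_max_sub_max_le_max _ _ _ _).trans (max_le ?_ ?_)
  · exact (abs_mul_norm_sub_sub_mul_norm_sub_le hκ x y).trans
      (mul_le_of_le_one_left (norm_nonneg _) hκ1)
  · rw [← inner_sub_left, sub_sub_sub_cancel_right]
    exact (abs_real_inner_le_norm _ _).trans_eq (by rw [he, mul_one])

lemma norm_fderiv_comp_cappedRadius_le {U : ℝ → ℝ} (hU : Differentiable ℝ U) (hκ : 0 ≤ κ)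
    (hκ1 : κ ≤ 1) (he : ‖e‖ = 1) (x : E) :
    ‖fderiv ℝ (fun y => U (cappedRadius κ x₀ e y)) x‖ ≤ ‖deriv U (cappedRadius κ x₀ e x)‖ := by
  refine (norm_fderiv_comp_le_of_lip (η := cappedRadius κ x₀ e) zero_le_one (hU _)
    (.of_forall fun y => ?_)).trans_eq (mul_one _)
  simpa [Real.dist_eq, dist_eq_norm] using (lipschitzWith_cappedRadius hκ hκ1 he).dist_le_mul y x

lemma norm_fderiv_comp_cappedRadius_le_of_mem {U : ℝ → ℝ} (hU : Differentiable ℝ U) (hκ : 0 ≤ κ)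
    {x : E} (hx : x ∈ uncutCone κ x₀ e) :
    ‖fderiv ℝ (fun y => U (cappedRadius κ x₀ e y)) x‖ ≤ κ * ‖deriv U (cappedRadius κ x₀ e x)‖ := by
  rw [mul_comm]
  refine norm_fderiv_comp_le_of_lip (η := cappedRadius κ x₀ e) hκ (hU _) ?_
  filter_upwards [isOpen_uncutCone.mem_nhds hx] with y hy
  rw [cappedRadius_eq_of_mem hy, cappedRadius_eq_of_mem hx]
  exact abs_mul_norm_sub_sub_mul_norm_sub_le hκ y x

lemma exists_mem_inner_lt_norm_sub (hE : Module.finrank ℝ E ≠ 1) (ho : IsOpen Ω)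
    (hne : Ω.Nonempty) (x₀ : E) (he : ‖e‖ = 1) : ∃ y ∈ Ω, inner ℝ (y - x₀) e < ‖y - x₀‖ := by
  by_contra! all_aligned
  have mem_span {y : E} (hy : y ∈ Ω) : y - x₀ ∈ Submodule.span ℝ {e} := by
    have cauchy_schwarz_eq : inner ℝ (y - x₀) e = ‖y - x₀‖ * ‖e‖ :=
      (real_inner_le_norm _ _).antisymm (by rw [he, mul_one]; exact all_aligned y hy)
    rw [inner_eq_norm_mul_iff_real, he, one_smul] at cauchy_schwarz_eq
    rw [cauchy_schwarz_eq]
    exact Submodule.smul_mem _ _ (Submodule.mem_span_singleton_self e)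
  have span_eq_top : Submodule.span ℝ {e} = ⊤ := by
    refine Submodule.eq_top_of_nonempty_interior' _ ?_
    obtain ⟨y, hy⟩ := hne
    refine ⟨y - x₀, mem_interior.2 ⟨(· + x₀) ⁻¹' Ω, fun z hz => ?_,
      ho.preimage (continuous_add_const x₀), by simpa⟩⟩
    simpa using mem_span hz
  apply hE
  rw [← finrank_top ℝ E, ← span_eq_top, finrank_span_singleton (norm_ne_zero_iff.1 (by simp [he]))]

lemma exists_nonempty_inter_uncutCone (hE : Module.finrank ℝ E ≠ 1) (ho : IsOpen Ω)
    (hne : Ω.Nonempty) (x₀ : E) (he : ‖e‖ = 1) :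
    ∃ κ, 0 < κ ∧ κ < 1 ∧ (Ω ∩ uncutCone κ x₀ e).Nonempty := by
  obtain ⟨y, hy, hlt⟩ := exists_mem_inner_lt_norm_sub hE ho hne x₀ he
  have hpos : 0 < ‖y - x₀‖ := norm_pos_iff.2 fun h => by simp [h] at hlt
  obtain ⟨κ, hκ, hκ1⟩ := exists_between (max_lt one_pos ((div_lt_one hpos).2 hlt))
  rw [max_lt_iff, div_lt_iff₀ hpos] at hκ
  exact ⟨κ, hκ.1, hκ1, y, hy, hκ.2⟩

end CappedRadius

section ConicalTestFunctions

variable {N : ℕ} {p R κ ε : ℝ} {c x₀ e : EuclideanSpace ℝ (Fin N)}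
  {A Ω : Set (EuclideanSpace ℝ (Fin N))} {η : EuclideanSpace ℝ (Fin N) → ℝ} {U : ℝ → ℝ}

lemma IsRadialProfile.exists_lipschitzWith_comp {n : ℕ} {Λ : ℝ} (hU : IsRadialProfile n p R Λ U)
    (hR : 0 ≤ R) {K : ℝ≥0} (hη : LipschitzWith K η) (hη0 : ∀ x, 0 ≤ η x) :
    ∃ K', LipschitzWith K' fun x => U (η x) := by
  obtain ⟨L, hL⟩ := exists_lipschitzWith_comp_projIcc hU.contDiff hR
  refine ⟨L * K, ?_⟩
  convert hL.comp hη using 2 with x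
  rcases le_total (η x) R with h | h
  · rw [Function.comp_apply, projIcc_of_mem hR ⟨hη0 x, h⟩]
  · rw [Function.comp_apply, projIcc_of_right_le hR h, hU.eq_zero h, hU.eq_zero le_rfl]

lemma setLIntegral_fderiv_comp_cappedRadius_le (hU : Differentiable ℝ U) (hp : 0 ≤ p) (hκ : 0 < κ)
    (hκ1 : κ ≤ 1) (he : ‖e‖ = 1) (hΩ : MeasurableSet Ω) :
    ∫⁻ x in Ω, ‖fderiv ℝ (fun y => U (cappedRadius κ x₀ e y)) x‖ₑ ^ p
      ≤ ENNReal.ofReal (κ ^ p)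
          * (∫⁻ x in Ω ∩ uncutCone κ x₀ e, ‖deriv U (cappedRadius κ x₀ e x)‖ₑ ^ p)
        + ∫⁻ x in Ω ∩ (uncutCone κ x₀ e)ᶜ, ‖deriv U (cappedRadius κ x₀ e x)‖ₑ ^ p := by
  have hK : MeasurableSet (uncutCone κ x₀ e) := isOpen_uncutCone.measurableSet
  rw [← lintegral_inter_add_sdiff (μ := volume) _ Ω hK, sdiff_eq,
    ← lintegral_const_mul' _ _ ENNReal.ofReal_ne_top]
  refine add_le_add (setLIntegral_mono' (hΩ.inter hK) fun x hx => ?_) (lintegral_mono fun x => ?_)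
  · rw [← ENNReal.ofReal_rpow_of_nonneg hκ.le hp, ← ENNReal.mul_rpow_of_nonneg _ _ hp,
      ← ofReal_norm, ← ofReal_norm, ← ENNReal.ofReal_mul hκ.le]
    gcongr
    exact norm_fderiv_comp_cappedRadius_le_of_mem hU hκ.le hx.2
  · rw [← ofReal_norm, ← ofReal_norm]
    gcongr
    exact norm_fderiv_comp_cappedRadius_le hU hκ.le hκ1 he x

variable [NeZero N]

lemma IsRadialProfile.setLIntegral_deriv_comp_le
    (hU : IsRadialProfile (N - 1) p R (lambdaPQ p p (ball c R) + ε) U)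
    (hp : 0 < p) (hR : 0 < R) (hε : 0 ≤ ε) {ρ : sphere (0 : EuclideanSpace ℝ (Fin N)) 1 → ℝ}
    (hA : HasRadialFunction A x₀ ρ) (hAm : MeasurableSet A) (hκ : 0 < κ) (hηc : Continuous η)
    (hη : ∀ v r, 0 ≤ r → η (x₀ + r • v) = η (x₀ + v) * r) (hκη : ∀ x, κ * ‖x - x₀‖ ≤ η x) :
    ∫⁻ x in A, ‖deriv U (η x)‖ₑ ^ p
      ≤ ENNReal.ofReal (lambdaPQ p p (ball c R)) * (∫⁻ x in A, ‖U (η x)‖ₑ ^ p)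
        + ENNReal.ofReal (ε / κ ^ N) * radialMass (N - 1) p U
          * (volume : Measure (EuclideanSpace ℝ (Fin N))).toSphere univ := by
  have on_ray {f : ℝ → ℝ} (hf : Continuous f) : ∫⁻ x in A, ‖f (η x)‖ₑ ^ p
      = ∫⁻ θ, ∫⁻ r in Iio (ρ θ), ‖f (η (x₀ + θ) * r)‖ₑ ^ p ∂radialMeasure (N - 1)
        ∂(volume : Measure (EuclideanSpace ℝ (Fin N))).toSphere := by
    have hfη : Measurable fun x => ‖f (η x)‖ₑ ^ p :=
      (hf.comp hηc).measurable.enorm.pow_const p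
    rw [hA.setLIntegral_eq hAm volume hfη, finrank_euclideanSpace_fin]
    refine lintegral_congr fun θ => lintegral_congr_ae
      (ae_restrict_of_ae (ae_radialMeasure_pos.mono fun r hr => ?_))
    simp only [hη _ r hr.le]
  rw [on_ray (hU.contDiff.continuous_deriv le_rfl), on_ray hU.contDiff.continuous,
    ← lintegral_const, ← lintegral_const_mul' _ _ ENNReal.ofReal_ne_top,
    ← lintegral_add_right _ measurable_const]
  refine lintegral_mono fun θ => ?_
  have hκ_le : κ ≤ η (x₀ + θ) := by simpa using hκη (x₀ + θ)
  refine (hU.setLIntegral_deriv_comp_mul_le hp hR hε (hκ.trans_le hκ_le) _).trans ?_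
  gcongr

lemma exists_mul_radialMass_le_setLIntegral (hp : 0 < p) (hR : 0 < R) (hAo : IsOpen A)
    {ρ : sphere (0 : EuclideanSpace ℝ (Fin N)) 1 → ℝ} (hA : HasRadialFunction A x₀ ρ)
    {y : EuclideanSpace ℝ (Fin N)} (hy : y ∈ A) (hyx : y ≠ x₀) (hηc : Continuous η)
    (hη : ∀ v r, 0 ≤ r → η (x₀ + r • v) = η (x₀ + v) * r) (hη_le : ∀ x, η x ≤ ‖x - x₀‖) :
    ∃ m ≠ 0, ∀ {Λ : ℝ} {U : ℝ → ℝ}, IsRadialProfile (N - 1) p R Λ U →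
      m * radialMass (N - 1) p U ≤ ∫⁻ x in A, ‖U (η x)‖ₑ ^ p := by
  set σ := (volume : Measure (EuclideanSpace ℝ (Fin N))).toSphere
  set ρ₀ := ‖y - x₀‖
  have hρ₀ : 0 < ρ₀ := norm_sub_pos_iff.2 hyx
  set Θ : Set (sphere (0 : EuclideanSpace ℝ (Fin N)) 1) := {θ | x₀ + ρ₀ • (θ : _) ∈ A}
  have Θ_open : IsOpen Θ := hAo.preimage (by fun_prop)
  have Θ_nonempty : Θ.Nonempty := by
    refine ⟨⟨ρ₀⁻¹ • (y - x₀), ?_⟩, ?_⟩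
    · rw [mem_sphere_zero_iff_norm, norm_smul, norm_inv, norm_norm, inv_mul_cancel₀ hρ₀.ne']
    · simpa [Θ, smul_smul, hρ₀.ne'] using hy
  set δ := min ρ₀ R
  have hδ : 0 < δ := lt_min hρ₀ hR
  refine ⟨ENNReal.ofReal ((δ / R) ^ N) * σ Θ, mul_ne_zero (by simpa using by positivity)
    (Θ_open.measure_pos σ Θ_nonempty).ne', fun {Λ U} hU => ?_⟩
  have hUη : Measurable fun x => ‖U (η x)‖ₑ ^ p :=
    (hU.contDiff.continuous.comp hηc).measurable.enorm.pow_const p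
  rw [hA.setLIntegral_eq hAo.measurableSet volume hUη, finrank_euclideanSpace_fin, mul_right_comm,
    ← setLIntegral_const]
  refine (setLIntegral_mono' Θ_open.measurableSet fun θ hθ => ?_).trans
    (setLIntegral_le_lintegral _ _)
  have hδρ : δ ≤ ρ θ := (min_le_left _ _).trans ((hA θ ρ₀ hρ₀).1 hθ).le
  have hη_one : η (x₀ + θ) ≤ 1 := by simpa using hη_le (x₀ + θ)
  calc ENNReal.ofReal ((δ / R) ^ N) * radialMass (N - 1) p U
    _ ≤ ∫⁻ r in Iio δ, ‖U (1 * r)‖ₑ ^ p ∂radialMeasure (N - 1) := by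
        simpa [Nat.sub_add_cancel NeZero.one_le] using
          hU.ofReal_div_pow_mul_radialMass_le hp hR hδ (b := 1) (by simp [δ])
    _ ≤ ∫⁻ r in Iio δ, ‖U (η (x₀ + r • (θ : _)))‖ₑ ^ p ∂radialMeasure (N - 1) := by
        refine lintegral_mono_ae (ae_restrict_of_ae (ae_radialMeasure_pos.mono fun r hr => ?_))
        rw [hη _ r hr.le]
        gcongr
        refine hU.enorm_le ?_
        gcongr
    _ ≤ _ := lintegral_mono_set (Iio_subset_Iio hδρ)

lemma exists_pos_ofReal_div_mul_lt {a m : ℝ≥0∞} (ha : a ≠ ⊤) (hm : m ≠ 0) (b : ℝ) :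
    ∃ ε > 0, ENNReal.ofReal (ε / b) * a < m := by
  have hlim : Tendsto (fun ε : ℝ => ENNReal.ofReal (ε / b) * a) (𝓝[>] 0) (𝓝 0) := by
    have h0 := ENNReal.Tendsto.mul_const (b := a)
      (ENNReal.tendsto_ofReal ((continuous_id.div_const b).tendsto 0)) (.inr ha)
    simp only [id, zero_div, ENNReal.ofReal_zero, zero_mul] at h0
    exact h0.mono_left nhdsWithin_le_nhds
  obtain ⟨ε, hεm, hε⟩ := ((hlim.eventually_lt_const hm.bot_lt).and self_mem_nhdsWithin).exists
  exact ⟨ε, hε, hεm⟩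

lemma ofReal_add_ofReal_one_sub {a : ℝ} (ha : 0 ≤ a) (ha1 : a ≤ 1) :
    ENNReal.ofReal a + ENNReal.ofReal (1 - a) = 1 := by
  rw [← ENNReal.ofReal_add ha (sub_nonneg.2 ha1), add_sub_cancel, ENNReal.ofReal_one]

lemma IsRadialProfile.setLIntegral_fderiv_comp_cappedRadius_add_le
    (hU : IsRadialProfile (N - 1) p R (lambdaPQ p p (ball c R) + ε) U)
    (hp : 0 < p) (hR : 0 < R) (hε : 0 ≤ ε) (hκ : 0 < κ) (hκ1 : κ ≤ 1) (he : ‖e‖ = 1)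
    (hΩm : MeasurableSet Ω) {ρ : sphere (0 : EuclideanSpace ℝ (Fin N)) 1 → ℝ}
    (hΩ : HasRadialFunction Ω x₀ ρ) :
    (∫⁻ x in Ω, ‖fderiv ℝ (fun y => U (cappedRadius κ x₀ e y)) x‖ₑ ^ p)
        + ENNReal.ofReal (1 - κ ^ p) * (ENNReal.ofReal (lambdaPQ p p (ball c R)) *
          ∫⁻ x in Ω ∩ uncutCone κ x₀ e, ‖U (cappedRadius κ x₀ e x)‖ₑ ^ p)
      ≤ ENNReal.ofReal (lambdaPQ p p (ball c R)) *
          (∫⁻ x in Ω, ‖U (cappedRadius κ x₀ e x)‖ₑ ^ p)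
        + 2 * (ENNReal.ofReal (ε / κ ^ N) * radialMass (N - 1) p U
          * (volume : Measure (EuclideanSpace ℝ (Fin N))).toSphere univ) := by
  have hKm : MeasurableSet (uncutCone κ x₀ e) := isOpen_uncutCone.measurableSet
  have hη_hom (v : EuclideanSpace ℝ (Fin N)) (r : ℝ) (hr : 0 ≤ r) := cappedRadius_add_smul
    (κ := κ) (x₀ := x₀) (e := e) v hr
  have hη_cont := (lipschitzWith_cappedRadius (x₀ := x₀) hκ.le hκ1 he).continuous
  obtain ⟨ρ₁, hρ₁⟩ := hΩ.inter_cone (K := uncutCone κ x₀ e) add_smul_mem_uncutCone_iff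
  obtain ⟨ρ₂, hρ₂⟩ := hΩ.inter_cone (K := (uncutCone κ x₀ e)ᶜ)
    fun v r hr => (add_smul_mem_uncutCone_iff v r hr).not
  have energy₁ := hU.setLIntegral_deriv_comp_le hp hR hε hρ₁ (hΩm.inter hKm) hκ hη_cont hη_hom
    mul_norm_le_cappedRadius
  have energy₂ := hU.setLIntegral_deriv_comp_le hp hR hε hρ₂ (hΩm.inter hKm.compl) hκ hη_cont
    hη_hom mul_norm_le_cappedRadius
  have hUd := hU.contDiff.differentiable one_ne_zero
  have weights := ofReal_add_ofReal_one_sub (by positivity) (Real.rpow_le_one hκ.le hκ1 hp.le)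
  rw [← lintegral_inter_add_sdiff (fun x => ‖U (cappedRadius κ x₀ e x)‖ₑ ^ p) Ω hKm, sdiff_eq]
  set l := ENNReal.ofReal (lambdaPQ p p (ball c R))
  set X₁ := ∫⁻ x in Ω ∩ uncutCone κ x₀ e, ‖U (cappedRadius κ x₀ e x)‖ₑ ^ p
  set X₂ := ∫⁻ x in Ω ∩ (uncutCone κ x₀ e)ᶜ, ‖U (cappedRadius κ x₀ e x)‖ₑ ^ p
  set err := ENNReal.ofReal (ε / κ ^ N) * radialMass (N - 1) p U *
    (volume : Measure (EuclideanSpace ℝ (Fin N))).toSphere univ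
  calc _ ≤ ENNReal.ofReal (κ ^ p) * (l * X₁ + err) + (l * X₂ + err)
          + ENNReal.ofReal (1 - κ ^ p) * (l * X₁) := by
        gcongr
        refine (setLIntegral_fderiv_comp_cappedRadius_le hUd hp.le hκ hκ1 he hΩm).trans ?_
        gcongr
    _ = (ENNReal.ofReal (κ ^ p) + ENNReal.ofReal (1 - κ ^ p)) * (l * X₁) + l * X₂
          + (ENNReal.ofReal (κ ^ p) * err + err) := by ring
    _ ≤ l * (X₁ + X₂) + 2 * err := by
        rw [weights, one_mul, ← mul_add, two_mul]
        gcongr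
        exact mul_le_of_le_one_left zero_le (weights ▸ le_self_add)

lemma IsRadialProfile.setLIntegral_fderiv_comp_cappedRadius_lt
    (hU : IsRadialProfile (N - 1) p R (lambdaPQ p p (ball c R) + ε) U)
    (hp : 0 < p) (hR : 0 < R) (hε : 0 ≤ ε) (hκ : 0 < κ) (hκ1 : κ ≤ 1) (he : ‖e‖ = 1)
    (hΩm : MeasurableSet Ω) (hΩfin : volume Ω ≠ ⊤)
    {ρ : sphere (0 : EuclideanSpace ℝ (Fin N)) 1 → ℝ} (hΩ : HasRadialFunction Ω x₀ ρ) {m : ℝ≥0∞}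
    (hm : m * radialMass (N - 1) p U
      ≤ ∫⁻ x in Ω ∩ uncutCone κ x₀ e, ‖U (cappedRadius κ x₀ e x)‖ₑ ^ p)
    (hεm : ENNReal.ofReal (ε / κ ^ N)
        * (2 * (volume : Measure (EuclideanSpace ℝ (Fin N))).toSphere univ)
      < ENNReal.ofReal (1 - κ ^ p) * (ENNReal.ofReal (lambdaPQ p p (ball c R)) * m)) :
    ∫⁻ x in Ω, ‖fderiv ℝ (fun y => U (cappedRadius κ x₀ e y)) x‖ₑ ^ p
      < ENNReal.ofReal (lambdaPQ p p (ball c R)) *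
          ∫⁻ x in Ω, ‖U (cappedRadius κ x₀ e x)‖ₑ ^ p := by
  have mass_ne_top : ∫⁻ x in Ω, ‖U (cappedRadius κ x₀ e x)‖ₑ ^ p ≠ ⊤ :=
    lintegral_enorm_rpow_ne_top (C := U 0) hp.le (by simpa using hΩfin)
      (.of_forall fun x => by
        rw [Real.norm_of_nonneg (hU.nonneg _)]
        exact hU.antitone (cappedRadius_nonneg hκ.le x))
  set l := ENNReal.ofReal (lambdaPQ p p (ball c R))
  set S := (volume : Measure (EuclideanSpace ℝ (Fin N))).toSphere univ
  set X₁ := ∫⁻ x in Ω ∩ uncutCone κ x₀ e, ‖U (cappedRadius κ x₀ e x)‖ₑ ^ p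
  have error_lt_gap : 2 * (ENNReal.ofReal (ε / κ ^ N) * radialMass (N - 1) p U * S)
      < ENNReal.ofReal (1 - κ ^ p) * (l * X₁) :=
    calc 2 * (ENNReal.ofReal (ε / κ ^ N) * radialMass (N - 1) p U * S)
      _ = ENNReal.ofReal (ε / κ ^ N) * (2 * S) * radialMass (N - 1) p U := by ring
      _ < ENNReal.ofReal (1 - κ ^ p) * (l * m) * radialMass (N - 1) p U :=
          ENNReal.mul_lt_mul_left hU.radialMass_ne_zero (hU.radialMass_ne_top hp) hεm
      _ = ENNReal.ofReal (1 - κ ^ p) * (l * (m * radialMass (N - 1) p U)) := by ring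
      _ ≤ ENNReal.ofReal (1 - κ ^ p) * (l * X₁) := by gcongr
  have gap_ne_top : ENNReal.ofReal (1 - κ ^ p) * (l * X₁) ≠ ⊤ := by
    have hX₁ : X₁ ≠ ⊤ := ne_top_of_le_ne_top mass_ne_top (lintegral_mono_set inter_subset_left)
    finiteness
  refine (ENNReal.add_lt_add_iff_right gap_ne_top).1
    ((hU.setLIntegral_fderiv_comp_cappedRadius_add_le hp hR hε hκ hκ1 he hΩm hΩ).trans_lt ?_)
  exact ENNReal.add_lt_add_left (ENNReal.mul_ne_top ENNReal.ofReal_ne_top mass_ne_top) error_lt_gap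

lemma exists_lipschitz_setLIntegral_fderiv_lt (hN : N ≠ 1) (hp : 1 < p) (hR : 0 < R)
    (c : EuclideanSpace ℝ (Fin N)) (ho : IsOpen Ω) (hb : Bornology.IsBounded Ω) (hc : Convex ℝ Ω)
    (hne : Ω.Nonempty) (hx₀ : x₀ ∈ closure Ω) (he : ‖e‖ = 1) :
    ∃ φ : EuclideanSpace ℝ (Fin N) → ℝ, (∃ K, LipschitzWith K φ) ∧ (∀ x, 0 ≤ φ x) ∧
      (∃ R₀ < R, ∀ x, R₀ ≤ inner ℝ (x - x₀) e → φ x = 0) ∧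
      ∫⁻ x in Ω, ‖fderiv ℝ φ x‖ₑ ^ p
        < ENNReal.ofReal (lambdaPQ p p (ball c R)) * ∫⁻ x in Ω, ‖φ x‖ₑ ^ p := by
  have hp0 : 0 < p := one_pos.trans hp
  set l := lambdaPQ p p (ball c R)
  have hl : 0 < l := lambdaPQ_ball_pos hp hR c
  obtain ⟨κ, hκ, hκ1, y, hy⟩ := exists_nonempty_inter_uncutCone (by simpa) ho hne x₀ he
  obtain ⟨ρ, hρ⟩ := exists_hasRadialFunction hc ho hb hx₀
  obtain ⟨ρ', hρ'⟩ := hρ.inter_cone (K := uncutCone κ x₀ e) add_smul_mem_uncutCone_iff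
  have hyx : y ≠ x₀ := by
    rintro rfl
    simpa [uncutCone] using hy.2
  have hη := lipschitzWith_cappedRadius (x₀ := x₀) hκ.le hκ1.le he
  obtain ⟨m, hm0, hm⟩ := exists_mul_radialMass_le_setLIntegral hp0 hR (ho.inter isOpen_uncutCone)
    hρ' hy hyx hη.continuous (fun v r hr => cappedRadius_add_smul v hr)
    (cappedRadius_le_norm hκ1.le he)
  have gap_ne_zero : ENNReal.ofReal (1 - κ ^ p) * (ENNReal.ofReal l * m) ≠ 0 := by
    have := Real.rpow_lt_one hκ.le hκ1 hp0
    simp [hm0, hl, this]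
  obtain ⟨ε, hε, hεm⟩ := exists_pos_ofReal_div_mul_lt
    (a := 2 * (volume : Measure (EuclideanSpace ℝ (Fin N))).toSphere univ)
    (ENNReal.mul_ne_top ENNReal.ofNat_ne_top (measure_ne_top _ _)) gap_ne_zero (κ ^ N)
  obtain ⟨U, hU⟩ := exists_isRadialProfile hp0 hR c (lt_add_of_pos_right l hε)
  refine ⟨fun x => U (cappedRadius κ x₀ e x),
    hU.exists_lipschitzWith_comp hR.le hη (cappedRadius_nonneg hκ.le), fun x => hU.nonneg _, ?_, ?_⟩
  · obtain ⟨R₀, hR₀, hU0⟩ := hU.exists_radius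
    exact ⟨R₀, hR₀, fun x hx => hU0 _ (hx.trans (inner_le_cappedRadius x))⟩
  · exact hU.setLIntegral_fderiv_comp_cappedRadius_lt hp0 hR hε.le hκ hκ1.le he ho.measurableSet
      hb.measure_lt_top.ne hρ (hm hU) hεm

end ConicalTestFunctions

section NeumannUpperBound

variable {N : ℕ} {p Λ : ℝ} {Ω : Set (EuclideanSpace ℝ (Fin N))}
  {v φ φ₁ φ₂ : EuclideanSpace ℝ (Fin N) → ℝ}

/-- The competitors in the definition of the Neumann eigenvalue `muPQ p q Ω`: nontrivial Lipschitz
functions `v` on `closure Ω` with `∫_Ω |v|^(q-2) v = 0`. -/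
def IsNeumannTest (q : ℝ) (Ω : Set (EuclideanSpace ℝ (Fin N)))
    (v : EuclideanSpace ℝ (Fin N) → ℝ) : Prop :=
  (∃ K : ℝ≥0, LipschitzOnWith K v (closure Ω)) ∧ (∃ x ∈ Ω, v x ≠ 0) ∧
    ∫ x in Ω, |v x| ^ (q - 2) * v x = 0

lemma muPQ_eq_sInf_image (p q : ℝ) (Ω : Set (EuclideanSpace ℝ (Fin N))) :
    muPQ p q Ω = sInf (rayleighQuot p q Ω '' {v | IsNeumannTest q Ω v}) := by
  rw [muPQ]
  congr 1
  ext Q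
  exact ⟨fun ⟨v, K, hv, hne, hv0, hQ⟩ => ⟨v, ⟨⟨K, hv⟩, hne, hv0⟩, hQ.symm⟩,
    fun ⟨v, ⟨⟨K, hv⟩, hne, hv0⟩, hQ⟩ => ⟨v, K, hv, hne, hv0, hQ.symm⟩⟩

lemma muPQ_le_rayleighQuot {q : ℝ} (hv : IsNeumannTest q Ω v) :
    muPQ p q Ω ≤ rayleighQuot p q Ω v := by
  rw [muPQ_eq_sInf_image]
  exact csInf_le ⟨0, forall_mem_image.2 fun v _ => rayleighQuot_nonneg p q Ω v⟩
    (mem_image_of_mem _ hv)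

lemma le_muPQ {q : ℝ} (hne : ∃ v, IsNeumannTest q Ω v)
    (h : ∀ v, IsNeumannTest q Ω v → Λ ≤ rayleighQuot p q Ω v) : Λ ≤ muPQ p q Ω := by
  rw [muPQ_eq_sInf_image]
  exact le_csInf (image_nonempty.2 hne) (forall_mem_image.2 h)

lemma setLIntegral_enorm_rpow_ne_top_of_continuous (hp : 0 ≤ p) (hb : Bornology.IsBounded Ω)
    (hv : Continuous v) : ∫⁻ x in Ω, ‖v x‖ₑ ^ p ≠ ⊤ := by
  obtain ⟨C, hC⟩ := hb.isCompact_closure.exists_bound_of_continuousOn hv.continuousOn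
  refine ne_top_of_le_ne_top ?_ (lintegral_mono_set subset_closure)
  exact lintegral_enorm_rpow_ne_top hp (by simpa using hb.isCompact_closure.measure_ne_top)
    (ae_restrict_of_forall_mem isClosed_closure.measurableSet hC)

lemma rayleighQuot_self_lt (hp : 0 < p) (hb : Bornology.IsBounded Ω) (hv : Continuous v)
    (h : ∫⁻ x in Ω, ‖fderiv ℝ v x‖ₑ ^ p < ENNReal.ofReal Λ * ∫⁻ x in Ω, ‖v x‖ₑ ^ p) :
    rayleighQuot p p Ω v < Λ := by
  have mass_ne_top := setLIntegral_enorm_rpow_ne_top_of_continuous hp.le hb hv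
  obtain ⟨hΛ, mass_ne_zero⟩ := mul_ne_zero_iff.1 (zero_le.trans_lt h).ne'
  rw [rayleighQuot_self_eq_toReal hp hv.aestronglyMeasurable,
    div_lt_iff₀ (ENNReal.toReal_pos mass_ne_zero mass_ne_top),
    ← ENNReal.toReal_ofReal (ENNReal.ofReal_ne_zero_iff.1 hΛ).le, ← ENNReal.toReal_mul]
  exact ENNReal.toReal_strict_mono (ENNReal.mul_ne_top ENNReal.ofReal_ne_top mass_ne_top) h

lemma enorm_sub_rpow_of_eq_zero_or {F : Type*} [NormedAddCommGroup F] {a b : F} (hp : 0 < p)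
    (h : a = 0 ∨ b = 0) : ‖a - b‖ₑ ^ p = ‖a‖ₑ ^ p + ‖b‖ₑ ^ p := by
  rcases h with rfl | rfl <;> simp [hp]

lemma enorm_fderiv_sub_rpow_of_eventuallyEq_zero_or (hp : 0 < p) {x : EuclideanSpace ℝ (Fin N)}
    (h : φ₁ =ᶠ[𝓝 x] 0 ∨ φ₂ =ᶠ[𝓝 x] 0) :
    ‖fderiv ℝ (φ₁ - φ₂) x‖ₑ ^ p = ‖fderiv ℝ φ₁ x‖ₑ ^ p + ‖fderiv ℝ φ₂ x‖ₑ ^ p := by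
  have fderiv_eq_zero {φ : EuclideanSpace ℝ (Fin N) → ℝ} (hφ : φ =ᶠ[𝓝 x] 0) : fderiv ℝ φ x = 0 := by
    rw [hφ.fderiv_eq, fderiv_zero, Pi.zero_apply]
  have fderiv_sub_eq : fderiv ℝ (φ₁ - φ₂) x = fderiv ℝ φ₁ x - fderiv ℝ φ₂ x := by
    rcases h with h | h
    · have h_sub : φ₁ - φ₂ =ᶠ[𝓝 x] -φ₂ := by simpa using h.sub (.refl _ φ₂)
      rw [h_sub.fderiv_eq, fderiv_eq_zero h, fderiv_neg, zero_sub]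
    · have h_sub : φ₁ - φ₂ =ᶠ[𝓝 x] φ₁ := by simpa using (Filter.EventuallyEq.refl _ φ₁).sub h
      rw [h_sub.fderiv_eq, fderiv_eq_zero h, sub_zero]
  rw [fderiv_sub_eq]
  exact enorm_sub_rpow_of_eq_zero_or hp (h.imp fderiv_eq_zero fderiv_eq_zero)

lemma setLIntegral_fderiv_sub_lt (hp : 0 < p) (hφ₁ : Measurable φ₁)
    (hdisj : ∀ x, φ₁ =ᶠ[𝓝 x] 0 ∨ φ₂ =ᶠ[𝓝 x] 0)
    (h₁ : ∫⁻ x in Ω, ‖fderiv ℝ φ₁ x‖ₑ ^ p < ENNReal.ofReal Λ * ∫⁻ x in Ω, ‖φ₁ x‖ₑ ^ p)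
    (h₂ : ∫⁻ x in Ω, ‖fderiv ℝ φ₂ x‖ₑ ^ p < ENNReal.ofReal Λ * ∫⁻ x in Ω, ‖φ₂ x‖ₑ ^ p) :
    ∫⁻ x in Ω, ‖fderiv ℝ (φ₁ - φ₂) x‖ₑ ^ p
      < ENNReal.ofReal Λ * ∫⁻ x in Ω, ‖(φ₁ - φ₂) x‖ₑ ^ p := by
  have mass_add (x : EuclideanSpace ℝ (Fin N)) :
      ‖(φ₁ - φ₂) x‖ₑ ^ p = ‖φ₁ x‖ₑ ^ p + ‖φ₂ x‖ₑ ^ p :=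
    enorm_sub_rpow_of_eq_zero_or hp ((hdisj x).imp (·.self_of_nhds) (·.self_of_nhds))
  simp_rw [enorm_fderiv_sub_rpow_of_eventuallyEq_zero_or hp (hdisj _), mass_add]
  rw [lintegral_add_left ((measurable_fderiv ℝ φ₁).enorm.pow_const p),
    lintegral_add_left (hφ₁.enorm.pow_const p), mul_add]
  exact ENNReal.add_lt_add h₁ h₂

lemma setLIntegral_fderiv_const_smul_lt (hp : 0 ≤ p) {t : ℝ} (ht : t ≠ 0)
    (h : ∫⁻ x in Ω, ‖fderiv ℝ φ x‖ₑ ^ p < ENNReal.ofReal Λ * ∫⁻ x in Ω, ‖φ x‖ₑ ^ p) :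
    ∫⁻ x in Ω, ‖fderiv ℝ (t • φ) x‖ₑ ^ p
      < ENNReal.ofReal Λ * ∫⁻ x in Ω, ‖(t • φ) x‖ₑ ^ p := by
  have ht_ne_top : ‖t‖ₑ ^ p ≠ ⊤ := ENNReal.rpow_ne_top_of_nonneg hp enorm_ne_top
  simp_rw [fderiv_const_smul_field, Pi.smul_apply, enorm_smul, ENNReal.mul_rpow_of_nonneg _ _ hp]
  rw [lintegral_const_mul' _ _ ht_ne_top, lintegral_const_mul' _ _ ht_ne_top, mul_left_comm]
  have ht_ne_zero : ‖t‖ₑ ^ p ≠ 0 := (ENNReal.rpow_pos (by simpa) enorm_ne_top).ne'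
  exact (ENNReal.mul_lt_mul_iff_right ht_ne_zero ht_ne_top).2 h

lemma integrableOn_rpow (hp : 0 ≤ p) (hb : Bornology.IsBounded Ω) (hφ : Continuous φ) :
    IntegrableOn (fun x => φ x ^ p) Ω :=
  ((hφ.rpow_const fun _ => .inr hp).continuousOn.integrableOn_compact
    hb.isCompact_closure).mono_set subset_closure

lemma setIntegral_rpow_pos {q : ℝ} (hp : 0 < p) (hq : 0 < q) (hb : Bornology.IsBounded Ω)
    (hφ : Continuous φ) (hφ0 : ∀ x, 0 ≤ φ x) (hmass : ∫⁻ x in Ω, ‖φ x‖ₑ ^ q ≠ 0) :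
    0 < ∫ x in Ω, φ x ^ p := by
  refine (integral_nonneg fun x => Real.rpow_nonneg (hφ0 x) p).lt_of_ne' fun h => hmass ?_
  rw [integral_eq_zero_iff_of_nonneg (fun x => Real.rpow_nonneg (hφ0 x) p)
    (integrableOn_rpow hp.le hb hφ)] at h
  rw [lintegral_eq_zero_iff (hφ.measurable.enorm.pow_const q)]
  filter_upwards [h] with x hx
  have hx0 : φ x = 0 := (Real.rpow_eq_zero (hφ0 x) hp.ne').1 hx
  simp [hx0, hq]

lemma abs_sub_rpow_sub_two_mul_of_eq_zero_or {a b : ℝ} (hp : 1 < p) (ha : 0 ≤ a) (hb : 0 ≤ b)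
    (h : a = 0 ∨ b = 0) : |a - b| ^ (p - 2) * (a - b) = a ^ (p - 1) - b ^ (p - 1) := by
  have hp1 : p - 1 ≠ 0 := (sub_pos.2 hp).ne'
  have rpow_mul_self {x : ℝ} (hx : 0 ≤ x) : x ^ (p - 2) * x = x ^ (p - 1) := by
    have hp2 : p - 2 + 1 = p - 1 := by ring
    rw [← hp2, Real.rpow_add_one' hx (hp2 ▸ hp1)]
  rcases h with rfl | rfl
  · rw [zero_sub, abs_neg, abs_of_nonneg hb, Real.zero_rpow hp1, mul_neg, rpow_mul_self hb,
      zero_sub]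
  · rw [sub_zero, abs_of_nonneg ha, Real.zero_rpow hp1, rpow_mul_self ha, sub_zero]

lemma exists_isNeumannTest_of_eventuallyEq_zero_or (hp : 1 < p) (hΩ : MeasurableSet Ω)
    (hb : Bornology.IsBounded Ω) {K₁ K₂ : ℝ≥0} (hφ₁ : LipschitzWith K₁ φ₁)
    (hφ₂ : LipschitzWith K₂ φ₂) (h₁ : ∀ x, 0 ≤ φ₁ x) (h₂ : ∀ x, 0 ≤ φ₂ x)
    (hlt₁ : ∫⁻ x in Ω, ‖fderiv ℝ φ₁ x‖ₑ ^ p < ENNReal.ofReal Λ * ∫⁻ x in Ω, ‖φ₁ x‖ₑ ^ p)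
    (hlt₂ : ∫⁻ x in Ω, ‖fderiv ℝ φ₂ x‖ₑ ^ p < ENNReal.ofReal Λ * ∫⁻ x in Ω, ‖φ₂ x‖ₑ ^ p)
    (hdisj : ∀ x, φ₁ =ᶠ[𝓝 x] 0 ∨ φ₂ =ᶠ[𝓝 x] 0) :
    ∃ v, IsNeumannTest p Ω v ∧ rayleighQuot p p Ω v < Λ := by
  have hp0 : 0 < p := one_pos.trans hp
  have hp1 : 0 < p - 1 := sub_pos.2 hp
  have mass_ne_zero {f g : EuclideanSpace ℝ (Fin N) → ℝ}
      (h : ∫⁻ x in Ω, ‖fderiv ℝ f x‖ₑ ^ p < ENNReal.ofReal Λ * ∫⁻ x in Ω, ‖g x‖ₑ ^ p) :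
      ∫⁻ x in Ω, ‖g x‖ₑ ^ p ≠ 0 :=
    right_ne_zero_of_mul (zero_le.trans_lt h).ne'
  set J₁ := ∫ x in Ω, φ₁ x ^ (p - 1)
  set J₂ := ∫ x in Ω, φ₂ x ^ (p - 1)
  have hJ₁ : 0 < J₁ := setIntegral_rpow_pos hp1 hp0 hb hφ₁.continuous h₁ (mass_ne_zero hlt₁)
  have hJ₂ : 0 < J₂ := setIntegral_rpow_pos hp1 hp0 hb hφ₂.continuous h₂ (mass_ne_zero hlt₂)
  obtain ⟨t, ht, htJ⟩ : ∃ t > 0, t ^ (p - 1) = J₁ / J₂ :=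
    ⟨(J₁ / J₂) ^ (p - 1)⁻¹, by positivity, Real.rpow_inv_rpow (by positivity) hp1.ne'⟩
  have hφt : LipschitzWith (‖t‖₊ * K₂) (t • φ₂) := (lipschitzWith_smul t).comp hφ₂
  have hv := hφ₁.sub hφt
  have hdisj_t (x : EuclideanSpace ℝ (Fin N)) : φ₁ =ᶠ[𝓝 x] 0 ∨ t • φ₂ =ᶠ[𝓝 x] 0 :=
    (hdisj x).imp_right fun h => by simpa using h.const_smul t
  have hlt := setLIntegral_fderiv_sub_lt hp0 hφ₁.continuous.measurable hdisj_t hlt₁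
    (setLIntegral_fderiv_const_smul_lt hp0.le ht.ne' hlt₂)
  refine ⟨_, ⟨⟨_, hv.lipschitzOnWith⟩, ?_, ?_⟩, rayleighQuot_self_lt hp0 hb hv.continuous hlt⟩
  · by_contra! hv0
    exact mass_ne_zero hlt (setLIntegral_eq_zero hΩ fun x hx => by
      simpa [hp0] using hv0 x hx)
  · calc ∫ x in Ω, |φ₁ x - t * φ₂ x| ^ (p - 2) * (φ₁ x - t * φ₂ x)
      _ = ∫ x in Ω, (φ₁ x ^ (p - 1) - J₁ / J₂ * φ₂ x ^ (p - 1)) := by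
          congr with x
          rw [abs_sub_rpow_sub_two_mul_of_eq_zero_or hp (h₁ x) (mul_nonneg ht.le (h₂ x))
            ((hdisj_t x).imp (·.self_of_nhds) (·.self_of_nhds)), Real.mul_rpow ht.le (h₂ x), htJ]
      _ = J₁ - J₁ / J₂ * J₂ := by
          rw [integral_sub (integrableOn_rpow hp1.le hb hφ₁.continuous)
            ((integrableOn_rpow hp1.le hb hφ₂.continuous).const_mul _), integral_const_mul]
      _ = 0 := by rw [div_mul_cancel₀ _ hJ₂.ne', sub_self]

lemma exists_dist_eq_diam {X : Type*} [PseudoMetricSpace X] {s : Set X} (hs : IsCompact s)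
    (hne : s.Nonempty) : ∃ x ∈ s, ∃ y ∈ s, dist x y = diam s := by
  obtain ⟨⟨x, y⟩, ⟨hx, hy⟩, hmax⟩ := (hs.prod hs).exists_isMaxOn (hne.prod hne)
    continuous_dist.continuousOn
  refine ⟨x, hx, y, hy, (dist_le_diam_of_mem hs.isBounded hx hy).antisymm ?_⟩
  exact diam_le_of_forall_dist_le dist_nonneg fun x' hx' y' hy' => hmax (mk_mem_prod hx' hy')

lemma diam_pos_of_isOpen [NeZero N] (ho : IsOpen Ω) (hb : Bornology.IsBounded Ω)
    (hne : Ω.Nonempty) : 0 < diam Ω := by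
  obtain ⟨x, hx⟩ := hne
  obtain ⟨y, hy, hyx⟩ := mem_closure_iff_nhds.1 (dense_compl_singleton x x) Ω (ho.mem_nhds hx)
  exact (dist_pos.2 hyx).trans_le (dist_le_diam_of_mem hb hy hx)

lemma exists_isNeumannTest_rayleighQuot_lt (hN : 2 ≤ N) (hp : 1 < p) {R : ℝ} (hR : 0 < R)
    (c : EuclideanSpace ℝ (Fin N)) (ho : IsOpen Ω) (hb : Bornology.IsBounded Ω)
    (hc : Convex ℝ Ω) (hne : Ω.Nonempty) :
    ∃ v, IsNeumannTest p Ω v ∧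
      rayleighQuot p p Ω v < lambdaPQ p p (ball c R) * (2 * R / diam Ω) ^ p := by
  have : NeZero N := ⟨by omega⟩
  have hd : 0 < diam Ω := diam_pos_of_isOpen ho hb hne
  obtain ⟨x₀, hx₀, x₁, hx₁, hdist⟩ := exists_dist_eq_diam hb.isCompact_closure hne.closure
  rw [diam_closure, dist_comm, dist_eq_norm] at hdist
  set d := diam Ω
  set e := d⁻¹ • (x₁ - x₀)
  have he : ‖e‖ = 1 := by
    rw [norm_smul, hdist, Real.norm_of_nonneg (by positivity), inv_mul_cancel₀ hd.ne']
  have inner_sub_neg (x : EuclideanSpace ℝ (Fin N)) :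
      inner ℝ (x - x₁) (-e) = d - inner ℝ (x - x₀) e := by
    have : x - x₁ = (x - x₀) - d • e := by rw [smul_inv_smul₀ hd.ne']; abel
    simp [this, inner_sub_left, inner_smul_left, he]
  have scaling : lambdaPQ p p (ball c R) * (2 * R / d) ^ p = lambdaPQ p p (ball c (d / 2)) := by
    rw [lambdaPQ_ball_scaling (one_pos.trans hp) (half_pos hd) c c (b := 2 * R / d) (by positivity),
      mul_comm]
    congr 3
    field_simp
  rw [scaling]
  obtain ⟨φ₁, ⟨K₁, hφ₁⟩, h₁, ⟨R₁, hR₁, hz₁⟩, hlt₁⟩ := exists_lipschitz_setLIntegral_fderiv_lt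
    (by omega) hp (half_pos hd) c ho hb hc hne hx₀ he
  obtain ⟨φ₂, ⟨K₂, hφ₂⟩, h₂, ⟨R₂, hR₂, hz₂⟩, hlt₂⟩ := exists_lipschitz_setLIntegral_fderiv_lt
    (by omega) hp (half_pos hd) c ho hb hc hne hx₁ ((norm_neg e).trans he)
  refine exists_isNeumannTest_of_eventuallyEq_zero_or hp ho.measurableSet hb hφ₁ hφ₂ h₁ h₂
    hlt₁ hlt₂ fun x => ?_
  have inner_cont : Continuous fun x : EuclideanSpace ℝ (Fin N) => inner ℝ (x - x₀) e := by fun_prop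
  rcases lt_or_ge R₁ (inner ℝ (x - x₀) e) with h | h
  · left
    filter_upwards [inner_cont.continuousAt.eventually_const_lt h] with y hy using hz₁ y hy.le
  · right
    filter_upwards [inner_cont.continuousAt.eventually_lt_const
      (show inner ℝ (x - x₀) e < d - R₂ by linarith)] with y hy
    exact hz₂ y (by rw [inner_sub_neg]; linarith)

lemma muPQ_lt_lambdaPQ_ball_mul (hN : 2 ≤ N) (hp : 1 < p) {R : ℝ} (hR : 0 < R)
    (c : EuclideanSpace ℝ (Fin N)) (ho : IsOpen Ω) (hb : Bornology.IsBounded Ω)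
    (hc : Convex ℝ Ω) (hne : Ω.Nonempty) :
    muPQ p p Ω < lambdaPQ p p (ball c R) * (2 * R / diam Ω) ^ p := by
  obtain ⟨v, hv, hlt⟩ := exists_isNeumannTest_rayleighQuot_lt hN hp hR c ho hb hc hne
  exact (muPQ_le_rayleighQuot hv).trans_lt hlt

end NeumannUpperBound

section Poincare

variable {E : Type*} [NormedAddCommGroup E] [NormedSpace ℝ E] {p : ℝ} {h : E → ℝ}

lemma enorm_sub_rpow_le_lintegral_fderiv_lineMap (hp : 1 < p) (hh : ContDiff ℝ 1 h) (x y : E) :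
    ‖h y - h x‖ₑ ^ p
      ≤ ‖y - x‖ₑ ^ p * ∫⁻ t in Ioc (0 : ℝ) 1, ‖fderiv ℝ h (AffineMap.lineMap x y t)‖ₑ ^ p := by
  have hderiv (t : ℝ) : HasDerivAt (fun t => h (AffineMap.lineMap x y t))
      (fderiv ℝ h (AffineMap.lineMap x y t) (y - x)) t :=
    (hh.differentiable one_ne_zero _).hasFDerivAt.comp_hasDerivAt t AffineMap.hasDerivAt_lineMap
  have holder := enorm_sub_rpow_le_lintegral_deriv hp
    (f := fun t => h (AffineMap.lineMap x y t))
    (by simp only [AffineMap.lineMap_apply_module]; fun_prop) zero_le_one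
  simp only [AffineMap.lineMap_apply_one, AffineMap.lineMap_apply_zero, sub_zero,
    Real.one_rpow, ENNReal.ofReal_one, one_mul, (hderiv _).deriv] at holder
  refine holder.trans ?_
  rw [← lintegral_const_mul' _ _ (by finiteness)]
  gcongr with t
  rw [← ENNReal.mul_rpow_of_nonneg _ _ (zero_le_one.trans hp.le), mul_comm ‖y - x‖ₑ]
  gcongr
  exact ContinuousLinearMap.le_opENorm _ _

variable [FiniteDimensional ℝ E] [MeasurableSpace E] [BorelSpace E] {μ : Measure E}
  [μ.IsAddHaarMeasure] {s : Set E} {t : ℝ}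

lemma lintegral_comp_const_smul (G : E → ℝ≥0∞) (ht : t ≠ 0) :
    ∫⁻ x, G (t • x) ∂μ
      = ENNReal.ofReal |(t ^ Module.finrank ℝ E)⁻¹| * ∫⁻ x, G x ∂μ := by
  have hemb : MeasurableEmbedding (t • · : E → E) :=
    (Homeomorph.smulOfNeZero t ht).measurableEmbedding
  rw [← hemb.lintegral_map G, Measure.map_addHaar_smul _ ht, lintegral_smul_measure, smul_eq_mul]

lemma setLIntegral_comp_lineMap_le (hs : MeasurableSet s) (hc : Convex ℝ s) (G : E → ℝ≥0∞) {x : E}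
    (hx : x ∈ s) (ht : 1 / 2 ≤ t) (ht1 : t ≤ 1) :
    ∫⁻ y in s, G (AffineMap.lineMap x y t) ∂μ ≤ 2 ^ Module.finrank ℝ E * ∫⁻ y in s, G y ∂μ := by
  have ht0 : 0 < t := one_half_pos.trans_le ht
  calc ∫⁻ y in s, G (AffineMap.lineMap x y t) ∂μ
    _ = ∫⁻ y in s, s.indicator G ((1 - t) • x + t • y) ∂μ :=
        setLIntegral_congr_fun hs fun y hy => by
          rw [indicator_of_mem (hc hx hy (by linarith) ht0.le (by ring)),
            AffineMap.lineMap_apply_module]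
    _ ≤ ∫⁻ y, s.indicator G ((1 - t) • x + t • y) ∂μ := setLIntegral_le_lintegral _ _
    _ = ENNReal.ofReal |(t ^ Module.finrank ℝ E)⁻¹| * ∫⁻ y in s, G y ∂μ := by
        rw [lintegral_comp_const_smul (fun y => s.indicator G ((1 - t) • x + y)) ht0.ne',
          lintegral_add_left_eq_self (μ := μ) (s.indicator G), lintegral_indicator hs]
    _ ≤ _ := by
        gcongr
        rw [abs_of_pos (by positivity), ← inv_pow, ENNReal.ofReal_pow (by positivity)]
        gcongr
        rw [← ENNReal.ofReal_ofNat]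
        exact ENNReal.ofReal_le_ofReal ((inv_le_comm₀ ht0 two_pos).2 (by rwa [← one_div]))

/- Whichever of `x`, `y` has the weight at least `1 / 2` in `lineMap x y t` can serve as the
integration variable that moves the point with a controlled Jacobian. -/
lemma setLIntegral_setLIntegral_comp_lineMap_le (hs : MeasurableSet s) (hc : Convex ℝ s)
    {G : E → ℝ≥0∞} (hG : Measurable G) (ht : t ∈ Icc (0 : ℝ) 1) :
    ∫⁻ x in s, ∫⁻ y in s, G (AffineMap.lineMap x y t) ∂μ ∂μ
      ≤ 2 ^ Module.finrank ℝ E * (∫⁻ y in s, G y ∂μ) * μ s := by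
  rw [← setLIntegral_const]
  rcases le_total (1 / 2) t with h | h
  · exact setLIntegral_mono' hs fun x hx => setLIntegral_comp_lineMap_le hs hc G hx h ht.2
  · rw [lintegral_lintegral_swap]
    · refine setLIntegral_mono' hs fun y hy => ?_
      simp_rw [← AffineMap.lineMap_apply_one_sub y]
      exact setLIntegral_comp_lineMap_le hs hc G hy (by linarith) (by linarith [ht.1])
    · refine (hG.comp ?_).aemeasurable
      simp only [AffineMap.lineMap_apply_module]
      fun_prop

lemma setLIntegral_setLIntegral_enorm_sub_rpow_le (hp : 1 < p) (hs : MeasurableSet s)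
    (hc : Convex ℝ s) (hb : Bornology.IsBounded s) (hh : ContDiff ℝ 1 h) :
    ∫⁻ x in s, ∫⁻ y in s, ‖h y - h x‖ₑ ^ p ∂μ ∂μ
      ≤ ENNReal.ofReal (diam s) ^ p * 2 ^ Module.finrank ℝ E * μ s
        * ∫⁻ y in s, ‖fderiv ℝ h y‖ₑ ^ p ∂μ := by
  have hp0 : 0 ≤ p := zero_le_one.trans hp.le
  set G : E → ℝ≥0∞ := fun x => ‖fderiv ℝ h x‖ₑ ^ p
  have hG : Measurable G := by fun_prop
  have hGx (x : E) : Measurable fun q : E × ℝ => G (AffineMap.lineMap x q.1 q.2) := by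
    simp only [AffineMap.lineMap_apply_module]
    fun_prop
  have hGxy : Measurable fun q : (E × ℝ) × E => G (AffineMap.lineMap q.1.1 q.2 q.1.2) := by
    simp only [AffineMap.lineMap_apply_module]
    fun_prop
  have bound (x : E) (hx : x ∈ s) (y : E) (hy : y ∈ s) : ‖h y - h x‖ₑ ^ p
      ≤ ENNReal.ofReal (diam s) ^ p * ∫⁻ t in Ioc (0 : ℝ) 1, G (AffineMap.lineMap x y t) := by
    refine (enorm_sub_rpow_le_lintegral_fderiv_lineMap hp hh x y).trans ?_
    gcongr
    rw [← ofReal_norm, ← dist_eq_norm]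
    exact ENNReal.ofReal_le_ofReal (dist_le_diam_of_mem hb hy hx)
  calc ∫⁻ x in s, ∫⁻ y in s, ‖h y - h x‖ₑ ^ p ∂μ ∂μ
    _ ≤ ∫⁻ x in s, ∫⁻ y in s, ENNReal.ofReal (diam s) ^ p *
          (∫⁻ t in Ioc (0 : ℝ) 1, G (AffineMap.lineMap x y t)) ∂μ ∂μ :=
        setLIntegral_mono' hs fun x hx => setLIntegral_mono' hs (bound x hx)
    _ = ENNReal.ofReal (diam s) ^ p *
          ∫⁻ t in Ioc (0 : ℝ) 1, ∫⁻ x in s, ∫⁻ y in s, G (AffineMap.lineMap x y t) ∂μ ∂μ := by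
        simp_rw [lintegral_const_mul' _ _ (ENNReal.rpow_ne_top_of_nonneg hp0 ENNReal.ofReal_ne_top)]
        have swap (x : E) := lintegral_lintegral_swap (μ := μ.restrict s)
          (ν := volume.restrict (Ioc (0 : ℝ) 1)) (f := fun y t => G (AffineMap.lineMap x y t))
          (hGx x).aemeasurable
        simp_rw [swap]
        rw [lintegral_lintegral_swap hGxy.lintegral_prod_right'.aemeasurable]
    _ ≤ ENNReal.ofReal (diam s) ^ p *
          ∫⁻ _ in Ioc (0 : ℝ) 1, 2 ^ Module.finrank ℝ E * (∫⁻ y in s, G y ∂μ) * μ s :=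
        mul_le_mul_right (setLIntegral_mono' measurableSet_Ioc fun t ht =>
          setLIntegral_setLIntegral_comp_lineMap_le hs hc hG (Ioc_subset_Icc_self ht)) _
    _ = _ := by
        rw [setLIntegral_const, Real.volume_Ioc, sub_zero, ENNReal.ofReal_one]
        ring

end Poincare

section ProductDomains

variable {N : ℕ} {p R s : ℝ}

lemma add_rpow_le_mul_rpow_add_mul_rpow (hp : 1 < p) (hs : 0 < s) (hs1 : s < 1) (x y : ℝ≥0∞) :
    (x + y) ^ p
      ≤ ENNReal.ofReal ((1 - s) ^ (1 - p)) * x ^ p + ENNReal.ofReal (s ^ (1 - p)) * y ^ p := by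
  have unscale {u : ℝ} (hu : 0 < u) (x : ℝ≥0∞) :
      ENNReal.ofReal u * (ENNReal.ofReal u⁻¹ * x) = x := by
    rw [← mul_assoc, ← ENNReal.ofReal_mul hu.le, mul_inv_cancel₀ hu.ne', ENNReal.ofReal_one,
      one_mul]
  have unscale_rpow {u : ℝ} (hu : 0 < u) (x : ℝ≥0∞) :
      ENNReal.ofReal u * (ENNReal.ofReal u⁻¹ * x) ^ p = ENNReal.ofReal (u ^ (1 - p)) * x ^ p := by
    have hp0 : 0 ≤ p := zero_le_one.trans hp.le
    rw [ENNReal.mul_rpow_of_nonneg _ _ hp0, ← mul_assoc,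
      ENNReal.ofReal_rpow_of_nonneg (by positivity) hp0, ← ENNReal.ofReal_mul hu.le,
      Real.rpow_sub hu, Real.rpow_one, Real.inv_rpow hu.le, div_eq_mul_inv]
  have hs' : 0 < 1 - s := sub_pos.2 hs1
  have convexity := ENNReal.rpow_arith_mean_le_arith_mean2_rpow (ENNReal.ofReal (1 - s))
    (ENNReal.ofReal s) (ENNReal.ofReal (1 - s)⁻¹ * x) (ENNReal.ofReal s⁻¹ * y)
    (by rw [← ENNReal.ofReal_add hs'.le hs.le, sub_add_cancel, ENNReal.ofReal_one]) hp.le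
  rwa [unscale hs', unscale hs, unscale_rpow hs', unscale_rpow hs] at convexity

lemma ofReal_lambdaPQ_ball_mul_setLIntegral_sub_le [NeZero N] (hp : 0 < p) (hR : 0 < R)
    (c : EuclideanSpace ℝ (Fin N)) {f : ℝ → ℝ} (hf : ContDiff ℝ 1 f) :
    ENNReal.ofReal (lambdaPQ p p (ball c R)) *
        ∫⁻ r in Iio R, ‖f r - f R‖ₑ ^ p ∂radialMeasure (N - 1)
      ≤ ∫⁻ r in Iio R, ‖deriv f r‖ₑ ^ p ∂radialMeasure (N - 1) := by
  have radial := ofReal_lambdaPQ_ball_mul_setLIntegral_radialMeasure_le (ρ := 0) hp hR c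
    (hf.sub contDiff_const) (sub_self (f R)) hR.le
  simp only [deriv_sub_const] at radial
  calc ENNReal.ofReal (lambdaPQ p p (ball c R)) *
        ∫⁻ r in Iio R, ‖f r - f R‖ₑ ^ p ∂radialMeasure (N - 1)
    _ = ENNReal.ofReal (lambdaPQ p p (ball c R)) *
          ∫⁻ r in Iio R, ‖f (max 0 r) - f R‖ₑ ^ p ∂radialMeasure (N - 1) := by
        congr 1
        refine lintegral_congr_ae ?_
        filter_upwards [ae_restrict_of_ae ae_radialMeasure_pos] with r hr
        rw [max_eq_right hr.le]
    _ ≤ _ := radial.trans (lintegral_mono_set Ioo_subset_Iio_self)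

variable {E : Type*} [NormedAddCommGroup E] [MeasurableSpace E] [BorelSpace E] {g : ℝ → E → ℝ}

lemma measurable_enorm_sub_rpow (hg : Continuous g.uncurry) :
    Measurable fun q : ℝ × E => ‖g q.1 q.2 - g R q.2‖ₑ ^ p := by
  have h₁ : Continuous fun q : ℝ × E => g q.1 q.2 := hg
  have h₂ : Continuous fun q : ℝ × E => g R q.2 :=
    hg.comp (continuous_const.prodMk continuous_snd)
  fun_prop

variable [NormedSpace ℝ E] [FiniteDimensional ℝ E] {μ : Measure E} [μ.IsAddHaarMeasure]
  {B : Set E}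

lemma ofReal_lambdaPQ_ball_mul_setLIntegral_setLIntegral_sub_le [NeZero N] (hp : 0 < p)
    (hR : 0 < R) (c : EuclideanSpace ℝ (Fin N)) (hg : ContDiff ℝ 1 g.uncurry) :
    ENNReal.ofReal (lambdaPQ p p (ball c R)) *
        ∫⁻ r in Iio R, ∫⁻ z in B, ‖g r z - g R z‖ₑ ^ p ∂μ ∂radialMeasure (N - 1)
      ≤ ∫⁻ r in Iio R, ∫⁻ z in B, ‖deriv (g · z) r‖ₑ ^ p ∂μ ∂radialMeasure (N - 1) := by
  have measurable_deriv : Measurable fun q : ℝ × E => ‖deriv (g · q.2) q.1‖ₑ ^ p :=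
    ((measurable_deriv_with_param (f := fun z r => g r z)
      (hg.continuous.comp continuous_swap)).comp measurable_swap).enorm.pow_const p
  calc ENNReal.ofReal (lambdaPQ p p (ball c R)) *
        ∫⁻ r in Iio R, ∫⁻ z in B, ‖g r z - g R z‖ₑ ^ p ∂μ ∂radialMeasure (N - 1)
    _ = ∫⁻ z in B, ENNReal.ofReal (lambdaPQ p p (ball c R)) *
          (∫⁻ r in Iio R, ‖g r z - g R z‖ₑ ^ p ∂radialMeasure (N - 1)) ∂μ := by
        rw [lintegral_lintegral_swap (measurable_enorm_sub_rpow hg.continuous).aemeasurable,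
          lintegral_const_mul' _ _ ENNReal.ofReal_ne_top]
    _ ≤ ∫⁻ z in B, (∫⁻ r in Iio R, ‖deriv (g · z) r‖ₑ ^ p ∂radialMeasure (N - 1)) ∂μ := by
        gcongr with z
        exact ofReal_lambdaPQ_ball_mul_setLIntegral_sub_le hp hR c
          (hg.comp (contDiff_id.prodMk contDiff_const))
    _ = _ := (lintegral_lintegral_swap measurable_deriv.aemeasurable).symm

/- The triangle inequality through `h z₀` leaves the oscillation of `h` to the Poincaré
inequality. -/
lemma setLIntegral_setLIntegral_enorm_sub_rpow_le_add (hp : 1 < p) (hs : 0 < s) (hs1 : s < 1)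
    (hB : MeasurableSet B) (hBc : Convex ℝ B) (hBb : Bornology.IsBounded B) {h k : E → ℝ}
    (hh : ContDiff ℝ 1 h) (hk : Measurable k) :
    ∫⁻ z in B, ∫⁻ z₀ in B, ‖h z - k z₀‖ₑ ^ p ∂μ ∂μ
      ≤ ENNReal.ofReal ((1 - s) ^ (1 - p)) * μ B * ∫⁻ z in B, ‖h z - k z‖ₑ ^ p ∂μ
        + ENNReal.ofReal (s ^ (1 - p)) *
            (ENNReal.ofReal (diam B) ^ p * 2 ^ Module.finrank ℝ E * μ B) *
          ∫⁻ z in B, ‖fderiv ℝ h z‖ₑ ^ p ∂μ := by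
  set a := ENNReal.ofReal ((1 - s) ^ (1 - p))
  set b := ENNReal.ofReal (s ^ (1 - p))
  have split (z z₀ : E) : ‖h z - k z₀‖ₑ ^ p
      ≤ a * ‖h z₀ - k z₀‖ₑ ^ p + b * ‖h z₀ - h z‖ₑ ^ p := by
    refine le_trans ?_ (add_rpow_le_mul_rpow_add_mul_rpow hp hs hs1 _ _)
    have hp0 : 0 ≤ p := zero_le_one.trans hp.le
    gcongr
    rw [enorm_sub_rev (h z₀) (h z), add_comm, ← sub_add_sub_cancel (h z) (h z₀)]
    exact enorm_add_le _ _
  have measurable_diff : Measurable fun z => a * ‖h z - k z‖ₑ ^ p := by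
    have := hh.continuous.measurable
    fun_prop
  have integrate_split (z : E) :
      ∫⁻ z₀ in B, (a * ‖h z₀ - k z₀‖ₑ ^ p + b * ‖h z₀ - h z‖ₑ ^ p) ∂μ
        = a * (∫⁻ z₀ in B, ‖h z₀ - k z₀‖ₑ ^ p ∂μ) + b * ∫⁻ z₀ in B, ‖h z₀ - h z‖ₑ ^ p ∂μ := by
    rw [lintegral_add_left measurable_diff, lintegral_const_mul' _ _ ENNReal.ofReal_ne_top,
      lintegral_const_mul' _ _ ENNReal.ofReal_ne_top]
  calc ∫⁻ z in B, ∫⁻ z₀ in B, ‖h z - k z₀‖ₑ ^ p ∂μ ∂μ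
    _ ≤ ∫⁻ z in B, ∫⁻ z₀ in B, (a * ‖h z₀ - k z₀‖ₑ ^ p + b * ‖h z₀ - h z‖ₑ ^ p) ∂μ ∂μ := by
        gcongr with z z₀
        exact split z z₀
    _ = a * μ B * ∫⁻ z in B, ‖h z - k z‖ₑ ^ p ∂μ
          + b * ∫⁻ z in B, ∫⁻ z₀ in B, ‖h z₀ - h z‖ₑ ^ p ∂μ ∂μ := by
        simp_rw [integrate_split]
        rw [lintegral_add_left measurable_const, setLIntegral_const,
          lintegral_const_mul' _ _ ENNReal.ofReal_ne_top]
        ring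
    _ ≤ _ := by
        rw [mul_assoc b]
        gcongr
        exact setLIntegral_setLIntegral_enorm_sub_rpow_le hp hB hBc hBb hh

lemma ofReal_lambdaPQ_ball_mul_oscillation_le [NeZero N] (hp : 1 < p) (hR : 0 < R)
    (c : EuclideanSpace ℝ (Fin N)) (hs : 0 < s) (hs1 : s < 1) (hB : MeasurableSet B)
    (hBc : Convex ℝ B) (hBb : Bornology.IsBounded B) (hg : ContDiff ℝ 1 g.uncurry) :
    ENNReal.ofReal (lambdaPQ p p (ball c R)) *
        ∫⁻ r in Iio R, ∫⁻ z in B, (∫⁻ z₀ in B, ‖g r z - g R z₀‖ₑ ^ p ∂μ) ∂μ ∂radialMeasure (N - 1)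
      ≤ μ B * (ENNReal.ofReal ((1 - s) ^ (1 - p)) *
            ∫⁻ r in Iio R, ∫⁻ z in B, ‖deriv (g · z) r‖ₑ ^ p ∂μ ∂radialMeasure (N - 1)
          + ENNReal.ofReal (lambdaPQ p p (ball c R)) * ENNReal.ofReal (s ^ (1 - p)) *
            (ENNReal.ofReal (diam B) ^ p * 2 ^ Module.finrank ℝ E) *
            ∫⁻ r in Iio R, ∫⁻ z in B, ‖fderiv ℝ (g r) z‖ₑ ^ p ∂μ ∂radialMeasure (N - 1)) := by
  have hp0 : 0 ≤ p := zero_le_one.trans hp.le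
  have hμB : μ B ≠ ⊤ := hBb.measure_lt_top.ne
  set lam := ENNReal.ofReal (lambdaPQ p p (ball c R))
  set a := ENNReal.ofReal ((1 - s) ^ (1 - p))
  set b := ENNReal.ofReal (s ^ (1 - p))
  set P := ENNReal.ofReal (diam B) ^ p * 2 ^ Module.finrank ℝ E
  have hg' (r : ℝ) : ContDiff ℝ 1 (g r) := hg.comp (contDiff_const.prodMk contDiff_id)
  have measurable_diff := measurable_enorm_sub_rpow (p := p) (R := R) hg.continuous
  have radial := ofReal_lambdaPQ_ball_mul_setLIntegral_setLIntegral_sub_le (μ := μ) (B := B)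
    (one_pos.trans hp) hR c hg
  calc lam * ∫⁻ r in Iio R, ∫⁻ z in B, (∫⁻ z₀ in B, ‖g r z - g R z₀‖ₑ ^ p ∂μ) ∂μ
        ∂radialMeasure (N - 1)
    _ ≤ lam * ∫⁻ r in Iio R, (a * μ B * ∫⁻ z in B, ‖g r z - g R z‖ₑ ^ p ∂μ
          + b * (P * μ B) * ∫⁻ z in B, ‖fderiv ℝ (g r) z‖ₑ ^ p ∂μ) ∂radialMeasure (N - 1) := by
        gcongr with r
        exact setLIntegral_setLIntegral_enorm_sub_rpow_le_add hp hs hs1 hB hBc hBb (hg' r)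
          (hg' R).continuous.measurable
    _ = a * μ B * (lam *
            ∫⁻ r in Iio R, ∫⁻ z in B, ‖g r z - g R z‖ₑ ^ p ∂μ ∂radialMeasure (N - 1))
          + lam * (b * (P * μ B)) *
            ∫⁻ r in Iio R, ∫⁻ z in B, ‖fderiv ℝ (g r) z‖ₑ ^ p ∂μ ∂radialMeasure (N - 1) := by
        rw [lintegral_add_left (measurable_diff.lintegral_prod_right'.const_mul _),
          lintegral_const_mul' _ _ (by finiteness), lintegral_const_mul' _ _ (by finiteness)]
        ring
    _ ≤ _ := add_le_add_left (mul_le_mul_right radial _) _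
    _ = _ := by ring

end ProductDomains

section AxialCoordinates

variable {n : ℕ}

/-- The isomorphism `ℝ × ℝⁿ ≃ ℝⁿ⁺¹`, `(t, z) ↦ (t, z₁, …, zₙ)`, describing a point by its axial
coordinate `t` and its transversal part `z`. -/
noncomputable def axialEquiv (n : ℕ) :
    (ℝ × EuclideanSpace ℝ (Fin n)) ≃L[ℝ] EuclideanSpace ℝ (Fin (n + 1)) :=
  ((ContinuousLinearEquiv.refl ℝ ℝ).prodCongr (EuclideanSpace.equiv (Fin n) ℝ)).trans
    ((Fin.consEquivL ℝ fun _ => ℝ).trans (EuclideanSpace.equiv (Fin (n + 1)) ℝ).symm)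

@[simp]
lemma axialEquiv_apply_zero (t : ℝ) (z : EuclideanSpace ℝ (Fin n)) :
    axialEquiv n (t, z) 0 = t := rfl

@[simp]
lemma axialEquiv_apply_succ (t : ℝ) (z : EuclideanSpace ℝ (Fin n)) (i : Fin n) :
    axialEquiv n (t, z) i.succ = z i := rfl

lemma norm_axialEquiv_sq (t : ℝ) (z : EuclideanSpace ℝ (Fin n)) :
    ‖axialEquiv n (t, z)‖ ^ 2 = t ^ 2 + ‖z‖ ^ 2 := by
  simp [EuclideanSpace.norm_sq_eq, Fin.sum_univ_succ]

lemma norm_axialEquiv_le (t : ℝ) (z : EuclideanSpace ℝ (Fin n)) :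
    ‖axialEquiv n (t, z)‖ ≤ |t| + ‖z‖ := by
  refine abs_le_of_sq_le_sq' ?_ (by positivity) |>.2
  rw [norm_axialEquiv_sq, ← sq_abs t]
  nlinarith [mul_nonneg (abs_nonneg t) (norm_nonneg z)]

lemma sqrt_sum_erase_axialEquiv (t : ℝ) (z : EuclideanSpace ℝ (Fin n)) :
    √(∑ i ∈ Finset.univ.erase 0, axialEquiv n (t, z) i ^ 2) = ‖z‖ := by
  rw [EuclideanSpace.norm_eq, Fin.univ_succ, Finset.erase_cons, Finset.sum_map]
  simp

lemma measurePreserving_axialEquiv : MeasurePreserving (axialEquiv n) := by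
  have h := (PiLp.volume_preserving_toLp (Fin (n + 1))).comp
    ((volume_preserving_piFinSuccAbove (fun _ : Fin (n + 1) => ℝ) 0).symm.comp
      ((MeasurePreserving.id volume).prod (PiLp.volume_preserving_ofLp (Fin n))))
  rw [Measure.volume_eq_prod]
  convert h using 1
  ext x i
  exact Fin.cases rfl (fun _ => rfl) i

lemma lintegral_eq_lintegral_lintegral_axialEquiv {G : EuclideanSpace ℝ (Fin (n + 1)) → ℝ≥0∞}
    (hG : Measurable G) :
    ∫⁻ x, G x = ∫⁻ t, ∫⁻ z, G (axialEquiv n (t, z)) := by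
  rw [← measurePreserving_axialEquiv.lintegral_comp hG, Measure.volume_eq_prod,
    lintegral_prod _ (by fun_prop)]

end AxialCoordinates

section DoubleCone

variable {n : ℕ} {κ R t σ : ℝ} {z : EuclideanSpace ℝ (Fin n)}

/-- The double circular cone `{κ |x'| < R - |x₁|}` in `ℝⁿ⁺¹`, of height `2R` and equatorial radius
`R / κ`. -/
noncomputable def doubleCone (n : ℕ) (κ R : ℝ) : Set (EuclideanSpace ℝ (Fin (n + 1))) :=
  {x | κ * √(∑ i ∈ Finset.univ.erase 0, x i ^ 2) < R - |x 0|}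

@[simp]
lemma axialEquiv_mem_doubleCone : axialEquiv n (t, z) ∈ doubleCone n κ R ↔ κ * ‖z‖ < R - |t| := by
  simp only [doubleCone, mem_ofPred_eq, sqrt_sum_erase_axialEquiv, axialEquiv_apply_zero]

lemma isOpen_doubleCone (n : ℕ) (κ R : ℝ) : IsOpen (doubleCone n κ R) := by
  apply isOpen_lt <;> fun_prop

/-- The point of the double cone `doubleCone n κ R` at axial distance `r` from the apex
`(σ * R, 0)`, `σ = ±1`, whose transversal part is `z` relative to the radius `r / κ` there. -/
noncomputable def coneCoord (n : ℕ) (κ R σ : ℝ) (r : ℝ) (z : EuclideanSpace ℝ (Fin n)) :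
    EuclideanSpace ℝ (Fin (n + 1)) :=
  axialEquiv n (σ * (R - r), (r / κ) • z)

lemma contDiff_coneCoord (n : ℕ) (κ R σ : ℝ) :
    ContDiff ℝ 1 (coneCoord n κ R σ).uncurry := by
  unfold coneCoord Function.uncurry
  fun_prop

lemma setLIntegral_ball_zero_eq_mul_comp_smul {E : Type*} [NormedAddCommGroup E] [NormedSpace ℝ E]
    [FiniteDimensional ℝ E] [MeasurableSpace E] [BorelSpace E] {μ : Measure E} [μ.IsAddHaarMeasure]
    {r : ℝ} (hr : 0 < r) (G : E → ℝ≥0∞) :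
    ∫⁻ z in ball 0 r, G z ∂μ =
      ENNReal.ofReal (r ^ Module.finrank ℝ E) * ∫⁻ z in ball 0 1, G (r • z) ∂μ := by
  have hball (z : E) : (ball 0 1).indicator (fun z => G (r • z)) z
      = (ball 0 r).indicator G (r • z) := by
    simp only [indicator, mem_ball_zero_iff, norm_smul, Real.norm_of_nonneg hr.le,
      mul_lt_iff_lt_one_right hr]
  rw [← lintegral_indicator measurableSet_ball, ← lintegral_indicator measurableSet_ball]
  simp_rw [hball]
  rw [lintegral_comp_const_smul _ hr.ne', ← mul_assoc, ← ENNReal.ofReal_mul (by positivity),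
    abs_of_pos (by positivity), mul_inv_cancel₀ (by positivity), ENNReal.ofReal_one, one_mul]

lemma lintegral_indicator_doubleCone_axialEquiv (hκ : 0 < κ)
    (G : EuclideanSpace ℝ (Fin (n + 1)) → ℝ≥0∞) (t : ℝ) :
    ∫⁻ z, (doubleCone n κ R).indicator G (axialEquiv n (t, z)) =
      (Iio R).indicator (fun τ => ENNReal.ofReal ((κ ^ n)⁻¹) * (ENNReal.ofReal ((R - τ) ^ n) *
        ∫⁻ z in ball 0 1, G (axialEquiv n (t, ((R - τ) / κ) • z)))) |t| := by
  have hslice (z) : (doubleCone n κ R).indicator G (axialEquiv n (t, z))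
      = (ball 0 ((R - |t|) / κ)).indicator (fun z => G (axialEquiv n (t, z))) z := by
    simp only [indicator, axialEquiv_mem_doubleCone, mem_ball_zero_iff, lt_div_iff₀' hκ]
  simp_rw [hslice]
  rw [lintegral_indicator measurableSet_ball]
  by_cases ht : |t| < R
  · have hr : 0 < R - |t| := sub_pos.2 ht
    rw [indicator_of_mem (show |t| ∈ Iio R from ht),
      setLIntegral_ball_zero_eq_mul_comp_smul (div_pos hr hκ), ← mul_assoc,
      ← ENNReal.ofReal_mul (by positivity), finrank_euclideanSpace_fin, div_pow, inv_mul_eq_div]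
  · rw [indicator_of_notMem (show |t| ∉ Iio R from ht), ball_eq_empty.2, setLIntegral_empty]
    exact div_nonpos_of_nonpos_of_nonneg (by linarith) hκ.le

lemma lintegral_eq_setLIntegral_Ioi_add_neg (H : ℝ → ℝ≥0∞) :
    ∫⁻ t, H t = (∫⁻ t in Ioi 0, H t) + ∫⁻ t in Ioi 0, H (-t) := by
  have hneg : ∫⁻ t in Ioi 0, H (-t) = ∫⁻ t in Iio 0, H t := by
    rw [← (Measure.measurePreserving_neg volume).setLIntegral_comp_preimage_emb
      (MeasurableEquiv.neg ℝ).measurableEmbedding, neg_preimage, neg_Ioi, neg_zero]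
    simp only [neg_neg]
  rw [hneg, setLIntegral_congr Iio_ae_eq_Iic, ← compl_Ioi, lintegral_add_compl H measurableSet_Ioi]

/- Reversing the axial variable, `t = R - r`, places the apex at the origin. -/
lemma setLIntegral_Ioi_lintegral_indicator_doubleCone (hκ : 0 < κ) (hσ : |σ| = 1)
    (G : EuclideanSpace ℝ (Fin (n + 1)) → ℝ≥0∞) :
    ∫⁻ t in Ioi 0, ∫⁻ z, (doubleCone n κ R).indicator G (axialEquiv n (σ * t, z)) =
      ENNReal.ofReal ((κ ^ n)⁻¹) *
        ∫⁻ r in Iio R, (∫⁻ z in ball 0 1, G (coneCoord n κ R σ r z)) ∂radialMeasure n := by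
  set Φ : ℝ → ℝ≥0∞ := fun r =>
    ENNReal.ofReal (r ^ n) * ∫⁻ z in ball 0 1, G (coneCoord n κ R σ r z)
  have hslice {t : ℝ} (ht : t ∈ Ioi 0) :
      ∫⁻ z, (doubleCone n κ R).indicator G (axialEquiv n (σ * t, z))
        = ENNReal.ofReal ((κ ^ n)⁻¹) * (Iio R).indicator (fun τ => Φ (R - τ)) t := by
    rw [lintegral_indicator_doubleCone_axialEquiv hκ, abs_mul, hσ, one_mul, abs_of_pos ht]
    by_cases htR : t ∈ Iio R <;> simp [htR, Φ, coneCoord]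
  rw [setLIntegral_congr_fun measurableSet_Ioi fun _ => hslice,
    lintegral_const_mul' _ _ ENNReal.ofReal_ne_top]
  congr 1
  calc ∫⁻ t in Ioi 0, (Iio R).indicator (fun τ => Φ (R - τ)) t
    _ = ∫⁻ t, (Ioo 0 R).indicator Φ (R - t) := by
        rw [setLIntegral_indicator measurableSet_Iio, Iio_inter_Ioi,
          ← lintegral_indicator measurableSet_Ioo]
        simp only [indicator, mem_Ioo, sub_pos, sub_lt_self_iff, and_comm]
    _ = ∫⁻ r in Ioo 0 R, Φ r := by
        rw [lintegral_sub_left_eq_self (μ := volume), lintegral_indicator measurableSet_Ioo]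
    _ = _ := by
        rw [← lintegral_indicator measurableSet_Iio, lintegral_radialMeasure,
          ← Iio_inter_Ioi, ← setLIntegral_indicator measurableSet_Iio]
        simp only [indicator_mul_right, Φ]

lemma setLIntegral_doubleCone (hκ : 0 < κ)
    {G : EuclideanSpace ℝ (Fin (n + 1)) → ℝ≥0∞} (hG : Measurable G) :
    ∫⁻ x in doubleCone n κ R, G x = ENNReal.ofReal ((κ ^ n)⁻¹) *
      ((∫⁻ r in Iio R, (∫⁻ z in ball 0 1, G (coneCoord n κ R 1 r z)) ∂radialMeasure n) +
        ∫⁻ r in Iio R, (∫⁻ z in ball 0 1, G (coneCoord n κ R (-1) r z)) ∂radialMeasure n) := by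
  have hm := (isOpen_doubleCone n κ R).measurableSet
  rw [← lintegral_indicator hm, lintegral_eq_lintegral_lintegral_axialEquiv (hG.indicator hm),
    lintegral_eq_setLIntegral_Ioi_add_neg, mul_add,
    ← setLIntegral_Ioi_lintegral_indicator_doubleCone hκ abs_one,
    ← setLIntegral_Ioi_lintegral_indicator_doubleCone hκ (by simp)]
  simp only [one_mul, neg_one_mul]

end DoubleCone

section DoubleConeGeometry

variable {n : ℕ} {κ R : ℝ}

lemma doubleCone_subset_ball (hκ : 1 ≤ κ) (R : ℝ) : doubleCone n κ R ⊆ ball 0 R := by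
  intro x hx
  obtain ⟨⟨t, z⟩, rfl⟩ := (axialEquiv n).surjective x
  rw [axialEquiv_mem_doubleCone] at hx
  rw [mem_ball_zero_iff]
  linarith [norm_axialEquiv_le t z, le_mul_of_one_le_left (norm_nonneg z) hκ]

lemma isBounded_doubleCone (hκ : 1 ≤ κ) (R : ℝ) : Bornology.IsBounded (doubleCone n κ R) :=
  isBounded_ball.subset (doubleCone_subset_ball hκ R)

lemma convex_doubleCone (hκ : 0 ≤ κ) (R : ℝ) : Convex ℝ (doubleCone n κ R) := by
  intro x hx y hy a b ha hb hab
  obtain ⟨⟨t, z⟩, rfl⟩ := (axialEquiv n).surjective x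
  obtain ⟨⟨s, u⟩, rfl⟩ := (axialEquiv n).surjective y
  rw [axialEquiv_mem_doubleCone] at hx hy
  rw [← map_smul, ← map_smul, ← map_add, Prod.smul_mk, Prod.smul_mk, Prod.mk_add_mk,
    axialEquiv_mem_doubleCone]
  have height : |a • t + b • s| ≤ a * |t| + b * |s| := by
    simpa [abs_mul, abs_of_nonneg, ha, hb] using abs_add_le (a * t) (b * s)
  have radius : ‖a • z + b • u‖ ≤ a * ‖z‖ + b * ‖u‖ := by
    simpa [norm_smul, abs_of_nonneg, ha, hb] using norm_add_le (a • z) (b • u)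
  have combination : a • (κ * ‖z‖ + |t|) + b • (κ * ‖u‖ + |s|) < R :=
    convex_Iio R (mem_Iio.2 (lt_sub_iff_add_lt.1 hx)) (mem_Iio.2 (lt_sub_iff_add_lt.1 hy)) ha hb hab
  simp only [smul_eq_mul] at combination
  linarith [mul_le_mul_of_nonneg_left radius hκ]

lemma axialEquiv_zero_mem_doubleCone {t : ℝ} (κ : ℝ) (ht : |t| < R) :
    axialEquiv n (t, 0) ∈ doubleCone n κ R := by
  simpa using ht

lemma dist_axialEquiv_zero (t s : ℝ) :
    dist (axialEquiv n (t, 0)) (axialEquiv n (s, 0)) = |t - s| := by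
  rw [dist_eq_norm, ← map_sub, ← abs_norm, ← sq_eq_sq_iff_abs_eq_abs, Prod.mk_sub_mk,
    norm_axialEquiv_sq]
  simp

end DoubleConeGeometry

section ConeInequality

variable {n : ℕ} {p κ R σ r : ℝ} {w : EuclideanSpace ℝ (Fin (n + 1)) → ℝ}

lemma enorm_rpow_le_mul_of_norm_le {F F' : Type*} [SeminormedAddGroup F] [SeminormedAddGroup F']
    {a : F} {b : F'} {L : ℝ} (hp : 0 ≤ p) (h : ‖a‖ ≤ L * ‖b‖) :
    ‖a‖ₑ ^ p ≤ ENNReal.ofReal L ^ p * ‖b‖ₑ ^ p := by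
  rw [← ENNReal.mul_rpow_of_nonneg _ _ hp, ← ofReal_norm a, ← ofReal_norm b,
    ← ENNReal.ofReal_mul' (norm_nonneg b)]
  gcongr

@[simp]
lemma coneCoord_self (n : ℕ) (κ R σ : ℝ) (z : EuclideanSpace ℝ (Fin n)) :
    coneCoord n κ R σ R z = axialEquiv n (0, (R / κ) • z) := by
  simp [coneCoord]

lemma norm_deriv_comp_coneCoord_le (hκ : 0 < κ) (hσ : |σ| = 1) (hw : Differentiable ℝ w)
    {z : EuclideanSpace ℝ (Fin n)} (hz : ‖z‖ ≤ 1) (r : ℝ) :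
    ‖deriv (fun r => w (coneCoord n κ R σ r z)) r‖
      ≤ (1 + κ⁻¹) * ‖fderiv ℝ w (coneCoord n κ R σ r z)‖ := by
  have hcoord : HasDerivAt (fun r => coneCoord n κ R σ r z) (axialEquiv n (-σ, κ⁻¹ • z)) r := by
    have h : HasDerivAt (fun r => (σ * (R - r), (r / κ) • z)) (-σ, κ⁻¹ • z) r := by
      refine HasDerivAt.prodMk ?_ ?_
      · simpa using ((hasDerivAt_id r).const_sub R).const_mul σ
      · simpa using ((hasDerivAt_id r).div_const κ).smul_const z
    exact (axialEquiv n).hasFDerivAt.comp_hasDerivAt r h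
  have hcomp : HasDerivAt (fun r => w (coneCoord n κ R σ r z)) _ r :=
    (hw _).hasFDerivAt.comp_hasDerivAt r hcoord
  rw [hcomp.deriv, mul_comm]
  refine (ContinuousLinearMap.le_opNorm _ _).trans ?_
  gcongr
  refine (norm_axialEquiv_le _ _).trans ?_
  rw [abs_neg, hσ, norm_smul, Real.norm_of_nonneg (by positivity)]
  gcongr
  exact mul_le_of_le_one_right (by positivity) hz

lemma norm_fderiv_comp_coneCoord_le (hκ : 0 < κ) (hr : 0 ≤ r) (hw : Differentiable ℝ w)
    (z : EuclideanSpace ℝ (Fin n)) :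
    ‖fderiv ℝ (fun z => w (coneCoord n κ R σ r z)) z‖
      ≤ r / κ * ‖fderiv ℝ w (coneCoord n κ R σ r z)‖ := by
  have hcoord : HasFDerivAt (coneCoord n κ R σ r) ((axialEquiv n : _ →L[ℝ] _).comp
      ((0 : _ →L[ℝ] ℝ).prod ((r / κ) • ContinuousLinearMap.id ℝ _))) z :=
    (axialEquiv n).hasFDerivAt.comp z
      ((hasFDerivAt_const _ z).prodMk ((hasFDerivAt_id z).const_smul (r / κ)))
  have hcomp : HasFDerivAt (fun z => w (coneCoord n κ R σ r z)) _ z :=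
    (hw _).hasFDerivAt.comp z hcoord
  rw [hcomp.fderiv, mul_comm]
  refine (ContinuousLinearMap.opNorm_comp_le _ _).trans ?_
  gcongr
  refine ContinuousLinearMap.opNorm_le_bound _ (by positivity) fun y => ?_
  refine (norm_axialEquiv_le _ _).trans_eq ?_
  simp [norm_smul, abs_of_pos hκ, abs_of_nonneg hr]

/-- The factor relating the oscillation of a function on the double cone `doubleCone n κ R` to its
Dirichlet energy there, given the Dirichlet eigenvalue `lam` of a ball of radius `R`. It tends to
`1` as `κ → ∞`. -/
noncomputable def coneFactor (n : ℕ) (p R lam κ : ℝ) : ℝ :=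
  (1 - κ⁻¹) ^ (1 - p) * (1 + κ⁻¹) ^ p + lam * (2 ^ p * 2 ^ n * R ^ p) * κ⁻¹

lemma ofReal_coneFactor {lam : ℝ} (hp : 0 ≤ p) (hR : 0 ≤ R) (hlam : 0 ≤ lam) (hκ : 1 < κ) :
    ENNReal.ofReal (coneFactor n p R lam κ) =
      ENNReal.ofReal ((1 - κ⁻¹) ^ (1 - p)) * ENNReal.ofReal (1 + κ⁻¹) ^ p +
        ENNReal.ofReal lam * ENNReal.ofReal (κ⁻¹ ^ (1 - p)) * (ENNReal.ofReal 2 ^ p * 2 ^ n) *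
          ENNReal.ofReal (R / κ) ^ p := by
  have hκ0 : 0 < κ := one_pos.trans hκ
  have hκ1 : 0 ≤ 1 - κ⁻¹ := sub_nonneg.2 (inv_le_one_of_one_le₀ hκ.le)
  have hpow : κ⁻¹ ^ (1 - p) * (R / κ) ^ p = R ^ p * κ⁻¹ := by
    rw [div_eq_mul_inv, mul_rpow hR (by positivity), mul_left_comm, ← Real.rpow_add (by positivity),
      sub_add_cancel, Real.rpow_one]
  have htangential : lam * (2 ^ p * 2 ^ n * R ^ p) * κ⁻¹
      = lam * κ⁻¹ ^ (1 - p) * (2 ^ p * 2 ^ n) * (R / κ) ^ p := by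
    linear_combination (-(lam * 2 ^ p * 2 ^ n)) * hpow
  rw [coneFactor, htangential,
    ENNReal.ofReal_add (by positivity) (by positivity), ENNReal.ofReal_mul (by positivity),
    ENNReal.ofReal_mul (by positivity), ENNReal.ofReal_mul (by positivity),
    ENNReal.ofReal_mul hlam, ENNReal.ofReal_mul (by positivity),
    ENNReal.ofReal_rpow_of_nonneg (by positivity) hp, ENNReal.ofReal_rpow_of_nonneg two_pos.le hp,
    ENNReal.ofReal_rpow_of_nonneg (by positivity) hp, ENNReal.ofReal_pow two_pos.le,
    ENNReal.ofReal_ofNat]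

lemma lintegral_enorm_deriv_comp_coneCoord_le (hp : 0 ≤ p) (hκ : 0 < κ) (hσ : |σ| = 1)
    (hw : Differentiable ℝ w) (μ : Measure ℝ) :
    ∫⁻ r, (∫⁻ z in ball 0 1, ‖deriv (fun r => w (coneCoord n κ R σ r z)) r‖ₑ ^ p) ∂μ
      ≤ ENNReal.ofReal (1 + κ⁻¹) ^ p *
        ∫⁻ r, (∫⁻ z in ball 0 1, ‖fderiv ℝ w (coneCoord n κ R σ r z)‖ₑ ^ p) ∂μ := by
  rw [← lintegral_const_mul' _ _ (by finiteness)]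
  gcongr with r
  rw [← lintegral_const_mul' _ _ (by finiteness)]
  refine setLIntegral_mono' measurableSet_ball fun z hz => ?_
  exact enorm_rpow_le_mul_of_norm_le hp
    (norm_deriv_comp_coneCoord_le hκ hσ hw (mem_ball_zero_iff.1 hz).le r)

lemma setLIntegral_Iio_enorm_fderiv_comp_coneCoord_le (hp : 0 ≤ p) (hκ : 0 < κ)
    (hw : Differentiable ℝ w) :
    ∫⁻ r in Iio R, (∫⁻ z in ball 0 1, ‖fderiv ℝ (fun z => w (coneCoord n κ R σ r z)) z‖ₑ ^ p)
        ∂radialMeasure n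
      ≤ ENNReal.ofReal (R / κ) ^ p *
        ∫⁻ r in Iio R, (∫⁻ z in ball 0 1, ‖fderiv ℝ w (coneCoord n κ R σ r z)‖ₑ ^ p)
          ∂radialMeasure n := by
  rw [← lintegral_const_mul' _ _ (by finiteness)]
  refine lintegral_mono_ae ?_
  filter_upwards [ae_restrict_mem measurableSet_Iio, ae_restrict_of_ae ae_radialMeasure_pos]
    with r hrR hr0
  rw [← lintegral_const_mul' _ _ (by finiteness)]
  gcongr with z
  refine enorm_rpow_le_mul_of_norm_le hp ((norm_fderiv_comp_coneCoord_le hκ hr0.le hw z).trans ?_)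
  gcongr
  exact hrR.le

lemma ofReal_lambdaPQ_ball_mul_lintegral_coneCoord_le (hp : 1 < p) (hR : 0 < R)
    (c : EuclideanSpace ℝ (Fin (n + 1))) (hκ : 1 < κ) (hσ : |σ| = 1) (hw : ContDiff ℝ 1 w) :
    ENNReal.ofReal (lambdaPQ p p (ball c R)) *
        ∫⁻ r in Iio R, (∫⁻ z in ball 0 1, ∫⁻ z₀ in ball 0 1,
          ‖w (coneCoord n κ R σ r z) - w (axialEquiv n (0, (R / κ) • z₀))‖ₑ ^ p) ∂radialMeasure n
      ≤ volume (ball (0 : EuclideanSpace ℝ (Fin n)) 1) *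
        (ENNReal.ofReal (coneFactor n p R (lambdaPQ p p (ball c R)) κ) *
          ∫⁻ r in Iio R, (∫⁻ z in ball 0 1, ‖fderiv ℝ w (coneCoord n κ R σ r z)‖ₑ ^ p)
            ∂radialMeasure n) := by
  have hκ0 : 0 < κ := one_pos.trans hκ
  have hp0 : 0 ≤ p := zero_le_one.trans hp.le
  have hwd : Differentiable ℝ w := hw.differentiable one_ne_zero
  have oscillation := ofReal_lambdaPQ_ball_mul_oscillation_le (μ := volume) hp hR c
    (inv_pos.2 hκ0) (inv_lt_one_of_one_lt₀ hκ) measurableSet_ball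
    (convex_ball (0 : EuclideanSpace ℝ (Fin n)) 1) isBounded_ball
    (g := fun r z => w (coneCoord n κ R σ r z)) (hw.comp (contDiff_coneCoord n κ R σ))
  simp only [coneCoord_self, Nat.add_sub_cancel] at oscillation
  refine oscillation.trans (mul_le_mul_right ?_ _)
  have radial := lintegral_enorm_deriv_comp_coneCoord_le (R := R) hp0 hκ0 hσ hwd
    ((radialMeasure n).restrict (Iio R))
  have tangential := setLIntegral_Iio_enorm_fderiv_comp_coneCoord_le (R := R) (σ := σ) hp0 hκ0 hwd
  set D := ∫⁻ r in Iio R, (∫⁻ z in ball 0 1, ‖fderiv ℝ w (coneCoord n κ R σ r z)‖ₑ ^ p)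
    ∂radialMeasure n
  have hdiam : diam (ball (0 : EuclideanSpace ℝ (Fin n)) 1) ≤ 2 :=
    (diam_ball zero_le_one).trans_eq (mul_one 2)
  rw [ofReal_coneFactor hp0 hR.le (lambdaPQ_nonneg p p _) hκ, finrank_euclideanSpace_fin]
  calc _ ≤ ENNReal.ofReal ((1 - κ⁻¹) ^ (1 - p)) * (ENNReal.ofReal (1 + κ⁻¹) ^ p * D) +
        ENNReal.ofReal (lambdaPQ p p (ball c R)) * ENNReal.ofReal (κ⁻¹ ^ (1 - p)) *
          (ENNReal.ofReal 2 ^ p * 2 ^ n) * (ENNReal.ofReal (R / κ) ^ p * D) := by gcongr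
    _ = _ := by ring

lemma ofReal_lambdaPQ_ball_mul_setLIntegral_doubleCone_le_of_contDiff (hp : 1 < p) (hR : 0 < R)
    (c : EuclideanSpace ℝ (Fin (n + 1))) (hκ : 1 < κ) (hw : ContDiff ℝ 1 w) :
    ENNReal.ofReal (lambdaPQ p p (ball c R)) *
        ∫⁻ x in doubleCone n κ R, ∫⁻ z in ball 0 1,
          ‖w x - w (axialEquiv n (0, (R / κ) • z))‖ₑ ^ p
      ≤ volume (ball (0 : EuclideanSpace ℝ (Fin n)) 1) *
        (ENNReal.ofReal (coneFactor n p R (lambdaPQ p p (ball c R)) κ) *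
          ∫⁻ x in doubleCone n κ R, ‖fderiv ℝ w x‖ₑ ^ p) := by
  have hκ0 : 0 < κ := one_pos.trans hκ
  have hwm : Measurable w := hw.continuous.measurable
  have hosc : Measurable fun x => ∫⁻ z in ball 0 1,
      ‖w x - w (axialEquiv n (0, (R / κ) • z))‖ₑ ^ p := by
    refine Measurable.lintegral_prod_right' (ν := volume.restrict (ball 0 1))
      (f := fun q : _ × _ => ‖w q.1 - w (axialEquiv n (0, (R / κ) • q.2))‖ₑ ^ p) ?_
    fun_prop
  have hgrad : Measurable fun x => ‖fderiv ℝ w x‖ₑ ^ p := by fun_prop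
  have half {σ : ℝ} (hσ : |σ| = 1) :=
    ofReal_lambdaPQ_ball_mul_lintegral_coneCoord_le hp hR c hκ hσ hw
  rw [setLIntegral_doubleCone hκ0 hosc, setLIntegral_doubleCone hκ0 hgrad, mul_left_comm, mul_add]
  refine (mul_le_mul_right (add_le_add (half (by simp)) (half (by simp))) _).trans_eq ?_
  ring

lemma ae_dist_axialEquiv_le (hR : 0 ≤ R) (hκ : 1 ≤ κ) :
    ∀ᵐ q ∂(volume.restrict (doubleCone n κ R)).prod (volume.restrict (ball 0 1)),
      dist q.1 (axialEquiv n (0, (R / κ) • q.2)) ≤ R + R := by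
  rw [Measure.prod_restrict]
  filter_upwards [ae_restrict_mem
    ((isOpen_doubleCone n κ R).measurableSet.prod measurableSet_ball)] with ⟨x, z⟩ ⟨hx, hz⟩
  have hx : ‖x‖ < R := mem_ball_zero_iff.1 (doubleCone_subset_ball hκ R hx)
  have hz : ‖z‖ < 1 := mem_ball_zero_iff.1 hz
  have hzR : ‖axialEquiv n (0, (R / κ) • z)‖ ≤ R := by
    refine (norm_axialEquiv_le _ _).trans ?_
    rw [abs_zero, zero_add, norm_smul, Real.norm_of_nonneg (by positivity)]
    exact (mul_le_of_le_one_right (by positivity) hz.le).trans (div_le_self hR hκ)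
  rw [dist_eq_norm]
  exact (norm_sub_le _ _).trans (add_le_add hx.le hzR)

lemma ofReal_lambdaPQ_ball_mul_setLIntegral_doubleCone_le (hp : 1 < p) (hR : 0 < R)
    (c : EuclideanSpace ℝ (Fin (n + 1))) (hκ : 1 < κ) {K : ℝ≥0} (hw : LipschitzWith K w) :
    ENNReal.ofReal (lambdaPQ p p (ball c R)) *
        ∫⁻ x in doubleCone n κ R, ∫⁻ z in ball 0 1,
          ‖w x - w (axialEquiv n (0, (R / κ) • z))‖ₑ ^ p
      ≤ volume (ball (0 : EuclideanSpace ℝ (Fin n)) 1) *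
        (ENNReal.ofReal (coneFactor n p R (lambdaPQ p p (ball c R)) κ) *
          ∫⁻ x in doubleCone n κ R, ‖fderiv ℝ w x‖ₑ ^ p) := by
  have hp0 : 0 ≤ p := zero_le_one.trans hp.le
  have hsmooth (j : ℕ) : ContDiff ℝ 1 (mollify w j) :=
    (contDiff_mollify hw.continuous.locallyIntegrable j).of_le (by simp)
  have iterated {u : EuclideanSpace ℝ (Fin (n + 1)) → ℝ} (hu : Continuous u) :
      ∫⁻ q, ‖u q.1 - u (axialEquiv n (0, (R / κ) • q.2))‖ₑ ^ p
          ∂(volume.restrict (doubleCone n κ R)).prod (volume.restrict (ball 0 1))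
        = ∫⁻ x in doubleCone n κ R, ∫⁻ z in ball 0 1,
            ‖u x - u (axialEquiv n (0, (R / κ) • z))‖ₑ ^ p :=
    lintegral_prod _ (by fun_prop)
  have hvol : volume (doubleCone n κ R) ≠ ⊤ := (isBounded_doubleCone hκ.le R).measure_lt_top.ne
  have : IsFiniteMeasure (volume.restrict (doubleCone n κ R)) := isFiniteMeasure_restrict.2 hvol
  have : IsFiniteMeasure (volume.restrict (ball (0 : EuclideanSpace ℝ (Fin n)) 1)) :=
    isFiniteMeasure_restrict.2 measure_ball_lt_top.ne
  have tendsto_oscillation := tendsto_lintegral_enorm_mollify_sub_mollify hp0 hw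
    (μ := (volume.restrict (doubleCone n κ R)).prod (volume.restrict (ball 0 1)))
    (f := Prod.fst) (g := fun q => axialEquiv n (0, (R / κ) • q.2)) (D := R + R)
    (measure_ne_top _ _) measurable_fst (by fun_prop) (ae_dist_axialEquiv_le hR.le hκ.le)
  have tendsto_grad := tendsto_setLIntegral_enorm_fderiv_mollify hp0 hw hvol
  rw [← iterated hw.continuous]
  refine le_of_tendsto_of_tendsto' (ENNReal.Tendsto.const_mul tendsto_oscillation (by simp))
    (ENNReal.Tendsto.const_mul (ENNReal.Tendsto.const_mul tendsto_grad (by simp))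
      (.inr measure_ball_lt_top.ne)) fun j => ?_
  rw [iterated (hsmooth j).continuous]
  exact ofReal_lambdaPQ_ball_mul_setLIntegral_doubleCone_le_of_contDiff hp hR c hκ (hsmooth j)

end ConeInequality

section MeanZero

variable {p : ℝ}

lemma add_mul_sub_le_of_convexOn_univ {f : ℝ → ℝ} {f' x : ℝ} (hf : ConvexOn ℝ univ f)
    (hx : HasDerivAt f f' x) (y : ℝ) : f x + f' * (y - x) ≤ f y := by
  rcases lt_trichotomy x y with hxy | rfl | hxy
  · have h := hf.le_slope_of_hasDerivAt (mem_univ x) (mem_univ y) hxy hx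
    rw [slope_def_field, le_div_iff₀ (sub_pos.2 hxy)] at h
    linarith
  · simp
  · have h := hf.slope_le_of_hasDerivAt (mem_univ y) (mem_univ x) hxy hx
    rw [slope_def_field, div_le_iff₀ (sub_pos.2 hxy)] at h
    linarith

lemma convexOn_abs_rpow (hp : 1 ≤ p) : ConvexOn ℝ univ fun x : ℝ => |x| ^ p := by
  refine ⟨convex_univ, fun x _ y _ a b ha hb hab => ?_⟩
  calc |a • x + b • y| ^ p ≤ (a • |x| + b • |y|) ^ p := by
        gcongr
        simpa [abs_mul, abs_of_nonneg, ha, hb] using abs_add_le (a * x) (b * y)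
    _ ≤ a • |x| ^ p + b • |y| ^ p :=
        (convexOn_rpow hp).2 (abs_nonneg x) (abs_nonneg y) ha hb hab

lemma continuous_abs_rpow_sub_two_mul (hp : 1 < p) :
    Continuous fun x : ℝ => |x| ^ (p - 2) * x := by
  have hderiv : deriv (fun x : ℝ => |x| ^ p) = fun x => p * (|x| ^ (p - 2) * x) := by
    ext x
    rw [(hasDerivAt_abs_rpow x hp).deriv, mul_assoc]
  have hcont : Continuous fun x : ℝ => p * (|x| ^ (p - 2) * x) :=
    hderiv ▸ (contDiff_norm_rpow (E := ℝ) hp).continuous_deriv_one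
  refine (hcont.const_mul p⁻¹).congr fun x => inv_mul_cancel_left₀ (by positivity) _

lemma integral_abs_rpow_le_integral_abs_sub_rpow {α : Type*} [MeasurableSpace α] {μ : Measure α}
    {v : α → ℝ} {a : ℝ} (hp : 1 < p) (hv : Integrable (fun x => |v x| ^ p) μ)
    (hva : Integrable (fun x => |v x - a| ^ p) μ)
    (hmean : Integrable (fun x => |v x| ^ (p - 2) * v x) μ)
    (h0 : ∫ x, |v x| ^ (p - 2) * v x ∂μ = 0) :
    ∫ x, |v x| ^ p ∂μ ≤ ∫ x, |v x - a| ^ p ∂μ := by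
  calc ∫ x, |v x| ^ p ∂μ = ∫ x, (|v x| ^ p - p * a * (|v x| ^ (p - 2) * v x)) ∂μ := by
        rw [integral_sub hv (hmean.const_mul _), integral_const_mul, h0, mul_zero, sub_zero]
    _ ≤ ∫ x, |v x - a| ^ p ∂μ := by
        refine integral_mono (hv.sub (hmean.const_mul _)) hva fun x => ?_
        have tangent := add_mul_sub_le_of_convexOn_univ (convexOn_abs_rpow hp.le)
          (hasDerivAt_abs_rpow (v x) hp) (v x - a)
        rw [sub_sub_cancel_left] at tangent
        linarith

variable {E : Type*} [NormedAddCommGroup E] [ProperSpace E] [MeasurableSpace E]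
  [OpensMeasurableSpace E] {μ : Measure E} [IsFiniteMeasureOnCompacts μ] {Ω : Set E} {v : E → ℝ}

lemma setLIntegral_enorm_rpow_le_setLIntegral_enorm_sub_rpow (hp : 1 < p)
    (hb : Bornology.IsBounded Ω) (hv : Continuous v)
    (h0 : ∫ x in Ω, |v x| ^ (p - 2) * v x ∂μ = 0) (a : ℝ) :
    ∫⁻ x in Ω, ‖v x‖ₑ ^ p ∂μ ≤ ∫⁻ x in Ω, ‖v x - a‖ₑ ^ p ∂μ := by
  have hp0 : 0 ≤ p := zero_le_one.trans hp.le
  have hint {g : E → ℝ} (hg : Continuous g) : IntegrableOn g Ω μ :=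
    (hg.continuousOn.integrableOn_compact hb.isCompact_closure).mono_set subset_closure
  have hpow {g : E → ℝ} (hg : Continuous g) : IntegrableOn (fun x => |g x| ^ p) Ω μ :=
    hint (hg.abs.rpow_const fun _ => .inr hp0)
  have hle := integral_abs_rpow_le_integral_abs_sub_rpow (a := a) hp (hpow hv)
    (hpow (hv.sub continuous_const)) (hint ((continuous_abs_rpow_sub_two_mul hp).comp hv)) h0
  have lintegral_eq {g : E → ℝ} (hg : Continuous g) :
      ∫⁻ x in Ω, ‖g x‖ₑ ^ p ∂μ = ENNReal.ofReal (∫ x in Ω, |g x| ^ p ∂μ) := by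
    rw [ofReal_integral_eq_lintegral_ofReal (hpow hg) (.of_forall fun x => by positivity)]
    exact lintegral_congr fun x => enorm_rpow_eq_ofReal (g x) hp0
  rw [lintegral_eq hv, lintegral_eq (g := fun x => v x - a) (hv.sub continuous_const)]
  exact ENNReal.ofReal_le_ofReal hle

end MeanZero

section NeumannLowerBound

variable {N : ℕ} {p q Λ : ℝ} {Ω : Set (EuclideanSpace ℝ (Fin N))}
  {v g : EuclideanSpace ℝ (Fin N) → ℝ}

lemma rayleighQuot_congr (hΩ : IsOpen Ω) (h : EqOn v g Ω) :
    rayleighQuot p q Ω v = rayleighQuot p q Ω g := by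
  have hgrad : ∫ x in Ω, ‖fderiv ℝ v x‖ ^ p = ∫ x in Ω, ‖fderiv ℝ g x‖ ^ p :=
    setIntegral_congr_fun hΩ.measurableSet fun x hx => by
      simp only [(h.eventuallyEq_of_mem (hΩ.mem_nhds hx)).fderiv_eq]
  have hmass : ∫ x in Ω, |v x| ^ q = ∫ x in Ω, |g x| ^ q :=
    setIntegral_congr_fun hΩ.measurableSet fun x hx => by simp only [h hx]
  rw [rayleighQuot, rayleighQuot, hgrad, hmass]

lemma IsNeumannTest.exists_lipschitzWith_rayleighQuot_eq (hΩ : IsOpen Ω)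
    (hv : IsNeumannTest q Ω v) (p : ℝ) :
    ∃ g : EuclideanSpace ℝ (Fin N) → ℝ, (∃ K, LipschitzWith K g) ∧ IsNeumannTest q Ω g ∧
      rayleighQuot p q Ω v = rayleighQuot p q Ω g := by
  obtain ⟨⟨K, hK⟩, ⟨x, hx, hvx⟩, hv0⟩ := hv
  obtain ⟨g, hg, hvg⟩ := hK.extend_real
  have heq : EqOn v g Ω := hvg.mono subset_closure
  refine ⟨g, ⟨K, hg⟩, ⟨⟨K, hg.lipschitzOnWith⟩, ⟨x, hx, heq hx ▸ hvx⟩, ?_⟩,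
    rayleighQuot_congr hΩ heq⟩
  rw [← hv0]
  exact setIntegral_congr_fun hΩ.measurableSet fun x hx => by simp only [heq hx]

lemma setLIntegral_enorm_rpow_ne_zero (hp : 0 < p) (hΩ : IsOpen Ω) (hv : Continuous v)
    (hne : ∃ x ∈ Ω, v x ≠ 0) : ∫⁻ x in Ω, ‖v x‖ₑ ^ p ≠ 0 := by
  obtain ⟨x, hx, hvx⟩ := hne
  refine ((setLIntegral_pos_iff (hv.measurable.enorm.pow_const p)).2 ?_).ne'
  have hsupp : Function.support (fun x => ‖v x‖ₑ ^ p) = Function.support v := by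
    ext x
    simp [hp]
  rw [hsupp]
  exact (hv.isOpen_support.inter hΩ).measure_pos volume ⟨x, hvx, hx⟩

lemma div_le_rayleighQuot_self {F : ℝ} {K : ℝ≥0} (hp : 0 < p) (hΩ : IsOpen Ω)
    (hb : Bornology.IsBounded Ω) (hv : LipschitzWith K v) (hne : ∃ x ∈ Ω, v x ≠ 0)
    (hΛ : 0 ≤ Λ) (hF : 0 < F)
    (h : ENNReal.ofReal Λ * ∫⁻ x in Ω, ‖v x‖ₑ ^ p
      ≤ ENNReal.ofReal F * ∫⁻ x in Ω, ‖fderiv ℝ v x‖ₑ ^ p) :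
    Λ / F ≤ rayleighQuot p p Ω v := by
  have mass_ne_top := setLIntegral_enorm_rpow_ne_top_of_continuous hp.le hb hv.continuous
  have mass_ne_zero := setLIntegral_enorm_rpow_ne_zero hp hΩ hv.continuous hne
  have energy_ne_top : ∫⁻ x in Ω, ‖fderiv ℝ v x‖ₑ ^ p ≠ ⊤ :=
    lintegral_enorm_rpow_ne_top hp.le (by simpa using hb.measure_lt_top.ne)
      (.of_forall fun x => norm_fderiv_le_of_lipschitz ℝ hv)
  rw [rayleighQuot_self_eq_toReal hp hv.continuous.aestronglyMeasurable,
    div_le_div_iff₀ hF (ENNReal.toReal_pos mass_ne_zero mass_ne_top), mul_comm _ F]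
  simpa [hΛ, hF.le] using ENNReal.toReal_mono (by finiteness) h

end NeumannLowerBound

section ConeLowerBound

variable {n : ℕ} {p κ R : ℝ} {w : EuclideanSpace ℝ (Fin (n + 1)) → ℝ}

lemma ofReal_lambdaPQ_ball_mul_setLIntegral_doubleCone_enorm_le (hp : 1 < p) (hR : 0 < R)
    (c : EuclideanSpace ℝ (Fin (n + 1))) (hκ : 1 < κ) {K : ℝ≥0} (hw : LipschitzWith K w)
    (h0 : ∫ x in doubleCone n κ R, |w x| ^ (p - 2) * w x = 0) :
    ENNReal.ofReal (lambdaPQ p p (ball c R)) * ∫⁻ x in doubleCone n κ R, ‖w x‖ₑ ^ p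
      ≤ ENNReal.ofReal (coneFactor n p R (lambdaPQ p p (ball c R)) κ) *
        ∫⁻ x in doubleCone n κ R, ‖fderiv ℝ w x‖ₑ ^ p := by
  have hball : volume (ball (0 : EuclideanSpace ℝ (Fin n)) 1) ≠ 0 :=
    (measure_ball_pos volume 0 one_pos).ne'
  rw [← ENNReal.mul_le_mul_iff_right hball measure_ball_lt_top.ne]
  refine le_trans ?_ (ofReal_lambdaPQ_ball_mul_setLIntegral_doubleCone_le hp hR c hκ hw)
  have hcont : Continuous w := hw.continuous
  rw [mul_left_comm, lintegral_lintegral_swap (by fun_prop), mul_comm (volume _),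
    ← setLIntegral_const]
  refine mul_le_mul_right (lintegral_mono fun z => ?_) _
  exact setLIntegral_enorm_rpow_le_setLIntegral_enorm_sub_rpow hp (isBounded_doubleCone hκ.le R)
    hcont h0 _

lemma coneFactor_pos {lam : ℝ} (hR : 0 ≤ R) (hlam : 0 ≤ lam) (hκ : 1 < κ) :
    0 < coneFactor n p R lam κ := by
  have hκ1 : 0 < 1 - κ⁻¹ := sub_pos.2 (inv_lt_one_of_one_lt₀ hκ)
  have hκ0 : 0 < κ := one_pos.trans hκ
  unfold coneFactor
  positivity

lemma lambdaPQ_ball_div_coneFactor_le_rayleighQuot (hp : 1 < p) (hR : 0 < R)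
    (c : EuclideanSpace ℝ (Fin (n + 1))) (hκ : 1 < κ) (hw : IsNeumannTest p (doubleCone n κ R) w) :
    lambdaPQ p p (ball c R) / coneFactor n p R (lambdaPQ p p (ball c R)) κ
      ≤ rayleighQuot p p (doubleCone n κ R) w := by
  obtain ⟨g, ⟨K, hg⟩, ⟨-, hne, hg0⟩, hwg⟩ :=
    hw.exists_lipschitzWith_rayleighQuot_eq (isOpen_doubleCone n κ R) p
  rw [hwg]
  have hlam := lambdaPQ_nonneg p p (ball c R)
  exact div_le_rayleighQuot_self (one_pos.trans hp) (isOpen_doubleCone n κ R)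
    (isBounded_doubleCone hκ.le R) hg hne hlam (coneFactor_pos hR.le hlam hκ)
    (ofReal_lambdaPQ_ball_mul_setLIntegral_doubleCone_enorm_le hp hR c hκ hg hg0)

end ConeLowerBound

section DoubleConeLimit

variable {n : ℕ} {p κ R : ℝ}

lemma doubleCone_nonempty (κ : ℝ) (hR : 0 < R) : (doubleCone n κ R).Nonempty :=
  ⟨_, axialEquiv_zero_mem_doubleCone κ (abs_zero.trans_lt hR)⟩

lemma diam_doubleCone (hκ : 1 ≤ κ) (hR : 0 < R) : diam (doubleCone n κ R) = 2 * R := by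
  refine le_antisymm ?_ (le_of_forall_lt fun a ha => ?_)
  · rw [← diam_ball_eq (0 : EuclideanSpace ℝ (Fin (n + 1))) hR.le]
    exact diam_mono (doubleCone_subset_ball hκ R) isBounded_ball
  · obtain ⟨t, hat, htR⟩ := exists_between (max_lt (show a / 2 < R by linarith) hR)
    obtain ⟨hat, ht⟩ := max_lt_iff.1 hat
    have habs : |t| < R := by rwa [abs_of_pos ht]
    have hdist := dist_le_diam_of_mem (isBounded_doubleCone (n := n) hκ R)
      (axialEquiv_zero_mem_doubleCone κ habs) (axialEquiv_zero_mem_doubleCone κ (by rwa [abs_neg]))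
    rw [dist_axialEquiv_zero, sub_neg_eq_add, abs_of_pos (by positivity)] at hdist
    linarith

lemma segment_single_zero_eq_image_Icc (hR : 0 ≤ R) :
    segment ℝ (EuclideanSpace.single (0 : Fin (n + 1)) (-R)) (EuclideanSpace.single 0 R) =
      (fun t => axialEquiv n (t, 0)) '' Icc (-R) R := by
  have hsingle (a : ℝ) : EuclideanSpace.single (0 : Fin (n + 1)) a = axialEquiv n (a, 0) := by
    ext i
    refine Fin.cases ?_ (fun j => ?_) i <;> simp
  have hmap := image_segment ℝ
    ((axialEquiv n).toLinearMap ∘ₗ LinearMap.inl ℝ ℝ (EuclideanSpace ℝ (Fin n))).toAffineMap (-R) R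
  rw [segment_eq_Icc (neg_le_self hR)] at hmap
  rw [hsingle, hsingle]
  exact hmap.symm

lemma hausdorffDist_doubleCone_segment_le (hκ : 1 ≤ κ) (hR : 0 < R) :
    hausdorffDist (doubleCone n κ R)
      (segment ℝ (EuclideanSpace.single 0 (-R)) (EuclideanSpace.single 0 R)) ≤ R / κ := by
  have hκ0 : 0 < κ := one_pos.trans_le hκ
  rw [segment_single_zero_eq_image_Icc hR.le]
  refine hausdorffDist_le_of_mem_dist (by positivity) (fun x hx => ?_) ?_
  · obtain ⟨⟨t, z⟩, rfl⟩ := (axialEquiv n).surjective x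
    rw [axialEquiv_mem_doubleCone] at hx
    have hz : 0 ≤ κ * ‖z‖ := by positivity
    refine ⟨_, mem_image_of_mem _ (abs_le.1 (show |t| ≤ R by linarith)), ?_⟩
    calc dist (axialEquiv n (t, z)) (axialEquiv n (t, 0)) ≤ |t - t| + ‖z - 0‖ := by
          rw [dist_eq_norm, ← map_sub, Prod.mk_sub_mk]
          exact norm_axialEquiv_le _ _
      _ = ‖z‖ := by simp
      _ ≤ R / κ := by
          rw [le_div_iff₀' hκ0]
          linarith [abs_nonneg t]
  · rintro _ ⟨t, ht, rfl⟩
    have htR : |t| ≤ R := abs_le.2 ht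
    have hκ1 : 0 ≤ 1 - κ⁻¹ := sub_nonneg.2 (inv_le_one_of_one_le₀ hκ)
    have hκ2 : 1 - κ⁻¹ < 1 := sub_lt_self _ (inv_pos.2 hκ0)
    have hlt : |(1 - κ⁻¹) * t| < R := by
      rw [abs_mul, abs_of_nonneg hκ1]
      nlinarith
    refine ⟨_, axialEquiv_zero_mem_doubleCone κ hlt, ?_⟩
    rw [dist_axialEquiv_zero, show t - (1 - κ⁻¹) * t = t / κ by ring, abs_div, abs_of_pos hκ0]
    gcongr

lemma tendsto_hausdorffDist_doubleCone_segment (n : ℕ) (hR : 0 < R) :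
    Tendsto (fun κ => hausdorffDist (doubleCone n κ R)
      (segment ℝ (EuclideanSpace.single 0 (-R)) (EuclideanSpace.single 0 R))) atTop (𝓝 0) := by
  refine squeeze_zero' (.of_forall fun _ => hausdorffDist_nonneg) ?_
    (tendsto_const_nhds.div_atTop tendsto_id : Tendsto (fun κ => R / κ) atTop (𝓝 0))
  filter_upwards [eventually_ge_atTop 1] with κ hκ
  exact hausdorffDist_doubleCone_segment_le hκ hR

lemma lambdaPQ_ball_div_coneFactor_le_muPQ (hn : 1 ≤ n) (hp : 1 < p) (hR : 0 < R)
    (c : EuclideanSpace ℝ (Fin (n + 1))) (hκ : 1 < κ) :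
    lambdaPQ p p (ball c R) / coneFactor n p R (lambdaPQ p p (ball c R)) κ
      ≤ muPQ p p (doubleCone n κ R) := by
  obtain ⟨v, hv, -⟩ := exists_isNeumannTest_rayleighQuot_lt (by omega) hp hR c
    (isOpen_doubleCone n κ R) (isBounded_doubleCone hκ.le R)
    (convex_doubleCone (one_pos.trans hκ).le R) (doubleCone_nonempty κ hR)
  exact le_muPQ ⟨v, hv⟩ fun w hw => lambdaPQ_ball_div_coneFactor_le_rayleighQuot hp hR c hκ hw

lemma muPQ_doubleCone_lt_lambdaPQ_ball (hn : 1 ≤ n) (hp : 1 < p) (hR : 0 < R)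
    (c : EuclideanSpace ℝ (Fin (n + 1))) (hκ : 1 ≤ κ) :
    muPQ p p (doubleCone n κ R) < lambdaPQ p p (ball c R) := by
  have h := muPQ_lt_lambdaPQ_ball_mul (by omega) hp hR c (isOpen_doubleCone n κ R)
    (isBounded_doubleCone hκ R) (convex_doubleCone (zero_le_one.trans hκ) R)
    (doubleCone_nonempty κ hR)
  rwa [diam_doubleCone hκ hR, div_self (by positivity), Real.one_rpow, mul_one] at h

lemma tendsto_coneFactor (n : ℕ) (p R lam : ℝ) :
    Tendsto (coneFactor n p R lam) atTop (𝓝 1) := by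
  have hcont : ContinuousAt
      (fun s : ℝ => (1 - s) ^ (1 - p) * (1 + s) ^ p + lam * (2 ^ p * 2 ^ n * R ^ p) * s) 0 := by
    fun_prop (disch := simp)
  have hlim := hcont.tendsto.comp tendsto_inv_atTop_zero
  simp only [sub_zero, add_zero, Real.one_rpow, mul_one, mul_zero] at hlim
  exact hlim

lemma tendsto_muPQ_doubleCone (hn : 1 ≤ n) (hp : 1 < p) (hR : 0 < R)
    (c : EuclideanSpace ℝ (Fin (n + 1))) :
    Tendsto (fun κ => muPQ p p (doubleCone n κ R)) atTop (𝓝 (lambdaPQ p p (ball c R))) := by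
  have hlower : Tendsto (fun κ => lambdaPQ p p (ball c R) /
      coneFactor n p R (lambdaPQ p p (ball c R)) κ) atTop (𝓝 (lambdaPQ p p (ball c R))) := by
    simpa only [div_one, Pi.div_def] using (tendsto_const_nhds (x := lambdaPQ p p (ball c R))).div
      (tendsto_coneFactor n p R _) one_ne_zero
  refine tendsto_of_tendsto_of_tendsto_of_le_of_le' hlower tendsto_const_nhds ?_ ?_
  · filter_upwards [eventually_gt_atTop 1] with κ hκ
    exact lambdaPQ_ball_div_coneFactor_le_muPQ hn hp hR c hκ
  · filter_upwards [eventually_ge_atTop 1] with κ hκ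
    exact (muPQ_doubleCone_lt_lambdaPQ_ball hn hp hR c hκ).le

end DoubleConeLimit

end NeumannDirichletComparison

/-- Theorem 3.1, sharpness. For `d > 0`, the double cones
`Ω_k = {(x₁,x') : k|x'| < d/2 - |x₁|}` are open bounded convex sets of diameter `d`,
converging in Hausdorff distance to a segment of length `d`, with
`μ_p(Ω_k) → λ_p(B)` where `B` is any open ball of radius `d/2`; moreover the
inequality `μ_p(Ω) < λ_p(B)(diam B / diam Ω)^p` holds strictly for every open bounded
convex `Ω` (equality is never attained), so the inequality is sharp. -/
theorem double_cone_maximizing_sequence {N : ℕ} [NeZero N] (hN : 2 ≤ N) (p : ℝ)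
    (hp : 1 < p) (d : ℝ) (hd : 0 < d) (c : EuclideanSpace ℝ (Fin N))
    (Ωseq : ℕ → Set (EuclideanSpace ℝ (Fin N)))
    (hΩseq : ∀ k : ℕ, Ωseq k =
      {x | (k : ℝ) * Real.sqrt (∑ i ∈ Finset.univ.erase (0 : Fin N), x i ^ 2)
        < d / 2 - |x 0|}) :
    (∀ k : ℕ, 1 ≤ k → IsOpen (Ωseq k) ∧ Bornology.IsBounded (Ωseq k) ∧
      Convex ℝ (Ωseq k) ∧ diam (Ωseq k) = d) ∧
    Filter.Tendsto (fun k => hausdorffDist (Ωseq k)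
        (segment ℝ (EuclideanSpace.single (0 : Fin N) (-(d / 2)))
          (EuclideanSpace.single (0 : Fin N) (d / 2))))
      Filter.atTop (nhds 0) ∧
    Filter.Tendsto (fun k => muPQ p p (Ωseq k)) Filter.atTop
      (nhds (lambdaPQ p p (ball c (d / 2)))) ∧
    (∀ Ω : Set (EuclideanSpace ℝ (Fin N)), IsOpen Ω → Bornology.IsBounded Ω →
      Convex ℝ Ω → Ω.Nonempty →
      muPQ p p Ω < lambdaPQ p p (ball c (d / 2)) * (diam (ball c (d / 2)) / diam Ω) ^ p) := by
  obtain ⟨n, rfl⟩ : ∃ n, N = n + 1 := ⟨N - 1, by omega⟩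
  have hR : 0 < d / 2 := half_pos hd
  have hΩ (k : ℕ) : Ωseq k = doubleCone n k (d / 2) := hΩseq k
  simp_rw [hΩ, diam_ball_eq c hR.le]
  refine ⟨fun k hk => ?_,
    (tendsto_hausdorffDist_doubleCone_segment n hR).comp tendsto_natCast_atTop_atTop,
    (tendsto_muPQ_doubleCone (by omega) hp hR c).comp tendsto_natCast_atTop_atTop,
    fun Ω => muPQ_lt_lambdaPQ_ball_mul hN hp hR c⟩
  have hκ : (1 : ℝ) ≤ k := Nat.one_le_cast.2 hk
  exact ⟨isOpen_doubleCone n k _, isBounded_doubleCone hκ _, convex_doubleCone k.cast_nonneg _,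
    (diam_doubleCone hκ hR).trans (mul_div_cancel₀ d two_ne_zero)⟩
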